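/- arXiv:2102.07714 — 10 statements merged into one kernel-verified Lean document; each statement's English description precedes it below -/
import Mathlib

section
/- There exist constants c > 0 and ε > 0 such that for every λ with 1 − ε < λ < 1, the Hausdorff dimension of the Bernoulli convolution measure μ_λ satisfies dim_H(μ_λ) ≥ 1 − c(1 − λ); that is, every Borel set X ⊆ ℝ with μ_λ(X) = 1 satisfies dim_H(X) ≥ 1 − c(1 − λ). -/
open MeasureTheory
open scoped ENNReal

/-- The self-similarity relation on real-valued measures of measurable sets. -/
lemma bc_selfsim (l : ℝ) (μ : Measure ℝ) [IsProbabilityMeasure μ]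
    (h : μ = (1 / 2 : ℝ≥0∞) • Measure.map (fun x : ℝ => l * x - 1) μ
            + (1 / 2 : ℝ≥0∞) • Measure.map (fun x : ℝ => l * x + 1) μ)
    (s : Set ℝ) (hs : MeasurableSet s) :
    μ.real s = (μ.real ((fun x : ℝ => l * x - 1) ⁻¹' s)
      + μ.real ((fun x : ℝ => l * x + 1) ⁻¹' s)) / 2 := by
  have h1 : μ s = (1 / 2 : ℝ≥0∞) * μ ((fun x : ℝ => l * x - 1) ⁻¹' s)
      + (1 / 2 : ℝ≥0∞) * μ ((fun x : ℝ => l * x + 1) ⁻¹' s) := by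
    conv_lhs => rw [h]
    rw [Measure.add_apply, Measure.smul_apply, Measure.smul_apply,
      Measure.map_apply (by fun_prop) hs, Measure.map_apply (by fun_prop) hs]
    rfl
  unfold Measure.real
  rw [h1, ENNReal.toReal_add (ENNReal.mul_ne_top (by simp) (measure_ne_top _ _))
    (ENNReal.mul_ne_top (by simp) (measure_ne_top _ _)), ENNReal.toReal_mul, ENNReal.toReal_mul]
  simp
  ring

/-- The measure is supported in a bounded interval. -/
lemma bc_support (l : ℝ) (hl0 : 0 < l) (hl1 : l < 1) (μ : Measure ℝ) [IsProbabilityMeasure μ]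
    (h : μ = (1 / 2 : ℝ≥0∞) • Measure.map (fun x : ℝ => l * x - 1) μ
            + (1 / 2 : ℝ≥0∞) • Measure.map (fun x : ℝ => l * x + 1) μ) :
    μ.real {y : ℝ | 1 / (1 - l) + 1 < |y|} = 0 := by
  have hM : l * (1 / (1 - l)) + 1 = 1 / (1 - l) := by
    have : 1 - l ≠ 0 := by linarith
    field_simp
    ring
  set M := 1 / (1 - l) with hMd
  have hmeas : ∀ R : ℝ, MeasurableSet {y : ℝ | R < |y|} := fun R =>
    measurableSet_lt measurable_const (by fun_prop)
  have step : ∀ t : ℝ, μ.real {y : ℝ | M + l * t < |y|} ≤ μ.real {y : ℝ | M + t < |y|} := by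
    intro t
    rw [bc_selfsim l μ h _ (hmeas _)]
    have key : ∀ y z : ℝ, |z| ≤ 1 → M + l * t < |l * y + z| → M + t < |y| := by
      intro y z hz hy
      have h1 : |l * y + z| ≤ l * |y| + 1 := by
        calc |l * y + z| ≤ |l * y| + |z| := abs_add_le _ _
          _ ≤ _ := by rw [abs_mul, abs_of_pos hl0]; linarith
      by_contra hc
      push Not at hc
      have := mul_le_mul_of_nonneg_left hc hl0.le
      nlinarith
    have a1 : μ.real ((fun x : ℝ => l * x - 1) ⁻¹' {y : ℝ | M + l * t < |y|})
        ≤ μ.real {y : ℝ | M + t < |y|} := by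
      refine measureReal_mono ?_ (measure_ne_top _ _)
      intro y hy
      exact key y (-1) (by simp) (by simpa [sub_eq_add_neg] using hy)
    have a2 : μ.real ((fun x : ℝ => l * x + 1) ⁻¹' {y : ℝ | M + l * t < |y|})
        ≤ μ.real {y : ℝ | M + t < |y|} := by
      refine measureReal_mono ?_ (measure_ne_top _ _)
      intro y hy
      exact key y 1 (by simp) hy
    linarith
  have iter : ∀ n : ℕ, μ.real {y : ℝ | M + 1 < |y|} ≤ μ.real {y : ℝ | M + (l⁻¹) ^ n < |y|} := by
    intro n
    induction n with
    | zero => simp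
    | succ n ih =>
      refine ih.trans ?_
      have := step ((l⁻¹) ^ (n + 1))
      have e : l * (l⁻¹) ^ (n + 1) = (l⁻¹) ^ n := by
        rw [pow_succ]; field_simp
      rwa [e] at this
  have hanti : Antitone (fun n : ℕ => {y : ℝ | M + (l⁻¹) ^ n < |y|}) := by
    intro m n hmn y hy
    have : (l⁻¹) ^ m ≤ (l⁻¹) ^ n := pow_le_pow_right₀ ((one_le_inv₀ hl0).2 hl1.le) hmn
    simp only [Set.mem_ofPred_eq] at hy ⊢
    linarith
  have hinter : (⋂ n : ℕ, {y : ℝ | M + (l⁻¹) ^ n < |y|}) = ∅ := by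
    ext y
    simp only [Set.mem_iInter, Set.mem_ofPred_eq, Set.mem_empty_iff_false, iff_false, not_forall,
      not_lt]
    obtain ⟨n, hn⟩ := pow_unbounded_of_one_lt (|y| - M) ((one_lt_inv₀ hl0).2 hl1)
    exact ⟨n, by linarith⟩
  have lim := tendsto_measure_iInter_atTop (μ := μ)
    (fun n : ℕ => (hmeas (M + (l⁻¹) ^ n)).nullMeasurableSet) hanti ⟨0, measure_ne_top _ _⟩
  rw [hinter, measure_empty] at lim
  have lim2 := (ENNReal.tendsto_toReal ENNReal.zero_ne_top).comp lim
  refine le_antisymm ?_ measureReal_nonneg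
  exact ge_of_tendsto' lim2 iter

/-- The Gaussian is a super-eigenfunction. -/
lemma bc_gauss (l : ℝ) (hl0 : 3 / 4 < l) (hl1 : l < 1) (x : ℝ) :
    (Real.exp (-(l ^ 2 * (1 - l ^ 2) / 2) * ((x + 1) / l) ^ 2)
      + Real.exp (-(l ^ 2 * (1 - l ^ 2) / 2) * ((x - 1) / l) ^ 2)) / 2
      ≤ l ^ (1 - 2 * (1 - l)) * Real.exp (-(l ^ 2 * (1 - l ^ 2) / 2) * x ^ 2) := by
  have hl : 0 < l := by linarith
  have e1 : -(l ^ 2 * (1 - l ^ 2) / 2) * ((x + 1) / l) ^ 2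
      = -((1 - l ^ 2) / 2) * (x ^ 2 + 1) + -((1 - l ^ 2) * x) := by
    field_simp
    ring
  have e2 : -(l ^ 2 * (1 - l ^ 2) / 2) * ((x - 1) / l) ^ 2
      = -((1 - l ^ 2) / 2) * (x ^ 2 + 1) + ((1 - l ^ 2) * x) := by
    field_simp
    ring
  have hc := Real.cosh_le_exp_half_sq ((1 - l ^ 2) * x)
  rw [Real.cosh_eq] at hc
  rw [e1, e2, Real.exp_add, Real.exp_add, Real.rpow_def_of_pos hl]
  calc _ = Real.exp (-((1 - l ^ 2) / 2) * (x ^ 2 + 1)) *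
        ((Real.exp ((1 - l ^ 2) * x) + Real.exp (-((1 - l ^ 2) * x))) / 2) := by ring
    _ ≤ Real.exp (-((1 - l ^ 2) / 2) * (x ^ 2 + 1)) * Real.exp (((1 - l ^ 2) * x) ^ 2 / 2) := by
        gcongr
    _ ≤ _ := by
        rw [← Real.exp_add, ← Real.exp_add, Real.exp_le_exp]
        have hlog : 1 - l⁻¹ ≤ Real.log l := Real.one_sub_inv_le_log_of_pos hl
        have h3 : (1 - l⁻¹) * (1 - 2 * (1 - l)) ≤ Real.log l * (1 - 2 * (1 - l)) :=
          mul_le_mul_of_nonneg_right hlog (by linarith)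
        have h4 : -((1 - l ^ 2) / 2) ≤ (1 - l⁻¹) * (1 - 2 * (1 - l)) := by
          have : (1 - l⁻¹) * (1 - 2 * (1 - l)) + (1 - l ^ 2) / 2
              = (1 - l) ^ 2 * (2 - l) / (2 * l) := by
            field_simp
            ring
          have : 0 ≤ (1 - l) ^ 2 * (2 - l) / (2 * l) := by
            apply div_nonneg (mul_nonneg (sq_nonneg _) (by linarith)) (by linarith)
          linarith
        nlinarith

/-- Decay on balls of radius `l ^ n`. -/
lemma bc_ball_pow (l : ℝ) (hl0 : 3 / 4 < l) (hl1 : l < 1) (μ : Measure ℝ)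
    [IsProbabilityMeasure μ]
    (h : μ = (1 / 2 : ℝ≥0∞) • Measure.map (fun x : ℝ => l * x - 1) μ
            + (1 / 2 : ℝ≥0∞) • Measure.map (fun x : ℝ => l * x + 1) μ) :
    ∃ C : ℝ, 0 < C ∧ ∀ (n : ℕ) (x : ℝ), μ.real (Metric.closedBall x (l ^ n))
      ≤ C * (l ^ n) ^ (1 - 2 * (1 - l)) := by
  have hl : 0 < l := by linarith
  set a := l ^ 2 * (1 - l ^ 2) / 2 with ha
  have ha0 : 0 < a := by
    have : 0 < 1 - l ^ 2 := by nlinarith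
    positivity
  set M := 1 / (1 - l) with hM
  have hM0 : 0 < M := by
    have : 0 < 1 - l := by linarith
    positivity
  refine ⟨Real.exp (a * (M + 2) ^ 2), Real.exp_pos _, ?_⟩
  have main : ∀ (n : ℕ) (x : ℝ), μ.real (Metric.closedBall x (l ^ n))
      ≤ Real.exp (a * (M + 2) ^ 2) * (l ^ n) ^ (1 - 2 * (1 - l)) * Real.exp (-a * x ^ 2) := by
    intro n
    induction n with
    | zero =>
      intro x
      simp only [pow_zero, Real.one_rpow, mul_one]
      by_cases hx : |x| ≤ M + 2
      · have h1 : μ.real (Metric.closedBall x 1) ≤ 1 := measureReal_le_one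
        refine h1.trans ?_
        rw [← Real.exp_add]
        apply Real.one_le_exp
        have : x ^ 2 ≤ (M + 2) ^ 2 := by
          rw [← sq_abs]
          gcongr
        nlinarith
      · have h1 : μ.real (Metric.closedBall x 1) ≤ 0 := by
          rw [← bc_support l hl hl1 μ h]
          refine measureReal_mono ?_ (measure_ne_top _ _)
          intro y hy
          rw [Metric.mem_closedBall, Real.dist_eq] at hy
          simp only [Set.mem_ofPred_eq]
          have := abs_sub_abs_le_abs_sub x y
          rw [abs_sub_comm] at this
          push Not at hx
          linarith
        exact h1.trans (by positivity)
    | succ n ih =>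
      intro x
      rw [bc_selfsim l μ h _ Metric.isClosed_closedBall.measurableSet]
      have key : ∀ y z : ℝ, |l * y - z - x| ≤ l ^ (n + 1) → |y - (x + z) / l| ≤ l ^ n := by
        intro y z hy
        have e : l * y - z - x = l * (y - (x + z) / l) := by
          field_simp
          ring
        rw [e, abs_mul, abs_of_pos hl, pow_succ'] at hy
        exact le_of_mul_le_mul_left hy hl
      have a1 : μ.real ((fun x : ℝ => l * x - 1) ⁻¹' Metric.closedBall x (l ^ (n + 1)))
          ≤ μ.real (Metric.closedBall ((x + 1) / l) (l ^ n)) := by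
        refine measureReal_mono ?_ (measure_ne_top _ _)
        intro y hy
        rw [Set.mem_preimage, Metric.mem_closedBall, Real.dist_eq] at hy
        rw [Metric.mem_closedBall, Real.dist_eq]
        exact key y 1 hy
      have a2 : μ.real ((fun x : ℝ => l * x + 1) ⁻¹' Metric.closedBall x (l ^ (n + 1)))
          ≤ μ.real (Metric.closedBall ((x - 1) / l) (l ^ n)) := by
        refine measureReal_mono ?_ (measure_ne_top _ _)
        intro y hy
        rw [Set.mem_preimage, Metric.mem_closedBall, Real.dist_eq] at hy
        rw [Metric.mem_closedBall, Real.dist_eq]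
        exact key y (-1) (by simpa using hy)
      have b1 := ih ((x + 1) / l)
      have b2 := ih ((x - 1) / l)
      have hg := bc_gauss l hl0 hl1 x
      rw [← ha] at hg
      have hC : 0 ≤ Real.exp (a * (M + 2) ^ 2) * (l ^ n) ^ (1 - 2 * (1 - l)) := by positivity
      have hg2 := mul_le_mul_of_nonneg_left hg hC
      have e : (l ^ (n + 1)) ^ (1 - 2 * (1 - l))
          = (l ^ n) ^ (1 - 2 * (1 - l)) * l ^ (1 - 2 * (1 - l)) := by
        rw [pow_succ, Real.mul_rpow (by positivity) hl.le]
      rw [e]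
      linarith
  intro n x
  refine (main n x).trans ?_
  apply mul_le_of_le_one_right (by positivity)
  apply Real.exp_le_one_iff.2
  nlinarith [sq_nonneg x]

/-- Frostman condition. -/
lemma bc_frostman (l : ℝ) (hl0 : 3 / 4 < l) (hl1 : l < 1) (μ : Measure ℝ)
    [IsProbabilityMeasure μ]
    (h : μ = (1 / 2 : ℝ≥0∞) • Measure.map (fun x : ℝ => l * x - 1) μ
            + (1 / 2 : ℝ≥0∞) • Measure.map (fun x : ℝ => l * x + 1) μ) :
    ∃ C : ℝ, 0 < C ∧ ∀ (r : ℝ) (x : ℝ), 0 ≤ r → r ≤ 1 → μ.real (Metric.closedBall x r)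
      ≤ C * r ^ (1 - 2 * (1 - l)) := by
  have hl : 0 < l := by linarith
  obtain ⟨C, hC, H⟩ := bc_ball_pow l hl0 hl1 μ h
  have hα : 0 < 1 - 2 * (1 - l) := by linarith
  set α := 1 - 2 * (1 - l) with hαd
  have pos : ∀ (r : ℝ) (x : ℝ), 0 < r → r ≤ 1 → μ.real (Metric.closedBall x r)
      ≤ (C * (l⁻¹) ^ α) * r ^ α := by
    intro r x hr hr1
    obtain ⟨n, hn1, hn2⟩ := exists_nat_pow_near_of_lt_one hr hr1 hl hl1
    have h1 : μ.real (Metric.closedBall x r) ≤ μ.real (Metric.closedBall x (l ^ n)) :=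
      measureReal_mono (Metric.closedBall_subset_closedBall hn2)
    refine (h1.trans (H n x)).trans ?_
    rw [mul_assoc, ← Real.mul_rpow (by positivity) hr.le]
    gcongr
    rw [inv_mul_eq_div, le_div_iff₀ hl, ← pow_succ]
    exact hn1.le
  refine ⟨C * (l⁻¹) ^ α, by positivity, ?_⟩
  intro r x hr hr1
  rcases hr.eq_or_lt with rfl | hr
  · rw [Real.zero_rpow hα.ne', mul_zero]
    have lim : Filter.Tendsto (fun n : ℕ => C * (l ^ n) ^ α) Filter.atTop (nhds (C * 0 ^ α)) :=
      ((tendsto_pow_atTop_nhds_zero_of_lt_one hl.le hl1).rpow_const (Or.inr hα.le)).const_mul C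
    rw [Real.zero_rpow hα.ne', mul_zero] at lim
    refine ge_of_tendsto' lim fun n => le_trans ?_ (H n x)
    exact measureReal_mono (Metric.closedBall_subset_closedBall (by positivity))
  · exact pos r x hr hr1

/-- There exist `c > 0` and `ε > 0` such that for every `1 - ε < λ < 1`, the Hausdorff
dimension of the Bernoulli convolution measure `μ_λ` is at least `1 - c(1 - λ)`:
every Borel set of full `μ_λ`-measure has Hausdorff dimension at least `1 - c(1 - λ)`. -/
theorem bernoulli_convolution_dim_near_one :
    ∃ c : ℝ, 0 < c ∧ ∃ ε : ℝ, 0 < ε ∧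
      ∀ l : ℝ, 1 - ε < l → l < 1 →
        ∀ μ : Measure ℝ, IsProbabilityMeasure μ →
          μ = (1 / 2 : ℝ≥0∞) • Measure.map (fun x : ℝ => l * x - 1) μ
            + (1 / 2 : ℝ≥0∞) • Measure.map (fun x : ℝ => l * x + 1) μ →
          ∀ X : Set ℝ, MeasurableSet X → μ X = 1 →
            ENNReal.ofReal (1 - c * (1 - l)) ≤ dimH X := by
  refine ⟨2, by norm_num, 1 / 4, by norm_num, ?_⟩
  intro l hl0 hl1 μ hμ h X hX hμX
  have hl0' : 3 / 4 < l := by linarith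
  obtain ⟨C, hC, H⟩ := bc_frostman l hl0' hl1 μ h
  have hα : 0 < 1 - 2 * (1 - l) := by linarith
  set α := 1 - 2 * (1 - l) with hαd
  have hle : (ENNReal.ofReal C)⁻¹ • μ ≤ Measure.hausdorffMeasure α := by
    refine Measure.le_hausdorffMeasure α _ 1 one_pos ?_
    intro s hs
    rcases s.eq_empty_or_nonempty with rfl | ⟨x, hx⟩
    · simp
    have hne : Metric.ediam s ≠ ∞ := ne_top_of_le_ne_top ENNReal.one_ne_top hs
    have hd : Metric.ediam s = ENNReal.ofReal (Metric.ediam s).toReal :=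
      (ENNReal.ofReal_toReal hne).symm
    set d := (Metric.ediam s).toReal with hdd
    have hd0 : 0 ≤ d := ENNReal.toReal_nonneg
    have hd1 : d ≤ 1 := by
      have := ENNReal.toReal_mono ENNReal.one_ne_top hs
      simpa using this
    have hsub : s ⊆ Metric.closedBall x d := by
      intro y hy
      rw [Metric.mem_closedBall, dist_edist]
      exact ENNReal.toReal_mono hne (Metric.edist_le_ediam_of_mem hy hx)
    have h1 : μ s ≤ ENNReal.ofReal C * ENNReal.ofReal d ^ α := by
      rw [ENNReal.ofReal_rpow_of_nonneg hd0 hα.le, ← ENNReal.ofReal_mul hC.le]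
      refine (measure_mono hsub).trans ?_
      rw [← ofReal_measureReal]
      exact ENNReal.ofReal_le_ofReal (H d x hd0 hd1)
    rw [hd, Measure.smul_apply, smul_eq_mul]
    have hC0 : ENNReal.ofReal C ≠ 0 := by simpa using hC
    rw [mul_comm, ← div_eq_mul_inv]
    exact ENNReal.div_le_of_le_mul' h1
  apply le_dimH_of_hausdorffMeasure_ne_zero (d := α.toNNReal)
  rw [Real.coe_toNNReal _ hα.le]
  intro h0
  have := hle X
  rw [h0, Measure.smul_apply, hμX] at this
  simp at this
end

section
/- Let λ ∈ [1/4, 2/5] and let μ_λ^{0,1,3} be the unique Borel probability measure on ℝ satisfying μ = (1/3)·(x ↦ λx)_*μ + (1/3)·(x ↦ λx + 1)_*μ + (1/3)·(x ↦ λx + 3)_*μ. Then dim_H(μ_λ^{0,1,3}) ≥ min{(log 3)/(log λ^{-1}), 1} − 0.2; that is, every Borel set X ⊆ ℝ with μ_λ^{0,1,3}(X) = 1 satisfies dim_H(X) ≥ min{(log 3)/(log λ^{-1}), 1} − 0.2. -/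
open MeasureTheory
open scoped ENNReal

namespace Dim013

/-- Piecewise constant weight with cells of length `1/12`. -/
noncomputable def wv (W : List ℕ) (x : ℝ) : ℕ := W.getD ⌊|x| * 12⌋₊ 0

/-- Maximum of the entries of `W` with indices in `[p, q]`. -/
def mx (W : List ℕ) (p q : ℕ) : ℕ := ((W.drop p).take (q + 1 - p)).foldr max 0

def cellTerm (W : List ℕ) (a b i : ℕ) (d : ℤ) : ℕ :=
  mx W ((min ((i : ℤ) - 12 * d).natAbs ((i : ℤ) - 12 * d + 1).natAbs) * 1200 / b)
    ((max ((i : ℤ) - 12 * d).natAbs ((i : ℤ) - 12 * d + 1).natAbs) * 1200 / a)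

def rowOk (W : List ℕ) (a b t i : ℕ) : Bool :=
  Nat.ble (10000 * (3 * cellTerm W a b i 0 + cellTerm W a b i 1 + cellTerm W a b i (-1)
    + cellTerm W a b i 2 + cellTerm W a b i (-2) + cellTerm W a b i 3 + cellTerm W a b i (-3)))
    (9 * t * W.getD i 0)

def certOk (W : List ℕ) (a b t : ℕ) : Bool :=
  (W.length == 61) && (W.all fun v => Nat.ble 1 v) && (List.range 61).all (rowOk W a b t)

def WA : List ℕ := [100000, 70027, 66215, 68141, 68141, 50449, 50449, 57629, 57629, 50447, 53126,
  66025, 66025, 44400, 37498, 38014, 38014, 26986, 25583, 32763, 32763, 30832, 33510, 46410, 46410,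
  33510, 30832, 32755, 32755, 25575, 24874, 30130, 30130, 27499, 28066, 36603, 36603, 23703, 21024,
  20319, 20319, 13140, 12438, 12438, 12438, 9808, 9808, 9808, 9808, 5445, 3333, 2628, 2628, 704,
  10, 10, 10, 10, 10, 10, 10]

def WB : List ℕ := [100000, 77265, 69866, 71958, 70793, 63630, 55367, 60282, 61446, 60638, 57926,
  66025, 66025, 58318, 48326, 48062, 42899, 37633, 37633, 38489, 37983, 35773, 38708, 46410, 46410,
  38700, 35765, 35871, 33872, 29749, 29749, 31666, 30831, 29488, 28895, 36603, 36603, 29089, 23329,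
  23435, 21436, 18254, 14123, 13975, 13140, 12438, 9614, 9808, 9808, 9808, 6279, 5744, 3744, 2628,
  2628, 1539, 704, 10, 10, 10, 10]

def WC : List ℕ := [3000, 2705, 2573, 2383, 2318, 2330, 2213, 2071, 2035, 2105, 2046, 2047, 2008,
  1939, 1934, 1787, 1625, 1579, 1498, 1411, 1428, 1445, 1393, 1443, 1403, 1324, 1292, 1194, 1151,
  1156, 1116, 1044, 1015, 1047, 1052, 1121, 1088, 975, 911, 813, 734, 685, 586, 504, 459, 432, 372,
  329, 296, 296, 296, 257, 194, 155, 114, 87, 78, 51, 23, 13, 1]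

lemma okA : certOk WA 300 400 4152 = true := by decide +kernel
lemma okB : certOk WB 400 440 4152 = true := by decide +kernel
lemma okC : certOk WC 440 480 4400 = true := by decide +kernel

lemma le_foldr_max (L : List ℕ) (v : ℕ) (h : v ∈ L) : v ≤ L.foldr max 0 := by
  induction L with
  | nil => simp at h
  | cons y L ih =>
    simp only [List.foldr_cons]
    rcases List.mem_cons.1 h with h | h
    · exact h ▸ le_max_left _ _
    · exact (ih h).trans (le_max_right _ _)

lemma getD_le_mx (W : List ℕ) (p q k : ℕ) (hp : p ≤ k) (hq : k ≤ q) : W.getD k 0 ≤ mx W p q := by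
  by_cases hk : k < W.length
  · apply le_foldr_max
    rw [List.mem_iff_getElem]
    refine ⟨k - p, ?_, ?_⟩
    · simp; omega
    · simp [List.getD_eq_getElem?_getD, hk, Nat.add_sub_cancel' hp]
  · rw [List.getD_eq_default _ _ (by omega)]; exact Nat.zero_le _

lemma wv_le_term (W : List ℕ) (a b : ℕ) (ha : 0 < a) (hb : 0 < b) (l : ℝ) (hl : 0 < l)
    (h1 : (a : ℝ) / 1200 ≤ l) (h2 : l ≤ (b : ℝ) / 1200) (x : ℝ) (hx : 0 ≤ x) (d : ℤ) :
    wv W ((x - d) / l) ≤ cellTerm W a b ⌊|x| * 12⌋₊ d := by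
  rw [abs_of_nonneg hx]
  set i := ⌊x * 12⌋₊ with hi
  have hi1 : (i : ℝ) ≤ x * 12 := Nat.floor_le (by positivity)
  have hi2 : x * 12 < i + 1 := Nat.lt_floor_add_one _
  set u : ℤ := (i : ℤ) - 12 * d with hu
  have hu1 : (u : ℝ) ≤ (x - d) * 12 := by rw [hu]; push_cast; linarith
  have hu2 : (x - d) * 12 ≤ (u : ℝ) + 1 := by rw [hu]; push_cast; linarith
  have hm0 : ((min u.natAbs (u + 1).natAbs : ℕ) : ℝ) ≤ |x - d| * 12 := by
    rcases le_or_gt 0 u with h | h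
    · have h' : ((u.natAbs : ℕ) : ℝ) = u := by
        rw [Nat.cast_natAbs, abs_of_nonneg h]
      calc ((min u.natAbs (u + 1).natAbs : ℕ) : ℝ) ≤ (u.natAbs : ℝ) := by
            exact_mod_cast min_le_left _ _
        _ ≤ _ := by rw [h']; nlinarith [le_abs_self (x - d)]
    · have h' : (((u + 1).natAbs : ℕ) : ℝ) = -(u + 1) := by
        rw [Nat.cast_natAbs, abs_of_nonpos (by omega)]; push_cast; ring
      calc ((min u.natAbs (u + 1).natAbs : ℕ) : ℝ) ≤ ((u + 1).natAbs : ℝ) := by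
            exact_mod_cast min_le_right _ _
        _ ≤ _ := by rw [h']; nlinarith [neg_abs_le (x - d)]
  have hm1 : |x - d| * 12 ≤ ((max u.natAbs (u + 1).natAbs : ℕ) : ℝ) := by
    have e1 : -((u.natAbs : ℕ) : ℝ) ≤ u := by
      rw [Nat.cast_natAbs]; exact_mod_cast neg_abs_le u
    have e2 : (u : ℝ) + 1 ≤ ((u + 1).natAbs : ℝ) := by
      rw [Nat.cast_natAbs]; exact_mod_cast le_abs_self (u + 1)
    have e3 : ((u.natAbs : ℕ) : ℝ) ≤ ((max u.natAbs (u + 1).natAbs : ℕ) : ℝ) := by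
      exact_mod_cast le_max_left _ _
    have e4 : (((u + 1).natAbs : ℕ) : ℝ) ≤ ((max u.natAbs (u + 1).natAbs : ℕ) : ℝ) := by
      exact_mod_cast le_max_right _ _
    have : |(x - d) * 12| ≤ ((max u.natAbs (u + 1).natAbs : ℕ) : ℝ) :=
      abs_le.2 ⟨by linarith, by linarith⟩
    rwa [abs_mul, abs_of_pos (by norm_num : (0 : ℝ) < 12)] at this
  have haR : (0 : ℝ) < a := by exact_mod_cast ha
  have hbR : (0 : ℝ) < b := by exact_mod_cast hb
  have hy : |(x - d) / l| * 12 = |x - d| * 12 / l := by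
    rw [abs_div, abs_of_pos hl]; ring
  unfold wv cellTerm
  rw [hy]
  apply getD_le_mx
  · apply Nat.le_floor
    refine Nat.cast_div_le.trans ?_
    rw [div_le_div_iff₀ hbR hl]
    push_cast at hm0 ⊢
    have : (0:ℝ) ≤ min (u.natAbs : ℝ) ((u + 1).natAbs : ℝ) := by positivity
    nlinarith [abs_nonneg (x - d)]
  · rw [← Nat.floor_div_eq_div (K := ℝ)]
    apply Nat.floor_mono
    rw [div_le_div_iff₀ hl haR]
    push_cast at hm1 ⊢
    nlinarith [abs_nonneg (x - d)]

lemma wv_neg (W : List ℕ) (x : ℝ) : wv W (-x) = wv W x := by simp [wv]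

/-- The main inequality for the weight. -/
lemma key (W : List ℕ) (a b t : ℕ) (ha : 0 < a) (hb : 0 < b) (hW : certOk W a b t = true)
    (l : ℝ) (hl : 0 < l)
    (h1 : (a : ℝ) / 1200 ≤ l) (h2 : l ≤ (b : ℝ) / 1200) (x : ℝ) (hx : ⌊|x| * 12⌋₊ < 61) :
    10000 * (3 * wv W (x / l) + wv W ((x - 1) / l) + wv W ((x + 1) / l)
      + wv W ((x - 2) / l) + wv W ((x + 2) / l) + wv W ((x - 3) / l) + wv W ((x + 3) / l))
      ≤ 9 * t * wv W x := by
  wlog h : 0 ≤ x generalizing x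
  · have := this (-x) (by simpa using hx) (by linarith)
    have e : ∀ y : ℝ, wv W ((-x - y) / l) = wv W ((x + y) / l) := fun y => by
      rw [← wv_neg]; congr 1; ring
    have e2 : ∀ y : ℝ, wv W ((-x + y) / l) = wv W ((x - y) / l) := fun y => by
      rw [← wv_neg]; congr 1; ring
    have e0 : wv W (-x / l) = wv W (x / l) := by rw [← wv_neg]; congr 1; ring
    rw [e, e, e, e2, e2, e2, e0, wv_neg] at this
    linarith
  have T := wv_le_term W a b ha hb l hl h1 h2 x h
  have t0 := T 0
  have t1 := T 1
  have t2 := T (-1)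
  have t3 := T 2
  have t4 := T (-2)
  have t5 := T 3
  have t6 := T (-3)
  push_cast at t0 t1 t2 t3 t4 t5 t6
  simp only [sub_zero, sub_neg_eq_add] at t0 t1 t2 t3 t4 t5 t6
  have hrow : rowOk W a b t ⌊|x| * 12⌋₊ = true := by
    simp only [certOk, Bool.and_eq_true, List.all_eq_true] at hW
    exact hW.2 _ (List.mem_range.2 hx)
  have hrow' := Nat.le_of_ble_eq_true hrow
  have : wv W x = W.getD ⌊|x| * 12⌋₊ 0 := rfl
  rw [this]
  refine le_trans ?_ hrow'
  omega

lemma wv_pos (W : List ℕ) (a b t : ℕ) (hW : certOk W a b t = true) (x : ℝ)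
    (hx : ⌊|x| * 12⌋₊ < 61) : 1 ≤ wv W x := by
  simp only [certOk, Bool.and_eq_true, List.all_eq_true, beq_iff_eq] at hW
  unfold wv
  rw [List.getD_eq_getElem _ _ (by omega)]
  exact Nat.le_of_ble_eq_true (hW.1.2 _ (List.getElem_mem _))


lemma measurable_ball (μ : Measure ℝ) [IsProbabilityMeasure μ] (r : ℝ) :
    Measurable fun a : ℝ => μ (Metric.closedBall a r) := by
  have : MeasurableSet {p : ℝ × ℝ | dist p.2 p.1 ≤ r} :=
    measurableSet_le (by fun_prop) measurable_const
  exact measurable_measure_prodMk_left this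

lemma dim_of_ball (μ : Measure ℝ) [IsProbabilityMeasure μ] (X : Set ℝ) (hX : MeasurableSet X)
    (hX1 : μ X = 1) (l α r0 K0 θ : ℝ) (hl : 0 < l) (hl1 : l < 1) (hα : 0 < α) (hr0 : 0 < r0)
    (hK0 : 0 ≤ K0) (hθ : 0 ≤ θ) (hθl : θ < l ^ α)
    (h : ∀ n : ℕ, ∫⁻ a, μ (Metric.closedBall a (r0 * l ^ n)) ∂μ ≤ ENNReal.ofReal (θ ^ n * K0)) :
    ENNReal.ofReal α ≤ dimH X := by
  have hlα : 0 < l ^ α := Real.rpow_pos_of_pos hl _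
  have hlα1 : l ^ α < 1 := Real.rpow_lt_one hl.le hl1 hα
  set g : ℕ → ℝ → ℝ≥0∞ := fun n a =>
    ENNReal.ofReal (((l ^ α) ^ n)⁻¹) * μ (Metric.closedBall a (r0 * l ^ n)) with hg
  have hgm : ∀ n, Measurable (g n) := fun n => (measurable_ball μ _).const_mul _
  have hsum : ∫⁻ a, ∑' n, g n a ∂μ ≠ ∞ := by
    rw [lintegral_tsum fun n => (hgm n).aemeasurable]
    have hs : Summable fun n : ℕ => (θ / l ^ α) ^ n * K0 :=
      (summable_geometric_of_lt_one (by positivity) ((div_lt_one hlα).2 hθl)).mul_right _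
    refine ne_top_of_le_ne_top (hs.tsum_ofReal_ne_top) (ENNReal.tsum_le_tsum fun n => ?_)
    rw [hg]
    simp only
    rw [lintegral_const_mul _ (measurable_ball μ _)]
    calc _ ≤ ENNReal.ofReal (((l ^ α) ^ n)⁻¹) * ENNReal.ofReal (θ ^ n * K0) := by
          gcongr; exact h n
      _ = _ := by
        rw [← ENNReal.ofReal_mul (by positivity)]; congr 1; rw [div_pow]; field_simp
  have hae : ∀ᵐ a ∂μ, ∑' n, g n a < ∞ := ae_lt_top (by fun_prop) hsum
  set A : ℕ → Set ℝ := fun K => X ∩ {a | ∀ n, g n a ≤ (K + 1 : ℕ)} with hA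
  have hAm : ∀ K, MeasurableSet (A K) := fun K => by
    refine hX.inter ?_
    rw [Set.ofPred_forall]
    exact MeasurableSet.iInter fun n => measurableSet_le (hgm n) measurable_const
  have hex : ∃ K, μ (A K) ≠ 0 := by
    by_contra! hcon
    have h0 : μ (⋃ K, A K) = 0 := measure_iUnion_null hcon
    have hXae : ∀ᵐ a ∂μ, a ∈ X := (prob_compl_eq_zero_iff hX).2 hX1
    have h1 : ∀ᵐ a ∂μ, a ∈ ⋃ K, A K := by
      filter_upwards [hae, hXae] with a ha haX
      obtain ⟨K, hK⟩ := ENNReal.exists_nat_gt ha.ne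
      refine Set.mem_iUnion.2 ⟨K, haX, fun n => ?_⟩
      refine (ENNReal.le_tsum n).trans (hK.le.trans ?_)
      exact_mod_cast Nat.le_succ K
    have h2 : ∀ᵐ a ∂μ, a ∉ ⋃ K, A K := measure_eq_zero_iff_ae_notMem.1 h0
    have h3 : ∀ᵐ a ∂μ, False := by
      filter_upwards [h1, h2] with a h1 h2 using h2 h1
    rw [Filter.eventually_false_iff_eq_bot, ae_eq_bot] at h3
    exact (IsProbabilityMeasure.ne_zero μ) h3
  obtain ⟨K, hK⟩ := hex
  have hball : ∀ a ∈ A K, ∀ n : ℕ, μ (Metric.closedBall a (r0 * l ^ n))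
      ≤ ENNReal.ofReal ((K + 1) * (l ^ α) ^ n) := by
    intro a ha n
    have := ha.2 n
    rw [hg] at this
    simp only at this
    have hp : (0 : ℝ) < (l ^ α) ^ n := by positivity
    calc μ (Metric.closedBall a (r0 * l ^ n))
        = ENNReal.ofReal ((l ^ α) ^ n) * (ENNReal.ofReal (((l ^ α) ^ n)⁻¹)
          * μ (Metric.closedBall a (r0 * l ^ n))) := by
          rw [← mul_assoc, ← ENNReal.ofReal_mul hp.le, mul_inv_cancel₀ hp.ne']; simp
      _ ≤ ENNReal.ofReal ((l ^ α) ^ n) * ((K + 1 : ℕ) : ℝ≥0∞) := by gcongr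
      _ = _ := by
        rw [mul_comm, ENNReal.ofReal_mul (by positivity)]
        congr 1
        rw [← ENNReal.ofReal_natCast]; push_cast; rfl
  set c : ℝ := (K + 1) / (r0 * l) ^ α with hc
  have hcpos : 0 < c := by positivity
  have hle : (ENNReal.ofReal c)⁻¹ • μ.restrict (A K) ≤ μH[α] := by
    apply Measure.le_hausdorffMeasure α _ (ENNReal.ofReal r0) (by simpa using hr0)
    intro s hs
    rw [Measure.smul_apply, smul_eq_mul, Measure.restrict_apply' (hAm K)]
    rw [ENNReal.inv_mul_le_iff (by simpa using hcpos) ENNReal.ofReal_ne_top]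
    rcases (s ∩ A K).eq_empty_or_nonempty with he | ⟨a, has, haA⟩
    · rw [he]; simp
    have hfin : Metric.ediam s ≠ ∞ := ne_top_of_le_ne_top ENNReal.ofReal_ne_top hs
    set δ := (Metric.ediam s).toReal with hδ
    have hδe : Metric.ediam s = ENNReal.ofReal δ := (ENNReal.ofReal_toReal hfin).symm
    have hδr : δ ≤ r0 := by
      rw [hδe] at hs; exact (ENNReal.ofReal_le_ofReal_iff hr0.le).1 hs
    have hδ0 : 0 ≤ δ := ENNReal.toReal_nonneg
    have hsub : ∀ r, δ ≤ r → s ∩ A K ⊆ Metric.closedBall a r := by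
      intro r hr y hy
      have h1 : edist y a ≤ Metric.ediam s := Metric.edist_le_ediam_of_mem hy.1 has
      rw [hδe, edist_dist] at h1
      exact ((ENNReal.ofReal_le_ofReal_iff hδ0).1 h1).trans hr
    rcases hδ0.eq_or_lt with h0 | hpos
    · have hlim : Filter.Tendsto (fun n : ℕ => ENNReal.ofReal ((K + 1) * (l ^ α) ^ n))
          Filter.atTop (nhds 0) := by
        rw [← ENNReal.ofReal_zero]
        apply ENNReal.tendsto_ofReal
        simpa using (tendsto_pow_atTop_nhds_zero_of_lt_one hlα.le hlα1).const_mul ((K : ℝ) + 1)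
      have : μ (s ∩ A K) ≤ 0 := ge_of_tendsto' hlim fun n =>
        (measure_mono (hsub _ (by rw [← h0]; positivity))).trans (hball a haA n)
      exact this.trans zero_le
    · obtain ⟨n, hn1, hn2⟩ := exists_nat_pow_near_of_lt_one (x := δ / r0) (y := l)
        (by positivity) ((div_le_one hr0).2 hδr) hl hl1
      rw [div_le_iff₀ hr0] at hn2
      rw [lt_div_iff₀ hr0] at hn1
      refine (measure_mono (hsub (r0 * l ^ n) (by linarith))).trans ((hball a haA n).trans ?_)
      rw [hδe, ENNReal.ofReal_rpow_of_pos hpos, ← ENNReal.ofReal_mul hcpos.le]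
      apply ENNReal.ofReal_le_ofReal
      rw [hc, div_mul_eq_mul_div, mul_div_assoc, ← Real.div_rpow hpos.le (by positivity)]
      gcongr
      rw [← Real.rpow_natCast, ← Real.rpow_mul hl.le, mul_comm, Real.rpow_mul hl.le,
        Real.rpow_natCast]
      gcongr
      rw [le_div_iff₀ (by positivity)]
      rw [pow_succ] at hn1
      nlinarith
  have hne : μH[α] X ≠ 0 := by
    intro h0
    have h1 := hle X
    rw [h0, Measure.smul_apply, smul_eq_mul, Measure.restrict_apply' (hAm K)] at h1
    have h2 : X ∩ A K = A K := Set.inter_eq_right.2 Set.inter_subset_left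
    rw [h2] at h1
    have h3 := le_antisymm h1 zero_le
    rcases mul_eq_zero.1 h3 with h4 | h4
    · simp at h4
    · exact hK h4
  have := le_dimH_of_hausdorffMeasure_ne_zero (s := X) (d := α.toNNReal)
    (by rwa [Real.coe_toNNReal _ hα.le])
  exact this

/-- Stationarity of `μ`. -/
def Stat (l : ℝ) (μ : Measure ℝ) : Prop :=
  μ = (1 / 3 : ℝ≥0∞) • Measure.map (fun x : ℝ => l * x) μ
            + (1 / 3 : ℝ≥0∞) • Measure.map (fun x : ℝ => l * x + 1) μ
            + (1 / 3 : ℝ≥0∞) • Measure.map (fun x : ℝ => l * x + 3) μ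

lemma Stat.apply {l : ℝ} {μ : Measure ℝ} (h : Stat l μ) {S : Set ℝ} (hS : MeasurableSet S) :
    μ S = (1 / 3 : ℝ≥0∞) * (μ ((fun x : ℝ => l * x) ⁻¹' S) + μ ((fun x : ℝ => l * x + 1) ⁻¹' S)
      + μ ((fun x : ℝ => l * x + 3) ⁻¹' S)) := by
  have := congrArg (fun m : Measure ℝ => m S) h
  simp only [Measure.add_apply, Measure.smul_apply, smul_eq_mul] at this
  rw [Measure.map_apply (by fun_prop) hS, Measure.map_apply (by fun_prop) hS,
    Measure.map_apply (by fun_prop) hS] at this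
  rw [mul_add, mul_add]
  exact this

lemma Stat.lintegral {l : ℝ} {μ : Measure ℝ} (h : Stat l μ) {g : ℝ → ℝ≥0∞} (hg : Measurable g) :
    ∫⁻ a, g a ∂μ = (1 / 3 : ℝ≥0∞) * (∫⁻ a, g (l * a) ∂μ + ∫⁻ a, g (l * a + 1) ∂μ
      + ∫⁻ a, g (l * a + 3) ∂μ) := by
  have := congrArg (fun m : Measure ℝ => ∫⁻ a, g a ∂m) h
  simp only [lintegral_add_measure, lintegral_smul_measure, smul_eq_mul] at this
  rw [lintegral_map hg (by fun_prop), lintegral_map hg (by fun_prop),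
    lintegral_map hg (by fun_prop)] at this
  rw [mul_add, mul_add]
  exact this

/-- Correlation function. -/
noncomputable def F (μ : Measure ℝ) (r x : ℝ) : ℝ≥0∞ := ∫⁻ a, μ (Metric.closedBall (a - x) r) ∂μ

lemma preimage_ball (l : ℝ) (hl : 0 < l) (c d r : ℝ) :
    (fun x : ℝ => l * x + d) ⁻¹' (Metric.closedBall c (r * l))
      = Metric.closedBall ((c - d) / l) r := by
  ext y
  simp only [Set.mem_preimage, Metric.mem_closedBall, Real.dist_eq]
  have : l * y + d - c = (y - (c - d) / l) * l := by field_simp; ring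
  rw [this, abs_mul, abs_of_pos hl]
  exact mul_le_mul_iff_left₀ hl

lemma ball_rec (l : ℝ) (hl : 0 < l) (μ : Measure ℝ) (h : Stat l μ) (c r : ℝ) :
    μ (Metric.closedBall c (r * l)) = (1 / 3 : ℝ≥0∞) * (μ (Metric.closedBall (c / l) r)
      + μ (Metric.closedBall ((c - 1) / l) r) + μ (Metric.closedBall ((c - 3) / l) r)) := by
  rw [h.apply Metric.isClosed_closedBall.measurableSet, preimage_ball l hl, preimage_ball l hl]
  have := preimage_ball l hl c 0 r
  simp only [add_zero, sub_zero] at this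
  rw [this]

lemma F_rec (l : ℝ) (hl : 0 < l) (μ : Measure ℝ) [IsProbabilityMeasure μ] (h : Stat l μ)
    (r x : ℝ) :
    F μ (r * l) x = (1 / 9 : ℝ≥0∞) * (3 * F μ r (x / l) + F μ r ((x - 1) / l) + F μ r ((x + 1) / l)
      + F μ r ((x - 2) / l) + F μ r ((x + 2) / l) + F μ r ((x - 3) / l) + F μ r ((x + 3) / l)) := by
  have hm : ∀ y, Measurable fun a : ℝ => μ (Metric.closedBall (a - y) r) := fun y =>
    (measurable_ball μ r).comp (measurable_id.sub_const y)
  have hm' : ∀ y, Measurable fun a : ℝ => μ (Metric.closedBall (a - y) (r * l)) := fun y =>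
    (measurable_ball μ (r * l)).comp (measurable_id.sub_const y)
  have e : ∀ d : ℝ, ∫⁻ a, μ (Metric.closedBall (l * a + d - x) (r * l)) ∂μ =
      (1 / 3 : ℝ≥0∞) * (F μ r ((x - d) / l) + F μ r ((x - d + 1) / l)
        + F μ r ((x - d + 3) / l)) := by
    intro d
    unfold F
    have hms : ∀ y z w, Measurable fun a : ℝ => μ (Metric.closedBall (a - y) r)
        + μ (Metric.closedBall (a - z) r) + μ (Metric.closedBall (a - w) r) := fun y z w =>
      ((hm y).add (hm z)).add (hm w)
    rw [← lintegral_add_left (hm _), ← lintegral_add_right _ (hm _),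
      ← lintegral_const_mul _ (hms _ _ _)]
    congr 1
    ext a
    rw [ball_rec l hl μ h]
    congr 4
    · congr 1; field_simp; ring
    · congr 1; field_simp; ring
    · congr 2; field_simp; ring
  have h0 := e 0
  simp only [add_zero, sub_zero] at h0
  have h9 : (1 / 9 : ℝ≥0∞) = 1 / 3 * (1 / 3) := by
    rw [one_div, one_div, ← ENNReal.mul_inv (by simp) (by simp)]; norm_num
  have : F μ (r * l) x = _ := h.lintegral (hm' x)
  rw [this, h0, e, e, h9]
  have q1 : x - 1 + 1 = x := by ring
  have q2 : x - 1 + 3 = x + 2 := by ring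
  have q3 : x - 3 + 1 = x - 2 := by ring
  have q4 : x - 3 + 3 = x := by ring
  rw [q1, q2, q3, q4]
  ring

lemma supp (l : ℝ) (hl0 : 1 / 4 ≤ l) (hl1 : l ≤ 2 / 5) (μ : Measure ℝ) [IsProbabilityMeasure μ]
    (h : Stat l μ) (R : ℝ) (hR : 0 < R) : μ (Set.Icc (-R) (5 + R))ᶜ = 0 := by
  have step : ∀ R : ℝ, 0 < R → μ (Set.Icc (-R) (5 + R))ᶜ ≤ μ (Set.Icc (-(2 * R)) (5 + 2 * R))ᶜ := by
    intro R hR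
    have hs : ∀ d : ℝ, 0 ≤ d → d ≤ 3 → (fun x : ℝ => l * x + d) ⁻¹' (Set.Icc (-R) (5 + R))ᶜ ⊆
        (Set.Icc (-(2 * R)) (5 + 2 * R))ᶜ := by
      intro d hd0 hd3 y hy hy2
      apply hy
      obtain ⟨h1, h2⟩ := hy2
      constructor
      · simp only; nlinarith
      · simp only; nlinarith
    rw [h.apply measurableSet_Icc.compl]
    have s0 := hs 0 le_rfl (by norm_num)
    simp only [add_zero] at s0
    calc _ ≤ (1 / 3 : ℝ≥0∞) * (μ (Set.Icc (-(2 * R)) (5 + 2 * R))ᶜ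
          + μ (Set.Icc (-(2 * R)) (5 + 2 * R))ᶜ + μ (Set.Icc (-(2 * R)) (5 + 2 * R))ᶜ) := by
          gcongr
          · exact hs 1 (by norm_num) (by norm_num)
          · exact hs 3 (by norm_num) (by norm_num)
      _ = 1 / 3 * 3 * μ (Set.Icc (-(2 * R)) (5 + 2 * R))ᶜ := by ring
      _ = _ := by
        rw [one_div, ENNReal.inv_mul_cancel (by simp) (by simp), one_mul]
  have it : ∀ n : ℕ, μ (Set.Icc (-R) (5 + R))ᶜ ≤ μ (Set.Icc (-(2 ^ n * R)) (5 + 2 ^ n * R))ᶜ := by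
    intro n
    induction n with
    | zero => simp
    | succ n ih =>
      refine ih.trans ((step _ (by positivity)).trans (le_of_eq ?_))
      rw [pow_succ']; simp only [mul_assoc]
  have hlim : Filter.Tendsto (fun n : ℕ => μ (Set.Icc (-(2 ^ n * R)) (5 + 2 ^ n * R))ᶜ)
      Filter.atTop (nhds (μ (⋂ n : ℕ, (Set.Icc (-(2 ^ n * R)) (5 + 2 ^ n * R))ᶜ))) := by
    apply tendsto_measure_iInter_atTop
    · exact fun n => measurableSet_Icc.compl.nullMeasurableSet
    · intro m n hmn
      apply Set.compl_subset_compl.2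
      have : (2 : ℝ) ^ m * R ≤ 2 ^ n * R := by gcongr; norm_num
      exact Set.Icc_subset_Icc (by linarith) (by linarith)
    · exact ⟨0, measure_ne_top _ _⟩
  have hemp : (⋂ n : ℕ, (Set.Icc (-((2 : ℝ) ^ n * R)) (5 + 2 ^ n * R))ᶜ) = ∅ := by
    rw [Set.eq_empty_iff_forall_notMem]
    intro y hy
    obtain ⟨n, hn⟩ := pow_unbounded_of_one_lt (|y| / R) (by norm_num : (1 : ℝ) < 2)
    rw [div_lt_iff₀ hR] at hn
    refine Set.mem_iInter.1 hy n ⟨?_, ?_⟩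
    · linarith [neg_abs_le y]
    · linarith [le_abs_self y]
  rw [hemp, measure_empty] at hlim
  exact le_antisymm (ge_of_tendsto' hlim it) zero_le

lemma F_le_one (μ : Measure ℝ) [IsProbabilityMeasure μ] (r x : ℝ) : F μ r x ≤ 1 := by
  calc F μ r x ≤ ∫⁻ _, 1 ∂μ := lintegral_mono fun a => prob_le_one
    _ = 1 := by simp

lemma F_zero (l : ℝ) (hl0 : 1 / 4 ≤ l) (hl1 : l ≤ 2 / 5) (μ : Measure ℝ) [IsProbabilityMeasure μ]
    (h : Stat l μ) (r x : ℝ) (hr : r ≤ 1 / 24) (hx : 61 ≤ ⌊|x| * 12⌋₊) : F μ r x = 0 := by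
  have hx' : 61 / 12 ≤ |x| := by
    have := (Nat.le_floor_iff (by positivity)).1 hx
    push_cast at this; linarith
  have hs := supp l hl0 hl1 μ h (1 / 96) (by norm_num)
  have hae : ∀ᵐ a ∂μ, a ∈ Set.Icc (-(1 / 96) : ℝ) (5 + 1 / 96) := hs
  unfold F
  have hm : Measurable fun a : ℝ => μ (Metric.closedBall (a - x) r) :=
    (measurable_ball μ r).comp (measurable_id.sub_const x)
  rw [lintegral_eq_zero_iff hm]
  filter_upwards [hae] with a ha
  refine measure_mono_null ?_ hs
  intro y hy hy2
  simp only [Metric.mem_closedBall, Real.dist_eq] at hy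
  obtain ⟨h1, h2⟩ := abs_le.1 hy
  obtain ⟨h3, h4⟩ := ha
  obtain ⟨h5, h6⟩ := hy2
  rcases le_abs.1 hx' with h7 | h7 <;> linarith

lemma F_bound (W : List ℕ) (a b t : ℕ) (ha : 0 < a) (hb : 0 < b) (hW : certOk W a b t = true)
    (l : ℝ) (hl0 : 1 / 4 ≤ l) (hl1 : l ≤ 2 / 5)
    (h1 : (a : ℝ) / 1200 ≤ l) (h2 : l ≤ (b : ℝ) / 1200) (μ : Measure ℝ) [IsProbabilityMeasure μ]
    (h : Stat l μ) (n : ℕ) : ∀ x : ℝ,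
    F μ (1 / 24 * l ^ n) x ≤ ENNReal.ofReal (((t : ℝ) / 10000) ^ n * wv W x) := by
  have hl : 0 < l := by linarith
  have hzero : ∀ (n : ℕ) (x : ℝ), 61 ≤ ⌊|x| * 12⌋₊ → F μ (1 / 24 * l ^ n) x = 0 := by
    intro n x hx
    apply F_zero l hl0 hl1 μ h _ x _ hx
    have : l ^ n ≤ 1 := pow_le_one₀ hl.le (by linarith)
    linarith
  induction n with
  | zero =>
    intro x
    rcases lt_or_ge ⌊|x| * 12⌋₊ 61 with hx | hx
    · refine (F_le_one μ _ x).trans ?_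
      rw [pow_zero, one_mul, ENNReal.one_le_ofReal]
      exact_mod_cast wv_pos W a b t hW x hx
    · rw [hzero 0 x hx]; exact zero_le
  | succ n ih =>
    intro x
    rcases lt_or_ge ⌊|x| * 12⌋₊ 61 with hx | hx
    · have hk := key W a b t ha hb hW l hl h1 h2 x hx
      have e : (1 / 24 : ℝ) * l ^ (n + 1) = 1 / 24 * l ^ n * l := by ring
      rw [e, F_rec l hl μ h]
      set T : ℝ := ((t : ℝ) / 10000) ^ n with hT
      have hT0 : 0 ≤ T := by positivity
      calc _ ≤ (1 / 9 : ℝ≥0∞) * (3 * ENNReal.ofReal (T * wv W (x / l))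
            + ENNReal.ofReal (T * wv W ((x - 1) / l)) + ENNReal.ofReal (T * wv W ((x + 1) / l))
            + ENNReal.ofReal (T * wv W ((x - 2) / l)) + ENNReal.ofReal (T * wv W ((x + 2) / l))
            + ENNReal.ofReal (T * wv W ((x - 3) / l)) + ENNReal.ofReal (T * wv W ((x + 3) / l))) := by
            gcongr <;> exact ih _
        _ = ENNReal.ofReal (1 / 9 * (3 * (T * wv W (x / l)) + T * wv W ((x - 1) / l)
            + T * wv W ((x + 1) / l) + T * wv W ((x - 2) / l) + T * wv W ((x + 2) / l)
            + T * wv W ((x - 3) / l) + T * wv W ((x + 3) / l))) := by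
            have h9 : (1 / 9 : ℝ≥0∞) = ENNReal.ofReal (1 / 9) := by
              rw [ENNReal.ofReal_div_of_pos (by norm_num)]; simp
            have h3 : (3 : ℝ≥0∞) = ENNReal.ofReal 3 := by simp
            rw [h9, h3, ENNReal.ofReal_mul (p := 1 / 9) (by norm_num), ENNReal.ofReal_add (by positivity)
              (by positivity), ENNReal.ofReal_add (by positivity) (by positivity),
              ENNReal.ofReal_add (by positivity) (by positivity),
              ENNReal.ofReal_add (by positivity) (by positivity),
              ENNReal.ofReal_add (by positivity) (by positivity),
              ENNReal.ofReal_add (by positivity) (by positivity),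
              ENNReal.ofReal_mul (p := 3) (by norm_num)]
        _ ≤ _ := by
            apply ENNReal.ofReal_le_ofReal
            have hk' : (10000 : ℝ) * (3 * wv W (x / l) + wv W ((x - 1) / l) + wv W ((x + 1) / l)
              + wv W ((x - 2) / l) + wv W ((x + 2) / l) + wv W ((x - 3) / l)
              + wv W ((x + 3) / l)) ≤ 9 * t * wv W x := by exact_mod_cast hk
            have := mul_le_mul_of_nonneg_left hk' hT0
            rw [pow_succ]
            linarith
    · rw [hzero (n + 1) x hx]; exact zero_le

lemma dim_of_cert (W : List ℕ) (a b t : ℕ) (ha : 0 < a) (hb : 0 < b) (hW : certOk W a b t = true)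
    (l : ℝ) (hl0 : 1 / 4 ≤ l) (hl1 : l ≤ 2 / 5)
    (h1 : (a : ℝ) / 1200 ≤ l) (h2 : l ≤ (b : ℝ) / 1200) (μ : Measure ℝ) [IsProbabilityMeasure μ]
    (h : Stat l μ) (X : Set ℝ) (hX : MeasurableSet X) (hX1 : μ X = 1) (α : ℝ)
    (hα : (t : ℝ) / 10000 < l ^ α) : ENNReal.ofReal α ≤ dimH X := by
  rcases le_or_gt α 0 with h0 | h0
  · rw [ENNReal.ofReal_of_nonpos h0]; exact zero_le
  · refine dim_of_ball μ X hX hX1 l α (1 / 24) (wv W 0) ((t : ℝ) / 10000) (by linarith)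
      (by linarith) h0 (by norm_num) (by positivity) (by positivity) hα fun n => ?_
    have := F_bound W a b t ha hb hW l hl0 hl1 h1 h2 μ h n 0
    simpa [F] using this

lemma lt_of_pow_five {x y : ℝ} (hy : 0 ≤ y) (h : x ^ 5 < y ^ 5) : x < y :=
  lt_of_pow_lt_pow_left₀ 5 hy h

lemma theta_small (l : ℝ) (hl0 : 1 / 4 ≤ l) (hl1 : l ≤ 1 / 3) :
    (4152 : ℝ) / 10000 < l ^ (min (Real.log 3 / Real.log l⁻¹) 1 - 0.2) := by
  have hl : 0 < l := by linarith
  have hlog : Real.log l < 0 := Real.log_neg hl (by linarith)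
  have hc : l ^ (Real.log 3 / Real.log l⁻¹) = 1 / 3 := by
    rw [Real.rpow_def_of_pos hl, Real.log_inv]
    have : Real.log l * (Real.log 3 / -Real.log l) = - Real.log 3 := by
      have := hlog.ne
      rw [div_neg, mul_neg, mul_div_cancel₀ _ this]
    rw [this, Real.exp_neg, Real.exp_log (by norm_num)]; norm_num
  have hle : l ^ (Real.log 3 / Real.log l⁻¹ - 0.2)
      ≤ l ^ (min (Real.log 3 / Real.log l⁻¹) 1 - 0.2) := by
    apply Real.rpow_le_rpow_of_exponent_ge hl (by linarith)
    have := min_le_left (Real.log 3 / Real.log l⁻¹) 1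
    linarith
  refine lt_of_lt_of_le ?_ hle
  rw [Real.rpow_sub hl, hc]
  have hp : 0 < l ^ (0.2 : ℝ) := Real.rpow_pos_of_pos hl _
  have h5 : (l ^ (0.2 : ℝ)) ^ 5 = l := by
    rw [← Real.rpow_natCast, ← Real.rpow_mul hl.le]; norm_num
  rw [lt_div_iff₀ hp]
  apply lt_of_pow_five (by norm_num)
  rw [mul_pow, h5]
  calc (4152 / 10000 : ℝ) ^ 5 * l ≤ (4152 / 10000 : ℝ) ^ 5 * (1 / 3) := by gcongr
    _ < _ := by norm_num

lemma theta_large (l c θ : ℝ) (hc : 0 < c) (hl0 : c ≤ l) (hl1 : l ≤ 2 / 5)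
    (hθ : θ ^ 5 < c ^ 4) :
    θ < l ^ (min (Real.log 3 / Real.log l⁻¹) 1 - 0.2) := by
  have hl : 0 < l := by linarith
  have hle : l ^ (0.8 : ℝ) ≤ l ^ (min (Real.log 3 / Real.log l⁻¹) 1 - 0.2) := by
    apply Real.rpow_le_rpow_of_exponent_ge hl (by linarith)
    have := min_le_right (Real.log 3 / Real.log l⁻¹) 1
    linarith
  refine lt_of_lt_of_le ?_ hle
  have h5 : (l ^ (0.8 : ℝ)) ^ 5 = l ^ 4 := by
    rw [← Real.rpow_natCast, ← Real.rpow_mul hl.le, ← Real.rpow_natCast l 4]; norm_num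
  apply lt_of_pow_five (Real.rpow_nonneg hl.le _)
  rw [h5]
  exact hθ.trans_le (by gcongr)

end Dim013



/-- For `λ ∈ [1/4, 2/5]`, the stationary measure `μ_λ^{0,1,3}` of the `{0,1,3}`-system
satisfies `dim_H(μ) ≥ min{log 3 / log λ⁻¹, 1} − 0.2`: every Borel set of full measure
has Hausdorff dimension at least this bound. -/
theorem dim013_lower_bound (l : ℝ) (hl0 : 1 / 4 ≤ l) (hl1 : l ≤ 2 / 5)
    (μ : Measure ℝ) [IsProbabilityMeasure μ]
    (hμ : μ = (1 / 3 : ℝ≥0∞) • Measure.map (fun x : ℝ => l * x) μ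
            + (1 / 3 : ℝ≥0∞) • Measure.map (fun x : ℝ => l * x + 1) μ
            + (1 / 3 : ℝ≥0∞) • Measure.map (fun x : ℝ => l * x + 3) μ)
    (X : Set ℝ) (hX : MeasurableSet X) (hX1 : μ X = 1) :
    ENNReal.ofReal (min (Real.log 3 / Real.log l⁻¹) 1 - 0.2) ≤ dimH X := by
  have h : Dim013.Stat l μ := hμ
  rcases le_or_gt l (1 / 3) with h1 | h1
  · refine Dim013.dim_of_cert Dim013.WA 300 400 4152 (by norm_num) (by norm_num) Dim013.okA l hl0 hl1
      (by norm_num; linarith) (by norm_num; linarith) μ h X hX hX1 _ ?_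
    exact_mod_cast Dim013.theta_small l hl0 h1
  rcases le_or_gt l (11 / 30) with h2 | h2
  · refine Dim013.dim_of_cert Dim013.WB 400 440 4152 (by norm_num) (by norm_num) Dim013.okB l hl0 hl1
      (by norm_num; linarith) (by norm_num; linarith) μ h X hX hX1 _ ?_
    exact Dim013.theta_large l (1 / 3) _ (by norm_num) h1.le hl1 (by norm_num)
  · refine Dim013.dim_of_cert Dim013.WC 440 480 4400 (by norm_num) (by norm_num) Dim013.okC l hl0 hl1
      (by norm_num; linarith) (by norm_num; linarith) μ h X hX hX1 _ ?_
    exact Dim013.theta_large l (11 / 30) _ (by norm_num) h2.le hl1 (by norm_num)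
end

section
/- Let S(λ, c̄, p̄) be an iterated function scheme of similarities f_j(x) = λx + c_j (j = 1,…,k, 0 < λ < 1) with probability vector p̄ (p_j > 0, ∑p_j = 1), and let μ be a Borel probability measure on ℝ with μ = ∑_j p_j (f_j)_*μ. Suppose there is a compact interval K with f_j(K) ⊆ K for all j, a compact interval J whose interior contains the set {x − y : x, y ∈ K}, a constant θ > 0, an exponent α with 0 < α < 1, and a function ψ : ℝ → ℝ vanishing outside J with θ ≤ ψ(x) ≤ θ^{-1} for all x ∈ J, such that for every x ∈ J one has λ^{-α} ∑_{i,j} p_i p_j ψ((x − c_i + c_j)/λ) < ψ(x). Then for every α' with 0 < α' < α the energy ∬ |x − y|^{-α'} dμ(x) dμ(y) is finite, and every Borel set X ⊆ ℝ with μ(X) = 1 satisfies dim_H(X) ≥ α. -/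
open MeasureTheory
open scoped ENNReal

lemma aux_kernel_meas (s : ℝ) :
    Measurable (fun q : ℝ × ℝ => (ENNReal.ofReal |q.1 - q.2|) ^ (-s)) := by
  have h : Measurable (fun q : ℝ × ℝ => ENNReal.ofReal |q.1 - q.2|) := by
    apply Measurable.ennreal_ofReal
    exact (continuous_fst.sub continuous_snd).abs.measurable
  exact h.pow_const _

/-- Finite energy gives a lower bound on the dimension of full measure sets. -/
lemma aux_dim (μ : Measure ℝ) [IsProbabilityMeasure μ] (s : ℝ) (hs : 0 < s)
    (hI : (∫⁻ x, ∫⁻ y, (ENNReal.ofReal |x - y|) ^ (-s) ∂μ ∂μ) ≠ ⊤)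
    (X : Set ℝ) (hX : MeasurableSet X) (hX1 : μ X = 1) : ENNReal.ofReal s ≤ dimH X := by
  set E : ℝ → ℝ≥0∞ := fun x => ∫⁻ y, (ENNReal.ofReal |x - y|) ^ (-s) ∂μ with hE
  have hEm : Measurable E := (aux_kernel_meas s).lintegral_prod_right'
  set I := ∫⁻ x, E x ∂μ with hIdef
  have hM0 : I + 1 ≠ 0 := by simp
  have hMt : I + 1 ≠ ⊤ := by simp [hI]
  have hA : MeasurableSet {x | E x < I + 1} := measurableSet_lt hEm measurable_const
  set A := {x | E x < I + 1} with hAdef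
  have hApos : μ A ≠ 0 := by
    intro h0
    have h1 : μ {x | I + 1 ≤ E x} ≤ I / (I + 1) :=
      meas_ge_le_lintegral_div hEm.aemeasurable hM0 hMt
    have h2 : {x | I + 1 ≤ E x} = Aᶜ := by
      ext x; simp [hAdef]
    rw [h2, (prob_compl_eq_one_iff hA).2 h0] at h1
    have h3 : I / (I + 1) < 1 := by
      rw [ENNReal.div_lt_iff (Or.inl hM0) (Or.inl hMt), one_mul]
      exact ENNReal.lt_add_right hI one_ne_zero
    exact absurd h1 (not_le.2 h3)
  have key : (I + 1)⁻¹ • μ.restrict A ≤ Measure.hausdorffMeasure s := by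
    refine Measure.le_hausdorffMeasure s _ 1 one_pos ?_
    intro t ht
    rw [Measure.smul_apply, Measure.restrict_apply' hA, smul_eq_mul]
    rcases (t ∩ A).eq_empty_or_nonempty with h | ⟨x, hxt, hxA⟩
    · rw [h]; simp
    have h1 : (Metric.ediam t) ^ (-s) * μ t ≤ I + 1 := by
      have h2 := mul_meas_ge_le_lintegral₀ (μ := μ)
        (f := fun y => (ENNReal.ofReal |x - y|) ^ (-s))
        ((aux_kernel_meas s).comp measurable_prodMk_left).aemeasurable
        ((Metric.ediam t) ^ (-s))
      refine le_trans ?_ (h2.trans (le_of_lt hxA))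
      gcongr
      intro y hy
      simp only [Set.mem_ofPred_eq]
      rw [ENNReal.rpow_neg, ENNReal.rpow_neg]
      gcongr
      have := Metric.edist_le_ediam_of_mem hxt hy
      rwa [edist_dist, Real.dist_eq] at this
    rw [ENNReal.rpow_neg] at h1
    have hdt : (Metric.ediam t) ^ s ≠ ⊤ :=
      ENNReal.rpow_ne_top_of_nonneg hs.le (ne_top_of_le_ne_top ENNReal.one_ne_top ht)
    have h3 : μ t ≤ (I + 1) * (Metric.ediam t) ^ s := by
      by_cases hd : (Metric.ediam t) ^ s = 0
      · rw [hd] at h1 ⊢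
        by_contra hne
        have : μ t ≠ 0 := fun h => hne (by simp [h])
        rw [ENNReal.inv_zero, ENNReal.top_mul this] at h1
        exact hMt (top_le_iff.1 h1)
      · apply (ENNReal.div_le_iff hd hdt).1
        rwa [ENNReal.div_eq_inv_mul]
    calc (I + 1)⁻¹ * μ (t ∩ A) ≤ (I + 1)⁻¹ * ((I + 1) * (Metric.ediam t) ^ s) := by
          gcongr
          exact (measure_mono Set.inter_subset_left).trans h3
      _ = (Metric.ediam t) ^ s := by
          rw [← mul_assoc, ENNReal.inv_mul_cancel hM0 hMt, one_mul]
  have hne : (Measure.hausdorffMeasure s : Measure ℝ) X ≠ 0 := by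
    intro h0
    have h1 := key X
    rw [h0, Measure.smul_apply, Measure.restrict_apply' hA, smul_eq_mul] at h1
    have h2 : μ (X ∩ A) = μ A := by
      rw [Set.inter_comm]
      exact measure_inter_conull ((prob_compl_eq_zero_iff hX).2 hX1)
    rw [h2] at h1
    have := le_antisymm h1 bot_le
    rcases mul_eq_zero.1 this with h | h
    · exact hMt (ENNReal.inv_eq_zero.1 h)
    · exact hApos h
  have hne' : (Measure.hausdorffMeasure ((Real.toNNReal s : NNReal) : ℝ) : Measure ℝ) X ≠ 0 := by
    rw [Real.coe_toNNReal s hs.le]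
    exact hne
  exact le_dimH_of_hausdorffMeasure_ne_zero hne'

lemma aux_stat {k : ℕ} (l : ℝ) (c p : Fin k → ℝ) (μ : Measure ℝ)
    (hμ : μ = ∑ j, ENNReal.ofReal (p j) • Measure.map (fun x : ℝ => l * x + c j) μ)
    (g : ℝ → ℝ≥0∞) (hg : Measurable g) :
    ∫⁻ x, g x ∂μ = ∑ j, ENNReal.ofReal (p j) * ∫⁻ x, g (l * x + c j) ∂μ := by
  calc ∫⁻ x, g x ∂μ
      = ∫⁻ x, g x ∂(∑ j, ENNReal.ofReal (p j) • Measure.map (fun x : ℝ => l * x + c j) μ) :=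
        congrArg (fun m => lintegral m g) hμ
    _ = _ := by
        rw [lintegral_finsetSum_measure]
        refine Finset.sum_congr rfl fun j _ => ?_
        rw [lintegral_smul_measure, lintegral_map hg (by fun_prop), smul_eq_mul]

lemma aux_stat_set {k : ℕ} (l : ℝ) (c p : Fin k → ℝ) (μ : Measure ℝ)
    (hμ : μ = ∑ j, ENNReal.ofReal (p j) • Measure.map (fun x : ℝ => l * x + c j) μ)
    (S : Set ℝ) (hS : MeasurableSet S) :
    μ S = ∑ j, ENNReal.ofReal (p j) * μ ((fun x : ℝ => l * x + c j) ⁻¹' S) := by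
  have h := congrArg (fun m : Measure ℝ => m S) hμ
  simp only [Measure.finsetSum_apply, Measure.smul_apply, smul_eq_mul] at h
  rw [h]
  refine Finset.sum_congr rfl fun j _ => ?_
  rw [Measure.map_apply (by fun_prop) hS]

lemma aux_supp {k : ℕ} (l : ℝ) (hl0 : 0 < l) (hl1 : l < 1) (c p : Fin k → ℝ)
    (hp : ∀ j, 0 < p j) (hpsum : ∑ j, p j = 1)
    (μ : Measure ℝ) [IsProbabilityMeasure μ]
    (hμ : μ = ∑ j, ENNReal.ofReal (p j) • Measure.map (fun x : ℝ => l * x + c j) μ)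
    (a b : ℝ) (hab : a ≤ b)
    (hK : ∀ j, ∀ x ∈ Set.Icc a b, l * x + c j ∈ Set.Icc a b) (t : ℝ) (ht : 0 < t) :
    μ (Set.Icc (a - t) (b + t))ᶜ = 0 := by
  have hp1 : ∑ j, ENNReal.ofReal (p j) = 1 := by
    rw [← ENNReal.ofReal_sum_of_nonneg (fun j _ => (hp j).le), hpsum, ENNReal.ofReal_one]
  have hstep : ∀ r : ℝ, 0 < r → μ (Set.Icc (a - l * r) (b + l * r))ᶜ ≤
      μ (Set.Icc (a - r) (b + r))ᶜ := by
    intro r hr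
    rw [aux_stat_set l c p μ hμ _ measurableSet_Icc.compl]
    calc _ ≤ ∑ j, ENNReal.ofReal (p j) * μ (Set.Icc (a - r) (b + r))ᶜ := by
          gcongr with j
          intro x hx
          simp only [Set.mem_preimage, Set.mem_compl_iff, Set.mem_Icc] at hx ⊢
          contrapose! hx
          have h1 := (hK j a ⟨le_rfl, hab⟩).1
          have h2 := (hK j b ⟨hab, le_rfl⟩).2
          constructor <;> nlinarith
      _ = _ := by rw [← Finset.sum_mul, hp1, one_mul]
  have hit : ∀ n : ℕ, μ (Set.Icc (a - t) (b + t))ᶜ ≤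
      μ (Set.Icc (a - t / l ^ n) (b + t / l ^ n))ᶜ := by
    intro n
    induction n with
    | zero => simp
    | succ n ih =>
      refine ih.trans ?_
      have := hstep (t / l ^ (n + 1)) (by positivity)
      have e : l * (t / l ^ (n + 1)) = t / l ^ n := by
        rw [pow_succ]; field_simp
      rwa [e] at this
  have hinv : Filter.Tendsto (fun n : ℕ => t / l ^ n) Filter.atTop Filter.atTop := by
    have h1 : Filter.Tendsto (fun n : ℕ => (l⁻¹) ^ n) Filter.atTop Filter.atTop :=
      tendsto_pow_atTop_atTop_of_one_lt ((one_lt_inv₀ hl0).2 hl1)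
    have := h1.const_mul_atTop ht
    simpa [div_eq_mul_inv, inv_pow] using this
  have hanti : Antitone (fun n : ℕ => (Set.Icc (a - t / l ^ n) (b + t / l ^ n))ᶜ) := by
    intro m n hmn
    apply Set.compl_subset_compl.2
    have : t / l ^ m ≤ t / l ^ n := by
      apply div_le_div_of_nonneg_left ht.le (by positivity)
      exact pow_le_pow_of_le_one hl0.le hl1.le hmn
    exact Set.Icc_subset_Icc (by linarith) (by linarith)
  have hlim := tendsto_measure_iInter_atTop (μ := μ)
    (fun n => (measurableSet_Icc.compl).nullMeasurableSet) hanti ⟨0, measure_ne_top _ _⟩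
  have hempty : (⋂ n : ℕ, (Set.Icc (a - t / l ^ n) (b + t / l ^ n))ᶜ) = ∅ := by
    rw [Set.eq_empty_iff_forall_notMem]
    intro x hx
    obtain ⟨n, hn⟩ := (hinv.eventually_ge_atTop (max (a - x) (x - b))).exists
    have := Set.mem_iInter.1 hx n
    apply this
    have h1 := (le_max_left _ _).trans hn
    have h2 := (le_max_right _ _).trans hn
    constructor <;> linarith
  rw [hempty, measure_empty] at hlim
  exact le_antisymm (ge_of_tendsto' hlim hit) bot_le

/-- Correlation function of `μ` at scale `r` and displacement `x`. -/
noncomputable def corrPhi (μ : Measure ℝ) (r x : ℝ) : ℝ≥0∞ :=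
  ∫⁻ y, μ (Metric.closedBall (y - x) r) ∂μ

lemma aux_ball_meas (μ : Measure ℝ) [IsProbabilityMeasure μ] (r x : ℝ) :
    Measurable (fun y => μ (Metric.closedBall (y - x) r)) := by
  have hc : IsClosed {q : ℝ × ℝ | dist q.2 (q.1 - x) ≤ r} :=
    isClosed_le (by fun_prop) continuous_const
  exact measurable_measure_prodMk_left hc.measurableSet

lemma aux_corr_scale {k : ℕ} (l : ℝ) (hl0 : 0 < l) (c p : Fin k → ℝ)
    (μ : Measure ℝ) [IsProbabilityMeasure μ]
    (hμ : μ = ∑ j, ENNReal.ofReal (p j) • Measure.map (fun x : ℝ => l * x + c j) μ)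
    (r x : ℝ) :
    corrPhi μ (l * r) x = ∑ i, ∑ j, ENNReal.ofReal (p i) * (ENNReal.ofReal (p j) *
      corrPhi μ r ((x - c i + c j) / l)) := by
  unfold corrPhi
  rw [aux_stat l c p μ hμ _ (aux_ball_meas μ _ _)]
  refine Finset.sum_congr rfl fun i _ => ?_
  rw [← Finset.mul_sum]
  congr 1
  have : ∀ y, μ (Metric.closedBall (l * y + c i - x) (l * r)) =
      ∑ j, ENNReal.ofReal (p j) * μ (Metric.closedBall (y - (x - c i + c j) / l) r) := by
    intro y
    rw [aux_stat_set l c p μ hμ _ measurableSet_closedBall]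
    refine Finset.sum_congr rfl fun j _ => ?_
    congr 2
    ext z
    simp only [Set.mem_preimage, Metric.mem_closedBall, Real.dist_eq]
    have e : l * z + c j - (l * y + c i - x) = l * (z - (y - (x - c i + c j) / l)) := by
      field_simp; ring
    rw [e, abs_mul, abs_of_pos hl0]
    exact mul_le_mul_iff_right₀ hl0
  simp_rw [this]
  rw [lintegral_finsetSum _ (fun j _ => (aux_ball_meas μ _ _).const_mul _)]
  refine Finset.sum_congr rfl fun j _ => ?_
  rw [lintegral_const_mul _ (aux_ball_meas μ _ _)]

lemma aux_energy (μ : Measure ℝ) [IsProbabilityMeasure μ] (l : ℝ) (hl0 : 0 < l) (hl1 : l < 1)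
    (d : ℝ) (hd : 0 < d) (C α : ℝ)
    (hφ : ∀ n : ℕ, corrPhi μ (l ^ n * d) 0 ≤ ENNReal.ofReal ((l ^ α) ^ n * C))
    (s : ℝ) (hs : 0 < s) (hsα : s < α) :
    (∫⁻ x, ∫⁻ y, (ENNReal.ofReal |x - y|) ^ (-s) ∂μ ∂μ) ≠ ⊤ := by
  set w : ℕ → ℝ≥0∞ := fun n => ENNReal.ofReal ((l ^ (n + 1) * d) ^ (-s)) with hw
  have hpt : ∀ x y : ℝ, (ENNReal.ofReal |x - y|) ^ (-s) ≤ ENNReal.ofReal (d ^ (-s)) +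
      ∑' n, w n * (Metric.closedBall x (l ^ n * d)).indicator 1 y := by
    intro x y
    have hmem : ∀ r, y ∈ Metric.closedBall x r ↔ |x - y| ≤ r := by
      intro r; rw [Metric.mem_closedBall, dist_comm, Real.dist_eq]
    have hanti : ∀ r q : ℝ, 0 < r → r ≤ q → q ^ (-s) ≤ r ^ (-s) := fun r q hr hrq =>
      Real.rpow_le_rpow_of_nonpos hr hrq (by linarith)
    by_cases h0 : |x - y| = 0
    · have : ∑' n, w n * (Metric.closedBall x (l ^ n * d)).indicator 1 y = ⊤ := by
        rw [eq_top_iff, ← ENNReal.tsum_const_eq_top_of_ne_zero (α := ℕ)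
          (c := ENNReal.ofReal (d ^ (-s)))
          (by simpa using Real.rpow_pos_of_pos hd _)]
        refine ENNReal.tsum_le_tsum fun n => ?_
        rw [Set.indicator_of_mem ((hmem _).2 (by rw [h0]; positivity))]
        simp only [Pi.one_apply, mul_one, hw]
        apply ENNReal.ofReal_le_ofReal
        apply hanti _ _ (by positivity)
        exact mul_le_of_le_one_left hd.le (pow_le_one₀ hl0.le hl1.le)
      rw [this]; simp
    have hpos : 0 < |x - y| := lt_of_le_of_ne (abs_nonneg _) (Ne.symm h0)
    rw [ENNReal.ofReal_rpow_of_pos hpos]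
    rcases le_or_gt d |x - y| with h | h
    · exact (ENNReal.ofReal_le_ofReal (hanti _ _ hd h)).trans le_self_add
    · obtain ⟨n, hn1, hn2⟩ := exists_nat_pow_near_of_lt_one (x := |x - y| / d) (y := l)
        (by positivity) ((div_le_one hd).2 h.le) hl0 hl1
      rw [lt_div_iff₀ hd] at hn1
      rw [div_le_iff₀ hd] at hn2
      refine le_trans ?_ le_add_self
      refine le_trans ?_ (ENNReal.le_tsum n)
      rw [Set.indicator_of_mem ((hmem _).2 hn2)]
      simp only [Pi.one_apply, mul_one, hw]
      exact ENNReal.ofReal_le_ofReal (hanti _ _ (by positivity) hn1.le)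
  have hb0 : ∀ r, Measurable (fun y => μ (Metric.closedBall y r)) := fun r => by
    simpa using aux_ball_meas μ r 0
  have hinner : ∀ x, ∫⁻ y, (ENNReal.ofReal |x - y|) ^ (-s) ∂μ ≤ ENNReal.ofReal (d ^ (-s)) +
      ∑' n, w n * μ (Metric.closedBall x (l ^ n * d)) := by
    intro x
    refine (lintegral_mono (hpt x)).trans (le_of_eq ?_)
    have hm : ∀ n, Measurable ((Metric.closedBall x (l ^ n * d)).indicator (1 : ℝ → ℝ≥0∞)) :=
      fun n => measurable_one.indicator measurableSet_closedBall
    rw [lintegral_add_left measurable_const, lintegral_const, measure_univ, mul_one,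
      lintegral_tsum (fun n => ((hm n).const_mul _).aemeasurable)]
    congr 2
    ext n
    rw [lintegral_const_mul _ (hm n), lintegral_indicator_one measurableSet_closedBall]
  have htot : (∫⁻ x, ∫⁻ y, (ENNReal.ofReal |x - y|) ^ (-s) ∂μ ∂μ) ≤ ENNReal.ofReal (d ^ (-s)) +
      ∑' n, w n * corrPhi μ (l ^ n * d) 0 := by
    refine (lintegral_mono hinner).trans (le_of_eq ?_)
    rw [lintegral_add_left measurable_const, lintegral_const, measure_univ, mul_one,
      lintegral_tsum (fun n => ((hb0 _).const_mul _).aemeasurable)]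
    congr 2
    ext n
    rw [lintegral_const_mul _ (hb0 _)]
    simp [corrPhi]
  refine ne_top_of_le_ne_top ?_ htot
  refine ENNReal.add_ne_top.2 ⟨ENNReal.ofReal_ne_top, ?_⟩
  have hterm : ∀ n : ℕ, w n * corrPhi μ (l ^ n * d) 0 ≤
      ENNReal.ofReal ((l ^ (α - s)) ^ n * ((l * d) ^ (-s) * C)) := by
    intro n
    refine (mul_le_mul_right (hφ n) _).trans (le_of_eq ?_)
    rw [hw]
    simp only
    rw [← ENNReal.ofReal_mul (by positivity)]
    congr 1
    have e1 : (l ^ (n + 1) * d) ^ (-s) = (l ^ (-s)) ^ n * (l * d) ^ (-s) := by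
      rw [pow_succ, mul_assoc, Real.mul_rpow (by positivity) (by positivity), Real.rpow_pow_comm hl0.le]
    have e2 : l ^ (α - s) = l ^ (-s) * l ^ α := by
      rw [← Real.rpow_add hl0]; ring_nf
    rw [e1, e2, mul_pow]; ring
  have hsum : Summable (fun n : ℕ => (l ^ (α - s)) ^ n * ((l * d) ^ (-s) * C)) := by
    apply Summable.mul_right
    exact summable_geometric_of_lt_one (by positivity)
      (Real.rpow_lt_one hl0.le hl1 (by linarith))
  exact ne_top_of_le_ne_top hsum.tsum_ofReal_ne_top (ENNReal.tsum_le_tsum hterm)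

/-- Theorem (certificate for the correlation dimension): if a positive test function `ψ`
supported on an admissible interval `J` is strictly decreased by the symmetric diffusion
operator `D^{(2)}_{α,S}`, then the energy `I(μ, α')` is finite for all `0 < α' < α`, and
every Borel set of full `μ`-measure has Hausdorff dimension at least `α`. -/
theorem certificate_D2 (k : ℕ) (l : ℝ) (hl0 : 0 < l) (hl1 : l < 1)
    (c : Fin k → ℝ) (p : Fin k → ℝ) (hp : ∀ j, 0 < p j) (hpsum : ∑ j, p j = 1)
    (μ : Measure ℝ) [IsProbabilityMeasure μ]
    (hμ : μ = ∑ j, ENNReal.ofReal (p j) • Measure.map (fun x : ℝ => l * x + c j) μ)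
    -- a compact interval `K = [a,b]` invariant under all the maps
    (a b : ℝ) (hab : a ≤ b)
    (hK : ∀ j, ∀ x ∈ Set.Icc a b, l * x + c j ∈ Set.Icc a b)
    -- an admissible compact interval `J = [u,v]` whose interior contains `K - K`
    (u v : ℝ) (huv : u ≤ v)
    (hJ : {z : ℝ | ∃ x ∈ Set.Icc a b, ∃ y ∈ Set.Icc a b, z = x - y}
            ⊆ interior (Set.Icc u v))
    (θ : ℝ) (hθ : 0 < θ)
    (α : ℝ) (hα0 : 0 < α) (hα1 : α < 1)
    (ψ : ℝ → ℝ)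
    (hψ0 : ∀ x ∉ Set.Icc u v, ψ x = 0)
    (hψb : ∀ x ∈ Set.Icc u v, θ ≤ ψ x ∧ ψ x ≤ θ⁻¹)
    (hcontr : ∀ x ∈ Set.Icc u v,
      l ^ (-α) * ∑ i, ∑ j, p i * p j * ψ ((x - c i + c j) / l) < ψ x) :
    (∀ α' : ℝ, 0 < α' → α' < α →
        (∫⁻ x, ∫⁻ y, (ENNReal.ofReal |x - y|) ^ (-α') ∂μ ∂μ) ≠ ⊤) ∧
    ∀ X : Set ℝ, MeasurableSet X → μ X = 1 → ENNReal.ofReal α ≤ dimH X := by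

  have hψnn : ∀ x, 0 ≤ ψ x := by
    intro x
    by_cases hx : x ∈ Set.Icc u v
    · exact hθ.le.trans (hψb x hx).1
    · exact (hψ0 x hx).ge
  rw [interior_Icc] at hJ
  have hu : u < a - b :=
    (hJ ⟨a, ⟨le_rfl, hab⟩, b, ⟨hab, le_rfl⟩, rfl⟩ : a - b ∈ Set.Ioo u v).1
  have hv : b - a < v :=
    (hJ ⟨b, ⟨hab, le_rfl⟩, a, ⟨le_rfl, hab⟩, rfl⟩ : b - a ∈ Set.Ioo u v).2
  obtain ⟨d, hd, hd1, hd2⟩ : ∃ d : ℝ, 0 < d ∧ u + 4 * d ≤ a - b ∧ b - a + 4 * d ≤ v := by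
    refine ⟨min (a - b - u) (v - (b - a)) / 4, ?_, ?_, ?_⟩
    · have := lt_min (sub_pos.2 hu) (sub_pos.2 hv)
      positivity
    · linarith [min_le_left (a - b - u) (v - (b - a))]
    · linarith [min_le_right (a - b - u) (v - (b - a))]
  have hsupp := aux_supp l hl0 hl1 c p hp hpsum μ hμ a b hab hK d hd
  have hzero : ∀ r ≤ d, ∀ x ∉ Set.Icc u v, corrPhi μ r x = 0 := by
    intro r hr x hx
    unfold corrPhi
    rw [lintegral_eq_zero_iff (aux_ball_meas μ r x)]
    have hae : ∀ᵐ y ∂μ, y ∈ Set.Icc (a - d) (b + d) := by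
      rw [ae_iff]; exact hsupp
    filter_upwards [hae] with y hy
    refine measure_mono_null ?_ hsupp
    intro z hz hz'
    apply hx
    rw [Metric.mem_closedBall, Real.dist_eq, abs_le] at hz
    have h1 := hy.1
    have h2 := hy.2
    have h3 := hz'.1
    have h4 := hz'.2
    constructor <;> linarith [hz.1, hz.2]
  have hlα : 0 < l ^ α := Real.rpow_pos_of_pos hl0 α
  have hind : ∀ n : ℕ, ∀ x, corrPhi μ (l ^ n * d) x ≤
      ENNReal.ofReal ((l ^ α) ^ n * (θ⁻¹ * ψ x)) := by
    intro n
    induction n with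
    | zero =>
      intro x
      by_cases hx : x ∈ Set.Icc u v
      · have h1 : corrPhi μ (l ^ 0 * d) x ≤ 1 := by
          unfold corrPhi
          calc _ ≤ ∫⁻ _, 1 ∂μ := lintegral_mono fun y => prob_le_one
            _ = 1 := by simp
        refine h1.trans ?_
        rw [← ENNReal.ofReal_one]
        apply ENNReal.ofReal_le_ofReal
        rw [pow_zero, one_mul, ← div_eq_inv_mul, one_le_div hθ]
        exact (hψb x hx).1
      · rw [hzero _ (by simp) x hx]; exact bot_le
    | succ n ih =>
      intro x
      by_cases hx : x ∈ Set.Icc u v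
      · rw [show l ^ (n + 1) * d = l * (l ^ n * d) by ring, aux_corr_scale l hl0 c p μ hμ]
        calc _ ≤ ∑ i, ∑ j, ENNReal.ofReal (p i) * (ENNReal.ofReal (p j) *
              ENNReal.ofReal ((l ^ α) ^ n * (θ⁻¹ * ψ ((x - c i + c j) / l)))) := by
              gcongr with i _ j _
              exact ih _
          _ = ENNReal.ofReal (∑ i, ∑ j, p i * (p j *
              ((l ^ α) ^ n * (θ⁻¹ * ψ ((x - c i + c j) / l))))) := by
              have hnn : ∀ i j, 0 ≤ p i * (p j *
                  ((l ^ α) ^ n * (θ⁻¹ * ψ ((x - c i + c j) / l)))) := by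
                intro i j
                have := hp i
                have := hp j
                have := hψnn ((x - c i + c j) / l)
                positivity
              rw [ENNReal.ofReal_sum_of_nonneg
                (fun i _ => Finset.sum_nonneg fun j _ => hnn i j)]
              refine Finset.sum_congr rfl fun i _ => ?_
              rw [ENNReal.ofReal_sum_of_nonneg (fun j _ => hnn i j)]
              refine Finset.sum_congr rfl fun j _ => ?_
              rw [ENNReal.ofReal_mul (hp i).le, ENNReal.ofReal_mul (hp j).le]
          _ ≤ _ := by
              apply ENNReal.ofReal_le_ofReal
              have e : (∑ i, ∑ j, p i * (p j *
                  ((l ^ α) ^ n * (θ⁻¹ * ψ ((x - c i + c j) / l))))) =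
                  (l ^ α) ^ (n + 1) * θ⁻¹ *
                  (l ^ (-α) * ∑ i, ∑ j, p i * p j * ψ ((x - c i + c j) / l)) := by
                rw [Real.rpow_neg hl0.le, pow_succ]
                have : (l ^ α) ^ n * l ^ α * θ⁻¹ *
                    ((l ^ α)⁻¹ * ∑ i, ∑ j, p i * p j * ψ ((x - c i + c j) / l)) =
                    (l ^ α) ^ n * θ⁻¹ * ∑ i, ∑ j, p i * p j * ψ ((x - c i + c j) / l) := by
                  field_simp
                rw [this, Finset.mul_sum]
                refine Finset.sum_congr rfl fun i _ => ?_
                rw [Finset.mul_sum]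
                refine Finset.sum_congr rfl fun j _ => ?_
                ring
              rw [e, ← mul_assoc _ θ⁻¹ (ψ x)]
              exact mul_le_mul_of_nonneg_left (hcontr x hx).le (by positivity)
      · rw [hzero _ _ x hx]
        · exact bot_le
        · exact mul_le_of_le_one_left hd.le (pow_le_one₀ hl0.le hl1.le)
  have hen : ∀ α' : ℝ, 0 < α' → α' < α →
      (∫⁻ x, ∫⁻ y, (ENNReal.ofReal |x - y|) ^ (-α') ∂μ ∂μ) ≠ ⊤ := fun α' h1 h2 =>
    aux_energy μ l hl0 hl1 d hd (θ⁻¹ * ψ 0) α (fun n => hind n 0) α' h1 h2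
  refine ⟨hen, fun X hX hX1 => ?_⟩
  have hcont : Filter.Tendsto (fun s : ℝ => ENNReal.ofReal s) (nhdsWithin α (Set.Iio α))
      (nhds (ENNReal.ofReal α)) :=
    (ENNReal.continuous_ofReal.tendsto α).mono_left nhdsWithin_le_nhds
  refine le_of_tendsto hcont ?_
  filter_upwards [Ioo_mem_nhdsLT hα0] with s hs
  exact aux_dim μ s hs.1 (hen s hs.1 hs.2) X hX hX1
end

section
/- Let S(λ, c̄, p̄) be an iterated function scheme of similarities f_j(x) = λx + c_j with probability vector p̄ (p_j > 0), and let μ be its stationary measure. If 0 < α < 1 and the energy ∬ |x − y|^{-α} dμ(x) dμ(y) is finite, then there exist a compact interval K with f_j(K) ⊆ K for all j, a compact interval J whose interior contains {x − y : x, y ∈ K}, a constant θ > 0, and a piecewise constant function ψ : ℝ → ℝ (a finite linear combination of indicator functions of intervals) vanishing outside J with θ ≤ ψ(x) ≤ θ^{-1} for all x ∈ J, such that for every x ∈ J one has λ^{-α} ∑_{i,j} p_i p_j ψ((x − c_i + c_j)/λ) < ψ(x). -/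
open MeasureTheory
open scoped ENNReal


/-- indicator of `[-r,r]` -/
noncomputable def FF (r : ℝ) (t : ℝ) : ℝ≥0∞ := (Set.Icc (-r) r).indicator 1 t

@[fun_prop]
theorem FF_meas (r : ℝ) : Measurable (FF r) :=
  (measurable_one).indicator measurableSet_Icc

theorem FF_of_le {r t : ℝ} (h : |t| ≤ r) : FF r t = 1 := by
  have : t ∈ Set.Icc (-r) r := abs_le.mp h
  simp [FF, this]

theorem FF_of_lt {r t : ℝ} (h : r < |t|) : FF r t = 0 := by
  have : t ∉ Set.Icc (-r) r := fun h' => absurd (abs_le.mpr h') (not_le.mpr h)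
  simp only [FF, Set.indicator_of_notMem this]

theorem FF_scale {l r t : ℝ} (hl : 0 < l) : FF (l * r) t = FF r (t / l) := by
  have h1 : |t / l| = |t| / l := by rw [abs_div, abs_of_pos hl]
  rcases le_or_gt |t| (l * r) with h | h
  · rw [FF_of_le h, FF_of_le]
    rw [h1, div_le_iff₀ hl]; linarith
  · rw [FF_of_lt h, FF_of_lt]
    rw [h1, lt_div_iff₀ hl]; linarith

/-- mass of the ball of radius r around x for the difference measure -/
noncomputable def GG (μ : Measure ℝ) (r x : ℝ) : ℝ≥0∞ := ∫⁻ y, ∫⁻ z, FF r (x - y + z) ∂μ ∂μ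

theorem stat_lintegral {k : ℕ} {l : ℝ} {c p : Fin k → ℝ} {μ : Measure ℝ}
    (hμ : μ = ∑ j, ENNReal.ofReal (p j) • Measure.map (fun x : ℝ => l * x + c j) μ)
    (f : ℝ → ℝ≥0∞) (hf : Measurable f) :
    ∫⁻ x, f x ∂μ = ∑ j, ENNReal.ofReal (p j) * ∫⁻ x, f (l * x + c j) ∂μ := by
  conv_lhs => rw [hμ]
  rw [lintegral_finsetSum_measure]
  refine Finset.sum_congr rfl fun j _ => ?_
  rw [lintegral_smul_measure, lintegral_map hf (by fun_prop)]
  rfl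

theorem FF_meas2 (r x : ℝ) : Measurable (fun q : ℝ × ℝ => FF r (x - q.1 + q.2)) :=
  (FF_meas r).comp (by fun_prop)

theorem GG_stat {k : ℕ} {l : ℝ} (hl : 0 < l) {c p : Fin k → ℝ} {μ : Measure ℝ}
    [IsProbabilityMeasure μ]
    (hμ : μ = ∑ j, ENNReal.ofReal (p j) • Measure.map (fun x : ℝ => l * x + c j) μ)
    (r x : ℝ) :
    GG μ (l * r) x = ∑ i, ∑ j, ENNReal.ofReal (p i) * ENNReal.ofReal (p j) *
      GG μ r ((x - c i + c j) / l) := by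
  unfold GG
  rw [stat_lintegral hμ _ ((FF_meas2 (l * r) x).lintegral_prod_right')]
  refine Finset.sum_congr rfl fun i _ => ?_
  have h1 : ∀ y, ∫⁻ z, FF (l * r) (x - (l * y + c i) + z) ∂μ =
      ∑ j, ENNReal.ofReal (p j) * ∫⁻ z, FF r ((x - c i + c j) / l - y + z) ∂μ := by
    intro y
    rw [stat_lintegral hμ _ (by fun_prop)]
    refine Finset.sum_congr rfl fun j _ => ?_
    congr 1
    refine lintegral_congr fun z => ?_
    rw [FF_scale hl]
    congr 1
    field_simp
    ring
  simp_rw [h1]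
  rw [lintegral_finsetSum]
  · rw [Finset.mul_sum]
    refine Finset.sum_congr rfl fun j _ => ?_
    rw [lintegral_const_mul, mul_assoc]
    exact (FF_meas2 r _).lintegral_prod_right'
  · intro j _
    exact ((FF_meas2 r _).lintegral_prod_right').const_mul _

theorem vol_lower {r y w : ℝ} :
    ENNReal.ofReal r * FF r (w - y) ≤ ∫⁻ t, FF r (t - y) * FF r (t - w) := by
  rcases le_or_gt |w - y| r with h | h
  · rw [FF_of_le h, mul_one]
    have h0 := abs_le.mp h
    calc ENNReal.ofReal r ≤ volume (Set.Icc (max y w - r) (min y w + r)) := by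
          rw [Real.volume_Icc]
          apply ENNReal.ofReal_le_ofReal
          rcases le_total y w with h' | h'
          · rw [max_eq_right h', min_eq_left h']; linarith
          · rw [max_eq_left h', min_eq_right h']; linarith
      _ = ∫⁻ t, (Set.Icc (max y w - r) (min y w + r)).indicator 1 t := by
          rw [lintegral_indicator_one measurableSet_Icc]
      _ ≤ _ := by
          refine lintegral_mono fun t => ?_
          apply Set.indicator_le fun t ht => ?_
          have a1 := le_max_left y w
          have a2 := le_max_right y w
          have a3 := min_le_left y w
          have a4 := min_le_right y w
          have := ht.1
          have := ht.2
          rw [FF_of_le (abs_le.mpr ⟨by linarith, by linarith⟩),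
            FF_of_le (abs_le.mpr ⟨by linarith, by linarith⟩)]
          simp
  · rw [FF_of_lt h]; simp

theorem FF_int (r y : ℝ) : ∫⁻ t, FF r (t - y) = ENNReal.ofReal (2 * r) := by
  rw [lintegral_sub_right_eq_self (fun t => FF r t) y]
  unfold FF
  rw [lintegral_indicator_one measurableSet_Icc, Real.volume_Icc]
  congr 1; ring

theorem vol_upper {r y z : ℝ} :
    ∫⁻ t, FF r (t - y) * FF r (t - z) ≤ ENNReal.ofReal (2 * r) * FF (2 * r) (0 - y + z) := by
  calc _ ≤ ∫⁻ t, FF r (t - y) * FF (2 * r) (0 - y + z) := by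
        refine lintegral_mono fun t => ?_
        rcases le_or_gt |t - y| r with h | h
        · rcases le_or_gt |t - z| r with h' | h'
          · rw [FF_of_le h, FF_of_le h', FF_of_le]
            have := abs_le.mp h
            have := abs_le.mp h'
            exact abs_le.mpr ⟨by linarith, by linarith⟩
          · simp [FF_of_lt h']
        · simp [FF_of_lt h]
    _ = _ := by
        rw [lintegral_mul_const _ (by fun_prop), FF_int]

theorem triple {μ : Measure ℝ} [IsProbabilityMeasure μ] (r x : ℝ) :
    ∫⁻ y, ∫⁻ z, (∫⁻ t, FF r (t - y) * FF r (t - (z + x))) ∂μ ∂μ =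
    ∫⁻ t, (∫⁻ y, FF r (t - y) ∂μ) * (∫⁻ z, FF r (t - x - z) ∂μ) := by
  have m3 : Measurable (fun q : ℝ × ℝ × ℝ => FF r (q.2.2 - q.1) * FF r (q.2.2 - (q.2.1 + x))) :=
    ((FF_meas r).comp (by fun_prop)).mul ((FF_meas r).comp (by fun_prop))
  have h1 : ∀ y, ∫⁻ z, (∫⁻ t, FF r (t - y) * FF r (t - (z + x))) ∂μ =
      ∫⁻ t, FF r (t - y) * (∫⁻ z, FF r (t - x - z) ∂μ) := by
    intro y
    rw [lintegral_lintegral_swap]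
    · refine lintegral_congr fun t => ?_
      rw [lintegral_const_mul _ (by fun_prop)]
      congr 1
      refine lintegral_congr fun z => ?_
      congr 1; ring
    · exact (m3.comp (by fun_prop : Measurable (fun q : ℝ × ℝ => (y, q)))).aemeasurable
  simp_rw [h1]
  have mg : Measurable (fun t => ∫⁻ z, FF r (t - x - z) ∂μ) := by
    have : Measurable (fun q : ℝ × ℝ => FF r (q.1 - x - q.2)) :=
      (FF_meas r).comp (by fun_prop)
    exact this.lintegral_prod_right'
  rw [lintegral_lintegral_swap]
  · refine lintegral_congr fun t => ?_
    rw [lintegral_mul_const _ (by fun_prop)]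
  · apply Measurable.aemeasurable
    exact ((FF_meas r).comp (by fun_prop : Measurable (fun q : ℝ × ℝ => q.2 - q.1))).mul
      (mg.comp measurable_snd)

theorem GG_shift {μ : Measure ℝ} [IsProbabilityMeasure μ] {r : ℝ} (hr : 0 < r) (x : ℝ) :
    GG μ r x ≤ 4 * GG μ (2 * r) 0 := by
  set g : ℝ → ℝ≥0∞ := fun t => ∫⁻ y, FF r (t - y) ∂μ with hg
  have mg : Measurable g := by
    have : Measurable (fun q : ℝ × ℝ => FF r (q.1 - q.2)) :=
      (FF_meas r).comp (by fun_prop)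
    exact this.lintegral_prod_right'
  have A : ENNReal.ofReal r * GG μ r x ≤ ∫⁻ t, g t * g (t - x) := by
    have := triple (μ := μ) r x
    rw [hg]
    simp only
    rw [← this]
    unfold GG
    rw [← lintegral_const_mul _ ((FF_meas2 r x).lintegral_prod_right')]
    refine lintegral_mono fun y => ?_
    simp only
    rw [← lintegral_const_mul _ (by fun_prop)]
    refine lintegral_mono fun z => ?_
    have := vol_lower (r := r) (y := y) (w := z + x)
    rwa [show z + x - y = x - y + z by ring] at this
  have B : ∫⁻ t, g t * g t ≤ ENNReal.ofReal (2 * r) * GG μ (2 * r) 0 := by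
    have := triple (μ := μ) r 0
    simp only [sub_zero, add_zero] at this
    rw [hg]
    simp only
    rw [← this]
    unfold GG
    rw [← lintegral_const_mul _ ((FF_meas2 _ _).lintegral_prod_right')]
    refine lintegral_mono fun y => ?_
    simp only
    rw [← lintegral_const_mul _ (by fun_prop)]
    exact lintegral_mono fun z => vol_upper
  have C : ∫⁻ t, g t * g (t - x) ≤ 2 * ∫⁻ t, g t * g t := by
    calc _ ≤ ∫⁻ t, (g t * g t + g (t - x) * g (t - x)) := by
          refine lintegral_mono fun t => ?_
          rcases le_total (g t) (g (t - x)) with h | h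
          · exact (mul_le_mul_left h _).trans le_add_self
          · exact (mul_le_mul_right h _).trans le_self_add
      _ = _ := by
          rw [lintegral_add_left (by fun_prop),
            lintegral_sub_right_eq_self (fun t => g t * g t) x, two_mul]
  have D : ENNReal.ofReal r * GG μ r x ≤ ENNReal.ofReal r * (4 * GG μ (2 * r) 0) := by
    refine A.trans (C.trans ((mul_le_mul_right B 2).trans (le_of_eq ?_)))
    rw [ENNReal.ofReal_mul (by norm_num)]
    simp only [ENNReal.ofReal_ofNat]
    ring
  have h0 : ENNReal.ofReal r ≠ 0 := by simpa using hr
  exact (ENNReal.mul_le_mul_iff_right h0 ENNReal.ofReal_ne_top).mp D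

theorem GG_energy {μ : Measure ℝ} [IsProbabilityMeasure μ] {α : ℝ} (hα : 0 < α)
    (hE : (∫⁻ x, ∫⁻ y, (ENNReal.ofReal |x - y|) ^ (-α) ∂μ ∂μ) ≠ ⊤)
    {s : ℕ → ℝ} (hs : ∀ n, 0 < s n) (hs0 : Filter.Tendsto s Filter.atTop (nhds 0)) :
    Filter.Tendsto (fun n => ENNReal.ofReal (s n) ^ (-α) * GG μ (s n) 0) Filter.atTop (nhds 0) := by
  set κ : ℝ × ℝ → ℝ≥0∞ := fun q => (ENNReal.ofReal |q.1 - q.2|) ^ (-α) with hκ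
  have mκ : Measurable κ := by
    have : Measurable (fun q : ℝ × ℝ => ENNReal.ofReal |q.1 - q.2|) := by fun_prop
    exact this.pow_const _
  have hE' : ∫⁻ q, κ q ∂(μ.prod μ) ≠ ⊤ := by
    rw [lintegral_prod _ mκ.aemeasurable]; exact hE
  set S : ℕ → Set (ℝ × ℝ) := fun n => {q | |q.1 - q.2| ≤ s n} with hS
  have mS : ∀ n, MeasurableSet (S n) := fun n =>
    measurableSet_le (by fun_prop) measurable_const
  have hG : ∀ n, GG μ (s n) 0 = (μ.prod μ) (S n) := by
    intro n
    rw [← lintegral_indicator_one (mS n), lintegral_prod _ (by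
      exact (measurable_one.indicator (mS n)).aemeasurable)]
    unfold GG
    refine lintegral_congr fun y => lintegral_congr fun z => ?_
    have e : |0 - y + z| = |y - z| := by rw [← abs_neg]; congr 1; ring
    rcases le_or_gt |y - z| (s n) with h | h
    · rw [FF_of_le (e ▸ h), Set.indicator_of_mem (by exact h)]; rfl
    · rw [FF_of_lt (e ▸ h), Set.indicator_of_notMem (by exact not_le.mpr h)]
  have hle : ∀ n, ENNReal.ofReal (s n) ^ (-α) * GG μ (s n) 0 ≤ ∫⁻ q in S n, κ q ∂(μ.prod μ) := by
    intro n
    rw [hG, ← setLIntegral_const]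
    refine setLIntegral_mono mκ fun q hq => ?_
    simp only [hκ]
    rw [ENNReal.rpow_neg, ENNReal.rpow_neg]
    exact ENNReal.inv_le_inv.mpr (ENNReal.rpow_le_rpow (ENNReal.ofReal_le_ofReal hq) hα.le)
  have hS0 : Filter.Tendsto (fun n => (μ.prod μ) (S n)) Filter.atTop (nhds 0) := by
    have hle2 : ∀ n, (μ.prod μ) (S n) ≤ ENNReal.ofReal (s n) ^ α * ∫⁻ q, κ q ∂(μ.prod μ) := by
      intro n
      have h1 := (hle n).trans (setLIntegral_le_lintegral _ _)
      rw [hG] at h1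
      have a0 : ENNReal.ofReal (s n) ≠ 0 := by simpa using hs n
      calc (μ.prod μ) (S n) = ENNReal.ofReal (s n) ^ α *
            (ENNReal.ofReal (s n) ^ (-α) * (μ.prod μ) (S n)) := by
            rw [← mul_assoc, ← ENNReal.rpow_add _ _ a0 ENNReal.ofReal_ne_top]
            simp
        _ ≤ _ := mul_le_mul_right h1 _
    have h2 : Filter.Tendsto (fun n => ENNReal.ofReal (s n) ^ α * ∫⁻ q, κ q ∂(μ.prod μ))
        Filter.atTop (nhds 0) := by
      have t1 : Filter.Tendsto (fun n => ENNReal.ofReal (s n)) Filter.atTop (nhds 0) := by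
        simpa using ENNReal.tendsto_ofReal hs0
      have t2 := (ENNReal.continuous_rpow_const (y := α)).tendsto 0 |>.comp t1
      rw [ENNReal.zero_rpow_of_pos hα] at t2
      have t3 := ENNReal.Tendsto.mul_const (b := ∫⁻ q, κ q ∂(μ.prod μ)) t2 (Or.inr hE')
      simpa using t3
    exact tendsto_of_tendsto_of_tendsto_of_le_of_le tendsto_const_nhds h2
      (fun _ => zero_le) hle2
  exact tendsto_of_tendsto_of_tendsto_of_le_of_le tendsto_const_nhds
    (tendsto_setLIntegral_zero hE' hS0) (fun _ => zero_le) hle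

theorem GG_lower {μ : Measure ℝ} [IsProbabilityMeasure μ] (B : ℝ) (hB : 0 ≤ B) :
    ∃ r : ℝ, 0 < r ∧ ∃ m : ℝ≥0∞, m ≠ 0 ∧ m ≠ ⊤ ∧ ∀ x, |x| ≤ B → m ≤ GG μ r x := by
  obtain ⟨n, hn⟩ : ∃ n : ℕ, 0 < μ (Set.Icc (-(n : ℝ)) n) := by
    apply exists_measure_pos_of_not_measure_iUnion_null
    have : (⋃ n : ℕ, Set.Icc (-(n : ℝ)) n) = Set.univ := by
      ext x
      simp only [Set.mem_iUnion, Set.mem_univ, iff_true]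
      obtain ⟨n, hn⟩ := exists_nat_ge |x|
      exact ⟨n, abs_le.mp hn⟩
    rw [this]; simp
  refine ⟨B + 2 * n + 1, by positivity, μ (Set.Icc (-(n : ℝ)) n) * μ (Set.Icc (-(n : ℝ)) n),
    by simp [hn.ne'], ENNReal.mul_ne_top (measure_ne_top _ _) (measure_ne_top _ _), ?_⟩
  intro x hx
  unfold GG
  rw [← setLIntegral_const, ← lintegral_indicator measurableSet_Icc]
  refine lintegral_mono fun y => ?_
  apply Set.indicator_le fun y hy => ?_
  rw [← lintegral_indicator_one measurableSet_Icc]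
  refine lintegral_mono fun z => ?_
  apply Set.indicator_le fun z hz => ?_
  have := abs_le.mp hx
  rw [FF_of_le (abs_le.mpr ⟨by linarith [hy.1, hy.2, hz.1, hz.2], by linarith [hy.1, hy.2, hz.1, hz.2]⟩)]
  simp

/-- The diffusion operator. -/
noncomputable def DD {k : ℕ} (l α : ℝ) (c p : Fin k → ℝ) (ψ : ℝ → ℝ) : ℝ → ℝ :=
  fun x => l ^ (-α) * ∑ i, ∑ j, p i * p j * ψ ((x - c i + c j) / l)

/-- Piecewise constant functions. -/
noncomputable def PCset : Set (ℝ → ℝ) :=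
  {f | ∃ I : Set ℝ, I.OrdConnected ∧ f = I.indicator (fun _ => 1)}

theorem PC_comp {l : ℝ} (hl : 0 < l) (d : ℝ) {ψ : ℝ → ℝ} (h : ψ ∈ Submodule.span ℝ PCset) :
    (fun x => ψ ((x + d) / l)) ∈ Submodule.span ℝ PCset := by
  induction h using Submodule.span_induction with
  | mem f hf =>
    obtain ⟨I, hI, rfl⟩ := hf
    apply Submodule.subset_span
    refine ⟨(fun x => (x + d) / l) ⁻¹' I, ?_, rfl⟩
    apply hI.preimage_mono
    intro x y hxy
    simp only
    gcongr
  | zero => exact Submodule.zero_mem _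
  | add f g _ _ hf hg => exact Submodule.add_mem _ hf hg
  | smul a f _ hf => exact Submodule.smul_mem _ a hf

theorem PC_DD {k : ℕ} {l α : ℝ} (hl : 0 < l) {c p : Fin k → ℝ} {ψ : ℝ → ℝ}
    (h : ψ ∈ Submodule.span ℝ PCset) : DD l α c p ψ ∈ Submodule.span ℝ PCset := by
  have : DD l α c p ψ = l ^ (-α) • ∑ i, ∑ j, (p i * p j) • (fun x => ψ ((x + (c j - c i)) / l)) := by
    funext x
    simp only [DD, Pi.smul_apply, Finset.sum_apply, smul_eq_mul]
    congr 1
    refine Finset.sum_congr rfl fun i _ => Finset.sum_congr rfl fun j _ => ?_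
    congr 3; ring
  rw [this]
  exact Submodule.smul_mem _ _ (Submodule.sum_mem _ fun i _ => Submodule.sum_mem _ fun j _ =>
    Submodule.smul_mem _ _ (PC_comp hl _ h))

theorem PC_form {ψ : ℝ → ℝ} (h : ψ ∈ Submodule.span ℝ PCset) :
    ∃ (m : ℕ) (coef : Fin m → ℝ) (I : Fin m → Set ℝ),
          (∀ i, (I i).OrdConnected) ∧
          ψ = fun x => ∑ i, (I i).indicator (fun _ => coef i) x := by
  obtain ⟨m, f, g, rfl⟩ := Submodule.mem_span_set'.mp h
  choose I hI hg using fun i => (g i).2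
  refine ⟨m, f, I, hI, ?_⟩
  funext x
  simp only [Finset.sum_apply, Pi.smul_apply, hg, smul_eq_mul]
  refine Finset.sum_congr rfl fun i _ => ?_
  by_cases hx : x ∈ I i <;> simp [hx]

theorem PC_bdd {ψ : ℝ → ℝ} (h : ψ ∈ Submodule.span ℝ PCset) : ∃ C, ∀ x, ψ x ≤ C := by
  obtain ⟨m, coef, I, -, rfl⟩ := PC_form h
  refine ⟨∑ i, |coef i|, fun x => Finset.sum_le_sum fun i _ => ?_⟩
  by_cases hx : x ∈ I i
  · simp [hx, le_abs_self]
  · simp [hx]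

theorem DD_bound {k : ℕ} {l α : ℝ} (hl : 0 < l) {c p : Fin k → ℝ} (hp : ∀ j, 0 < p j)
    {μ : Measure ℝ} [IsProbabilityMeasure μ]
    (hμ : μ = ∑ j, ENNReal.ofReal (p j) • Measure.map (fun x : ℝ => l * x + c j) μ)
    {ψ : ℝ → ℝ} {A : ℝ≥0∞} {r : ℝ} (h : ∀ x, ENNReal.ofReal (ψ x) ≤ A * GG μ r x) (x : ℝ) :
    ENNReal.ofReal (DD l α c p ψ x) ≤ ENNReal.ofReal l ^ (-α) * A * GG μ (l * r) x := by
  rw [GG_stat hl hμ, mul_assoc, DD, ENNReal.ofReal_mul (by positivity),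
    ENNReal.ofReal_rpow_of_pos hl]
  refine mul_le_mul_right ?_ _
  rw [Finset.mul_sum]
  refine (Finset.le_sum_of_subadditive ENNReal.ofReal ENNReal.ofReal_zero.le
    (fun _ _ => ENNReal.ofReal_add_le) _ _).trans (Finset.sum_le_sum fun i _ => ?_)
  rw [Finset.mul_sum]
  refine (Finset.le_sum_of_subadditive ENNReal.ofReal ENNReal.ofReal_zero.le
    (fun _ _ => ENNReal.ofReal_add_le) _ _).trans (Finset.sum_le_sum fun j _ => ?_)
  rw [ENNReal.ofReal_mul (mul_pos (hp i) (hp j)).le, ENNReal.ofReal_mul (hp i).le]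
  refine (mul_le_mul_right (h _) _).trans (le_of_eq ?_)
  ring

theorem DD_iter_bound {k : ℕ} {l α : ℝ} (hl : 0 < l) {c p : Fin k → ℝ} (hp : ∀ j, 0 < p j)
    {μ : Measure ℝ} [IsProbabilityMeasure μ]
    (hμ : μ = ∑ j, ENNReal.ofReal (p j) • Measure.map (fun x : ℝ => l * x + c j) μ)
    {ψ : ℝ → ℝ} {A : ℝ≥0∞} {r : ℝ} (h : ∀ x, ENNReal.ofReal (ψ x) ≤ A * GG μ r x) (n : ℕ) :
    ∀ x, ENNReal.ofReal ((DD l α c p)^[n] ψ x) ≤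
      (ENNReal.ofReal l ^ (-α)) ^ n * A * GG μ (l ^ n * r) x := by
  induction n with
  | zero => simpa using h
  | succ n ih =>
    intro x
    rw [Function.iterate_succ_apply']
    refine (DD_bound hl hp hμ ih x).trans (le_of_eq ?_)
    rw [pow_succ', pow_succ', ← mul_assoc, ← mul_assoc]

/-- Theorem (existence of a test function): if the stationary measure `μ` of an iterated
function scheme of similarities has finite energy `I(μ, α)` for some `0 < α < 1`, then
there are an invariant compact interval `K`, an admissible compact interval `J`, a
constant `θ > 0` and a piecewise constant test function `ψ` supported on `J`, bounded
between `θ` and `θ⁻¹` on `J`, which is strictly decreased on `J` by the symmetric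
diffusion operator `D^{(2)}_{α,S}`. -/
theorem finding_D2 (k : ℕ) (l : ℝ) (hl0 : 0 < l) (hl1 : l < 1)
    (c : Fin k → ℝ) (p : Fin k → ℝ) (hp : ∀ j, 0 < p j) (hpsum : ∑ j, p j = 1)
    (μ : Measure ℝ) [IsProbabilityMeasure μ]
    (hμ : μ = ∑ j, ENNReal.ofReal (p j) • Measure.map (fun x : ℝ => l * x + c j) μ)
    (α : ℝ) (hα0 : 0 < α) (hα1 : α < 1)
    (henergy : (∫⁻ x, ∫⁻ y, (ENNReal.ofReal |x - y|) ^ (-α) ∂μ ∂μ) ≠ ⊤) :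
    ∃ (a b : ℝ), a ≤ b ∧ (∀ j, ∀ x ∈ Set.Icc a b, l * x + c j ∈ Set.Icc a b) ∧
    ∃ (u v : ℝ), u ≤ v ∧
      {z : ℝ | ∃ x ∈ Set.Icc a b, ∃ y ∈ Set.Icc a b, z = x - y}
        ⊆ interior (Set.Icc u v) ∧
    ∃ θ : ℝ, 0 < θ ∧
    ∃ ψ : ℝ → ℝ,
      -- `ψ` is piecewise constant: a finite linear combination of indicators of intervals
      (∃ (m : ℕ) (coef : Fin m → ℝ) (I : Fin m → Set ℝ),
          (∀ i, (I i).OrdConnected) ∧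
          ψ = fun x => ∑ i, (I i).indicator (fun _ => coef i) x) ∧
      (∀ x ∉ Set.Icc u v, ψ x = 0) ∧
      (∀ x ∈ Set.Icc u v, θ ≤ ψ x ∧ ψ x ≤ θ⁻¹) ∧
      ∀ x ∈ Set.Icc u v,
        l ^ (-α) * ∑ i, ∑ j, p i * p j * ψ ((x - c i + c j) / l) < ψ x := by
  classical
  set M : ℝ := ∑ j, |c j| with hM
  have hM0 : 0 ≤ M := Finset.sum_nonneg fun j _ => abs_nonneg _
  have hcM : ∀ j, |c j| ≤ M := fun j =>
    Finset.single_le_sum (f := fun j => |c j|) (fun j _ => abs_nonneg _) (Finset.mem_univ j)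
  obtain ⟨A, hA0, hA⟩ : ∃ A : ℝ, 0 ≤ A ∧ l * A + M = A := by
    have : 0 < 1 - l := by linarith
    refine ⟨M / (1 - l), by positivity, ?_⟩
    field_simp; ring
  set B : ℝ := 2 * A + 1 with hB
  have hB0 : 0 ≤ B := by linarith
  set χ : ℝ → ℝ := (Set.Icc (-B) B).indicator (fun _ => 1) with hχ
  obtain ⟨r, hr, m, hm0, hmt, hm⟩ := GG_lower (μ := μ) B hB0
  have hχG : ∀ x, ENNReal.ofReal (χ x) ≤ m⁻¹ * GG μ r x := by
    intro x
    by_cases hx : x ∈ Set.Icc (-B) B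
    · simp only [hχ, Set.indicator_of_mem hx, ENNReal.ofReal_one]
      rw [← ENNReal.inv_mul_cancel hm0 hmt]
      exact mul_le_mul_right (hm x (abs_le.mpr hx)) _
    · simp [hχ, Set.indicator_of_notMem hx]
  set D := DD l α c p with hD
  have key := DD_iter_bound (α := α) hl0 hp hμ hχG
  have hlim := GG_energy hα0 henergy (s := fun n => l ^ n * (2 * r)) (fun n => by positivity)
    (by simpa using (tendsto_pow_atTop_nhds_zero_of_lt_one hl0.le hl1).mul_const (2 * r))
  obtain ⟨N, hN⟩ : ∃ N, ∀ x, D^[N] χ x < 1 := by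
    set Q : ℝ≥0∞ := 4 * m⁻¹ * ENNReal.ofReal (2 * r) ^ α with hQ
    have h2r : ENNReal.ofReal (2 * r) ≠ 0 := by simpa using hr
    have hQt : Q ≠ ⊤ := by
      refine ENNReal.mul_ne_top (ENNReal.mul_ne_top (by simp) (ENNReal.inv_ne_top.mpr hm0)) ?_
      exact ENNReal.rpow_ne_top_of_nonneg hα0.le ENNReal.ofReal_ne_top
    have t := ENNReal.Tendsto.const_mul (a := Q) hlim (Or.inr hQt)
    rw [mul_zero] at t
    obtain ⟨N, hN⟩ := (t.eventually (gt_mem_nhds (zero_lt_one : (0 : ℝ≥0∞) < 1))).exists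
    refine ⟨N, fun x => ?_⟩
    have h1 : ENNReal.ofReal (D^[N] χ x) < 1 := by
      refine lt_of_le_of_lt ((key N x).trans (mul_le_mul_right
        (GG_shift (by positivity) x) _)) (lt_of_le_of_lt (le_of_eq ?_) hN)
      rw [show 2 * (l ^ N * r) = l ^ N * (2 * r) by ring,
        ENNReal.ofReal_mul (by positivity : 0 ≤ l ^ N), hQ,
        ENNReal.mul_rpow_of_ne_top ENNReal.ofReal_ne_top ENNReal.ofReal_ne_top,
        ENNReal.ofReal_pow hl0.le, ← ENNReal.rpow_natCast, ← ENNReal.rpow_natCast,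
        ← ENNReal.rpow_mul, ← ENNReal.rpow_mul, mul_comm (-α) (N : ℝ)]
      have e : ENNReal.ofReal (2 * r) ^ α * ENNReal.ofReal (2 * r) ^ (-α) = 1 := by
        rw [← ENNReal.rpow_add _ _ h2r ENNReal.ofReal_ne_top]; simp
      generalize ENNReal.ofReal (2 * r) ^ α = a at e ⊢
      generalize ENNReal.ofReal (2 * r) ^ (-α) = b at e ⊢
      generalize ENNReal.ofReal l ^ ((N : ℝ) * -α) = d
      generalize GG μ (l ^ N * (2 * r)) 0 = g
      calc d * m⁻¹ * (4 * g) = (a * b) * (d * m⁻¹ * (4 * g)) := by rw [e, one_mul]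
        _ = _ := by ring
    by_contra hcon
    have := ENNReal.ofReal_le_ofReal (not_lt.mp hcon)
    rw [ENNReal.ofReal_one] at this
    exact absurd h1 (not_lt.mpr this)
  have hposl : 0 < l ^ (-α) := Real.rpow_pos_of_pos hl0 _
  have hnonneg : ∀ n x, 0 ≤ D^[n] χ x := by
    intro n
    induction n with
    | zero =>
      intro x
      exact Set.indicator_nonneg (fun _ _ => zero_le_one (α := ℝ)) x
    | succ n ih =>
      intro x
      rw [Function.iterate_succ_apply']
      exact mul_nonneg hposl.le (Finset.sum_nonneg fun i _ => Finset.sum_nonneg fun j _ =>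
        mul_nonneg (mul_pos (hp i) (hp j)).le (ih _))
  have hsupp : ∀ n, ∀ x ∉ Set.Icc (-B) B, D^[n] χ x = 0 := by
    intro n
    induction n with
    | zero =>
      intro x hx
      simp [hχ, Set.indicator_of_notMem hx]
    | succ n ih =>
      intro x hx
      rw [Function.iterate_succ_apply']
      simp only [hD, DD]
      rw [Finset.sum_eq_zero, mul_zero]
      intro i _
      refine Finset.sum_eq_zero fun j _ => ?_
      rw [ih, mul_zero]
      intro hmem
      apply hx
      have h1 := (le_div_iff₀ hl0).mp hmem.1
      have h2 := (div_le_iff₀ hl0).mp hmem.2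
      have hi := abs_le.mp (hcM i)
      have hj := abs_le.mp (hcM j)
      have hlB : l * B + 2 * M ≤ B := by rw [hB]; nlinarith
      constructor <;> nlinarith [hi.1, hi.2, hj.1, hj.2]
  have hPC : ∀ n, D^[n] χ ∈ Submodule.span ℝ PCset := by
    intro n
    induction n with
    | zero => exact Submodule.subset_span ⟨_, Set.ordConnected_Icc, rfl⟩
    | succ n ih =>
      rw [Function.iterate_succ_apply']
      exact PC_DD hl0 ih
  set ψ : ℝ → ℝ := ∑ n ∈ Finset.range N, D^[n] χ with hψ
  have hψPC : ψ ∈ Submodule.span ℝ PCset := Submodule.sum_mem _ fun n _ => hPC n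
  obtain ⟨C, hC⟩ := PC_bdd hψPC
  have hψx : ∀ x, ψ x = ∑ n ∈ Finset.range N, D^[n] χ x := fun x => by
    rw [hψ, Finset.sum_apply]
  have hχ1 : ∀ x ∈ Set.Icc (-B) B, χ x = 1 := fun x hx => Set.indicator_of_mem hx _
  have hNpos : 0 < N := by
    rcases Nat.eq_zero_or_pos N with h | h
    · have := hN 0
      rw [h, Function.iterate_zero_apply, hχ1 0 ⟨by linarith, hB0⟩] at this
      exact absurd this (lt_irrefl _)
    · exact h
  have hψ1 : ∀ x ∈ Set.Icc (-B) B, 1 ≤ ψ x := by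
    intro x hx
    rw [hψx]
    have := Finset.single_le_sum (f := fun n => D^[n] χ x) (fun n _ => hnonneg n x)
      (Finset.mem_range.mpr hNpos)
    simpa [hχ1 x hx] using this
  have hC1 : 1 ≤ C := (hψ1 0 ⟨by linarith, hB0⟩).trans (hC 0)
  refine ⟨-A, A, by linarith, ?_, -B, B, by linarith, ?_, C⁻¹, by positivity, ψ,
    PC_form hψPC, ?_, ?_, ?_⟩
  · intro j x hx
    have hj := abs_le.mp (hcM j)
    constructor <;> nlinarith [hx.1, hx.2, hj.1, hj.2]
  · rintro z ⟨x, hx, y, hy, rfl⟩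
    rw [interior_Icc]
    constructor <;> linarith [hx.1, hx.2, hy.1, hy.2]
  · intro x hx
    rw [hψx]
    exact Finset.sum_eq_zero fun n _ => hsupp n x hx
  · intro x hx
    rw [inv_inv]
    exact ⟨(inv_le_one_of_one_le₀ hC1).trans (hψ1 x hx), hC x⟩
  · intro x hx
    have hDψ : D ψ x = ∑ n ∈ Finset.range N, D^[n + 1] χ x := by
      simp only [Function.iterate_succ_apply']
      simp only [hD, DD, hψx, Finset.mul_sum]
      conv_rhs => rw [Finset.sum_comm]
      refine Finset.sum_congr rfl fun i _ => ?_
      rw [Finset.sum_comm]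
    change D ψ x < ψ x
    have e1 := Finset.sum_range_succ (fun n => D^[n] χ x) N
    have e2 := Finset.sum_range_succ' (fun n => D^[n] χ x) N
    rw [hDψ, hψx]
    have e3 := hN x
    simp only [Function.iterate_zero_apply, hχ1 x hx] at e2
    linarith
end

section
/- Let J ⊆ ℝ be a compact interval and let f_1, …, f_n : ℝ → ℝ be C^{1+ε} orientation-preserving bijections (each f_j' is positive, Hölder continuous with some exponent ε > 0, and satisfies f_j'(x) ≤ λ_max for some constant λ_max < 1) with f_j(J) ⊆ J for all j, let p̄ be a probability vector with p_j > 0, and let μ be a Borel probability measure with μ = ∑_j p_j (f_j)_*μ. Suppose there exist α > 0, r > 0, θ > 0, and a function ψ : ℝ → ℝ vanishing outside the closed r-neighbourhood B_r(J) with θ ≤ ψ(x) ≤ θ^{-1} for all x ∈ B_r(J), such that for every x ∈ B_r(J) one has ∑_j p_j ((f_j^{-1})'(x))^{α} ψ(f_j^{-1}(x)) < ψ(x). Then μ is α-regular: there exists C > 0 such that μ(B_ρ(x)) ≤ C ρ^{α} for every x ∈ ℝ and every ρ > 0. -/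
open MeasureTheory
open scoped ENNReal

lemma aux_mvt (g g' : ℝ → ℝ) (h : ∀ x, HasDerivAt g (g' x) x) (u v : ℝ) (huv : u < v) :
    ∃ ξ, u < ξ ∧ ξ < v ∧ g v - g u = g' ξ * (v - u) := by
  obtain ⟨c, hc, hc'⟩ := exists_hasDerivAt_eq_slope g g' huv
    (fun x _ => (h x).continuousAt.continuousWithinAt) (fun x _ => h x)
  refine ⟨c, hc.1, hc.2, ?_⟩
  have : v - u ≠ 0 := (sub_pos.2 huv).ne'
  rw [hc']; field_simp

lemma aux_real (n : ℕ) (f : Fin n → ℝ → ℝ) (hf : ∀ j, Measurable (f j))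
    (p : Fin n → ℝ) (hp : ∀ j, 0 < p j)
    (μ : Measure ℝ) [IsProbabilityMeasure μ]
    (hμ : μ = ∑ j, ENNReal.ofReal (p j) • Measure.map (f j) μ) (S : Set ℝ)
    (hS : MeasurableSet S) : μ.real S = ∑ j, p j * μ.real (f j ⁻¹' S) := by
  have h : μ S = ∑ j, ENNReal.ofReal (p j) * μ (f j ⁻¹' S) := by
    conv_lhs => rw [hμ]
    simp only [Measure.coe_finsetSum, Finset.sum_apply, Measure.smul_apply, smul_eq_mul]
    refine Finset.sum_congr rfl fun j _ => ?_
    rw [Measure.map_apply (hf j) hS]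
  rw [Measure.real, h, ENNReal.toReal_sum]
  · refine Finset.sum_congr rfl fun j _ => ?_
    rw [ENNReal.toReal_mul, ENNReal.toReal_ofReal (hp j).le]; rfl
  · intro j _
    exact ENNReal.mul_ne_top ENNReal.ofReal_ne_top (measure_ne_top _ _)

lemma aux_supp_s5 (n : ℕ) (a b : ℝ) (hab : a ≤ b) (lam : ℝ) (hl0 : 0 < lam) (hl : lam < 1)
    (f : Fin n → ℝ → ℝ) (hf : ∀ j, Measurable (f j))
    (hlip : ∀ j x y, |f j x - f j y| ≤ lam * |x - y|)
    (hmaps : ∀ j, ∀ x ∈ Set.Icc a b, f j x ∈ Set.Icc a b)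
    (p : Fin n → ℝ) (hp : ∀ j, 0 < p j) (hpsum : ∑ j, p j = 1)
    (μ : Measure ℝ) [IsProbabilityMeasure μ]
    (hμ : μ = ∑ j, ENNReal.ofReal (p j) • Measure.map (f j) μ) :
    μ (Set.Icc a b)ᶜ = 0 := by
  set d : ℝ → ℝ := fun x => Metric.infDist x (Set.Icc a b) with hd
  have hdc : Continuous d := Metric.continuous_infDist_pt _
  have hne : (Set.Icc a b).Nonempty := ⟨a, le_refl _, hab⟩
  have hdf : ∀ j x, d (f j x) ≤ lam * d x := by
    intro j x
    obtain ⟨y, hy, hy'⟩ := isCompact_Icc.exists_infDist_eq_dist hne x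
    calc d (f j x) ≤ dist (f j x) (f j y) := Metric.infDist_le_dist_of_mem (hmaps j y hy)
      _ ≤ lam * dist x y := hlip j x y
      _ = lam * d x := by rw [hd]; simp only; rw [hy']
  have hmeas : ∀ t, MeasurableSet {x | t < d x} := fun t =>
    (isOpen_lt continuous_const hdc).measurableSet
  have hstep : ∀ t, μ.real {x | t < d x} ≤ μ.real {x | t / lam < d x} := by
    intro t
    rw [aux_real n f hf p hp μ hμ _ (hmeas t)]
    calc _ ≤ ∑ j, p j * μ.real {x | t / lam < d x} := by
          refine Finset.sum_le_sum fun j _ => mul_le_mul_of_nonneg_left ?_ (hp j).le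
          refine measureReal_mono ?_
          intro x hx
          simp only [Set.mem_preimage, Set.mem_ofPred_eq] at hx ⊢
          rw [div_lt_iff₀ hl0]
          linarith [hdf j x]
      _ = _ := by rw [← Finset.sum_mul, hpsum, one_mul]
  have hit : ∀ t, ∀ k : ℕ, μ.real {x | t < d x} ≤ μ.real {x | t / lam ^ k < d x} := by
    intro t k
    induction k with
    | zero => simp
    | succ k ih =>
      refine ih.trans ((hstep _).trans (le_of_eq ?_))
      rw [div_div, pow_succ]
  have hlim : Filter.Tendsto (fun m : ℕ => μ {x | (m : ℝ) < d x}) Filter.atTop (nhds 0) := by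
    have := tendsto_measure_iInter_atTop (μ := μ) (s := fun m : ℕ => {x | (m : ℝ) < d x})
      (fun m => (hmeas m).nullMeasurableSet)
      (fun m k hmk x (hx : (k : ℝ) < d x) =>
        show (m : ℝ) < d x from lt_of_le_of_lt (Nat.cast_le.2 hmk) hx) ⟨0, measure_ne_top _ _⟩
    have he : (⋂ m : ℕ, {x | (m : ℝ) < d x}) = ∅ := by
      ext x
      simp only [Set.mem_iInter, Set.mem_ofPred_eq, Set.mem_empty_iff_false, iff_false, not_forall,
        not_lt]
      exact exists_nat_ge (d x)
    rw [he, measure_empty] at this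
    exact this
  have hzero : ∀ t, 0 < t → μ {x | t < d x} = 0 := by
    intro t ht
    refine le_antisymm (ge_of_tendsto' hlim fun m => ?_) (zero_le)
    obtain ⟨k, hk⟩ := exists_pow_lt_of_lt_one (show 0 < t / (m + 1) by positivity) hl
    have h1 := hit t k
    have h2 : μ {x | t < d x} ≤ μ {x | t / lam ^ k < d x} :=
      (ENNReal.toReal_le_toReal (measure_ne_top _ _) (measure_ne_top _ _)).1 h1
    refine h2.trans (measure_mono fun x hx => ?_)
    simp only [Set.mem_ofPred_eq] at hx ⊢
    refine lt_of_le_of_lt ?_ hx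
    rw [lt_div_iff₀ (by positivity)] at hk
    rw [le_div_iff₀ (by positivity)]
    nlinarith [pow_pos hl0 k]
  have hsub : (Set.Icc a b)ᶜ ⊆ ⋃ m : ℕ, {x | 1 / ((m : ℝ) + 1) < d x} := by
    intro x hx
    have : 0 < d x := (isClosed_Icc.notMem_iff_infDist_pos hne).1 hx
    obtain ⟨m, hm⟩ := exists_nat_one_div_lt this
    exact Set.mem_iUnion.2 ⟨m, hm⟩
  refine measure_mono_null hsub (measure_iUnion_null fun m => hzero _ (by positivity))

set_option maxHeartbeats 4000000 in
/-- Theorem (certificate for `α`-regularity): for an iterated function scheme of uniformly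
contracting `C^{1+ε}` orientation-preserving diffeomorphisms preserving a compact interval
`J = [a,b]`, if a positive test function `ψ` supported on the closed `r`-neighbourhood
`B_r(J)` is strictly decreased there by the asymmetric diffusion operator
`D^{(1)}_{α,T}`, then the stationary measure `μ` is `α`-regular:
`μ(B_ρ(x)) ≤ C ρ^α` for all `x` and `ρ > 0`. -/
theorem certificate_D1 (n : ℕ) (a b : ℝ) (hab : a ≤ b)
    (ε lamMax : ℝ) (hε : 0 < ε) (hlam : lamMax < 1)
    (f : Fin n → ℝ → ℝ) (f' : Fin n → ℝ → ℝ)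
    (hbij : ∀ j, Function.Bijective (f j))
    (hderiv : ∀ j x, HasDerivAt (f j) (f' j x) x)
    (hpos : ∀ j x, 0 < f' j x)
    (hle : ∀ j x, f' j x ≤ lamMax)
    (Ch : ℝ) (hholder : ∀ j x y, |f' j x - f' j y| ≤ Ch * |x - y| ^ ε)
    (hmaps : ∀ j, ∀ x ∈ Set.Icc a b, f j x ∈ Set.Icc a b)
    (p : Fin n → ℝ) (hp : ∀ j, 0 < p j) (hpsum : ∑ j, p j = 1)
    (μ : Measure ℝ) [IsProbabilityMeasure μ]
    (hμ : μ = ∑ j, ENNReal.ofReal (p j) • Measure.map (f j) μ)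
    (α r θ : ℝ) (hα : 0 < α) (hr : 0 < r) (hθ : 0 < θ)
    (ψ : ℝ → ℝ)
    (hψ0 : ∀ x ∉ Metric.cthickening r (Set.Icc a b), ψ x = 0)
    (hψb : ∀ x ∈ Metric.cthickening r (Set.Icc a b), θ ≤ ψ x ∧ ψ x ≤ θ⁻¹)
    (hcontr : ∀ x ∈ Metric.cthickening r (Set.Icc a b),
      ∑ j, p j * (deriv (Function.invFun (f j)) x) ^ α * ψ (Function.invFun (f j) x)
        < ψ x) :
    ∃ C : ℝ, 0 < C ∧ ∀ (x ρ : ℝ), 0 < ρ →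
      μ (Metric.closedBall x ρ) ≤ ENNReal.ofReal (C * ρ ^ α) := by
  set K := Metric.cthickening r (Set.Icc a b) with hK
  have hn : Nonempty (Fin n) := by
    by_contra h
    rw [not_nonempty_iff] at h
    simp at hpsum
  obtain ⟨j0⟩ := id hn
  have hl0 : 0 < lamMax := (hpos j0 0).trans_le (hle j0 0)
  have hmono : ∀ j, StrictMono (f j) := by
    intro j u v huv
    obtain ⟨ξ, -, -, h⟩ := aux_mvt (f j) (f' j) (hderiv j) u v huv
    nlinarith [hpos j ξ]
  have hcont : ∀ j, Continuous (f j) := fun j =>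
    continuous_iff_continuousAt.2 fun x => (hderiv j x).continuousAt
  have hf : ∀ j, Measurable (f j) := fun j => (hcont j).measurable
  have hlip : ∀ j x y, |f j x - f j y| ≤ lamMax * |x - y| := by
    have key : ∀ j x y, x < y → |f j y - f j x| ≤ lamMax * |y - x| := by
      intro j x y hxy
      obtain ⟨ξ, -, -, h⟩ := aux_mvt (f j) (f' j) (hderiv j) x y hxy
      rw [h, abs_mul, abs_of_pos (hpos j ξ)]
      exact mul_le_mul_of_nonneg_right (hle j ξ) (abs_nonneg _)
    intro j x y
    rcases lt_trichotomy x y with h | h | h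
    · rw [abs_sub_comm, abs_sub_comm x]; exact key j x y h
    · simp [h]
    · exact key j y x h
  have hsupp := aux_supp_s5 n a b hab lamMax hl0 hlam f hf hlip hmaps p hp hpsum μ hμ
  have hsupp' : ∀ S : Set ℝ, (∀ z ∈ S, z ∉ Set.Icc a b) → μ.real S = 0 := by
    intro S hS
    have : μ S = 0 := measure_mono_null (fun z hz => hS z hz) hsupp
    simp [Measure.real, this]
  -- the inverse maps
  have hgf : ∀ j x, Function.invFun (f j) (f j x) = x := fun j =>
    Function.leftInverse_invFun (hbij j).1
  have hfg : ∀ j x, f j (Function.invFun (f j) x) = x := fun j =>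
    Function.rightInverse_invFun (hbij j).2
  have hgcont : ∀ j, Continuous (Function.invFun (f j)) := by
    intro j
    have hm : StrictMono (Function.invFun (f j)) := by
      intro x y hxy
      rw [← (hmono j).lt_iff_lt, hfg, hfg]; exact hxy
    exact hm.monotone.continuous_of_surjective (fun x => ⟨f j x, hgf j x⟩)
  have hgderiv : ∀ j x, deriv (Function.invFun (f j)) x = (f' j (Function.invFun (f j) x))⁻¹ := by
    intro j x
    exact (HasDerivAt.of_local_left_inverse (hgcont j).continuousAt (hderiv j _)
      (hpos j _).ne' (Filter.Eventually.of_forall (hfg j))).deriv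
  have hψnn : ∀ x, 0 ≤ ψ x := by
    intro x
    by_cases hx : x ∈ K
    · exact hθ.le.trans (hψb x hx).1
    · rw [hψ0 x hx]
  have hψle : ∀ x, ψ x ≤ θ⁻¹ := by
    intro x
    by_cases hx : x ∈ K
    · exact (hψb x hx).2
    · rw [hψ0 x hx]; positivity
  have hKmem : ∀ y ∈ Set.Icc a b, ∀ z, |z - y| ≤ r → z ∈ K := fun y hy z hz =>
    Metric.mem_cthickening_of_dist_le z y r _ hy hz
  have hKc : IsCompact K := isCompact_Icc.cthickening
  have hKne : K.Nonempty := ⟨a, hKmem a ⟨le_refl _, hab⟩ a (by simpa using hr.le)⟩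
  have hf'c : ∀ j, Continuous (f' j) := by
    intro j
    rw [continuous_iff_continuousAt]
    intro x
    rw [ContinuousAt, tendsto_iff_dist_tendsto_zero]
    have h0 : Filter.Tendsto (fun y => Ch * |y - x| ^ ε) (nhds x) (nhds 0) := by
      have : Continuous (fun y : ℝ => Ch * |y - x| ^ ε) :=
        continuous_const.mul ((continuous_id.sub continuous_const).abs.rpow_const
          (fun _ => Or.inr hε.le))
      have h := this.tendsto x
      simpa [Real.zero_rpow hε.ne'] using h
    exact squeeze_zero (fun _ => dist_nonneg) (fun y => hholder j y x) h0
  obtain ⟨m, hm0, hm⟩ : ∃ m, 0 < m ∧ ∀ j, ∀ z ∈ K, m ≤ f' j z := by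
    have h1 : ∀ j, ∃ z ∈ K, ∀ w ∈ K, f' j z ≤ f' j w := fun j =>
      hKc.exists_isMinOn hKne (hf'c j).continuousOn
    choose z hz hz' using h1
    obtain ⟨i, hi⟩ := Finite.exists_min (fun j => f' j (z j))
    exact ⟨f' i (z i), hpos _ _, fun j w hw => (hi j).trans (hz' j w hw)⟩
  set B := |Ch| / m with hB
  have hB0 : 0 ≤ B := by positivity
  have hlε : lamMax ^ ε < 1 := Real.rpow_lt_one hl0.le hlam hε
  set A := α * B / (1 - lamMax ^ ε) with hA
  have hA1 : A * (1 - lamMax ^ ε) = α * B := by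
    rw [hA]; field_simp [(sub_pos.2 hlε).ne']
  have hA0 : 0 ≤ A := div_nonneg (by positivity) (sub_pos.2 hlε).le
  set δ := m * (r / 2) with hδ
  have hδ0 : 0 < δ := by positivity
  set C := (δ ^ α * θ * Real.exp (-A * r ^ ε))⁻¹ with hC
  have hC0 : 0 < C := by positivity
  have main : ∀ k : ℕ, ∀ u v x, u ≤ x → x ≤ v → δ * lamMax ^ k ≤ v - u → v - u ≤ r →
      μ.real (Set.Icc u v) ≤ C * (v - u) ^ α * ψ x * Real.exp (-A * (v - u) ^ ε) := by
    have hout : ∀ u v x, u ≤ x → x ≤ v → v - u ≤ r → x ∉ K → μ.real (Set.Icc u v) = 0 := by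
      intro u v x h1 h2 h3 hx
      refine hsupp' _ fun z hz hzJ => hx (hKmem z hzJ x ?_)
      rw [abs_le]; constructor <;> linarith [hz.1, hz.2]
    have base : ∀ u v x, u ≤ x → x ≤ v → δ ≤ v - u → v - u ≤ r →
        μ.real (Set.Icc u v) ≤ C * (v - u) ^ α * ψ x * Real.exp (-A * (v - u) ^ ε) := by
      intro u v x h1 h2 h3 h4
      by_cases hx : x ∈ K
      · refine measureReal_le_one.trans ?_
        have e1 : δ ^ α ≤ (v - u) ^ α := Real.rpow_le_rpow hδ0.le h3 hα.le
        have e2 : (v - u) ^ ε ≤ r ^ ε := Real.rpow_le_rpow (hδ0.le.trans h3) h4 hε.le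
        have e3 : Real.exp (-A * r ^ ε) ≤ Real.exp (-A * (v - u) ^ ε) :=
          Real.exp_le_exp.2 (by nlinarith)
        calc (1 : ℝ) = C * (δ ^ α * θ * Real.exp (-A * r ^ ε)) := by
              rw [hC, inv_mul_cancel₀]; positivity
          _ ≤ C * ((v - u) ^ α * ψ x * Real.exp (-A * (v - u) ^ ε)) := by
              have := (hψb x hx).1
              have := hψnn x
              have hvu : 0 ≤ v - u := hδ0.le.trans h3
              have : 0 ≤ (v - u) ^ α := by positivity
              gcongr
          _ = _ := by ring
      · rw [hout u v x h1 h2 h4 hx, hψ0 x hx]; simp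
    intro k
    induction k with
    | zero => intro u v x h1 h2 h3 h4; exact base u v x h1 h2 (by simpa using h3) h4
    | succ k ih =>
      intro u v x h1 h2 h3 h4
      rcases le_total δ (v - u) with h5 | h5
      · exact base u v x h1 h2 h5 h4
      by_cases hx : x ∈ K
      swap
      · rw [hout u v x h1 h2 h4 hx, hψ0 x hx]; simp
      have hℓ : 0 < v - u := lt_of_lt_of_le (by positivity) h3
      rw [aux_real n f hf p hp μ hμ _ measurableSet_Icc]
      have term : ∀ j, μ.real (f j ⁻¹' Set.Icc u v) ≤ C * (v - u) ^ α *
          Real.exp (-A * (v - u) ^ ε) *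
          ((deriv (Function.invFun (f j)) x) ^ α * ψ (Function.invFun (f j) x)) := by
        intro j
        rw [hgderiv]
        set u' := Function.invFun (f j) u with hu'
        set v' := Function.invFun (f j) v with hv'
        set x' := Function.invFun (f j) x with hx'
        have fu : f j u' = u := hfg j u
        have fv : f j v' = v := hfg j v
        have fx : f j x' = x := hfg j x
        have hpre : f j ⁻¹' Set.Icc u v = Set.Icc u' v' := by
          ext z
          simp only [Set.mem_preimage, Set.mem_Icc]
          rw [← (hmono j).le_iff_le (a := u'), ← (hmono j).le_iff_le (b := v'), fu, fv]
        have hux : u' ≤ x' := by rw [← (hmono j).le_iff_le, fu, fx]; exact h1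
        have hxv : x' ≤ v' := by rw [← (hmono j).le_iff_le, fv, fx]; exact h2
        have huv : u' < v' := by rw [← (hmono j).lt_iff_lt, fu, fv]; linarith
        have hfx' := hpos j x'
        rw [hpre]
        by_cases hJ : ∀ z ∈ Set.Icc u' v', z ∉ Set.Icc a b
        · rw [hsupp' _ hJ]
          have := hψnn x'
          positivity
        push Not at hJ
        obtain ⟨y, hy, hyJ⟩ := hJ
        have hfy1 : u ≤ f j y := by rw [← fu]; exact (hmono j).monotone hy.1
        have hfy2 : f j y ≤ v := by rw [← fv]; exact (hmono j).monotone hy.2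
        have hv2 : v' ≤ y + r / 2 := by
          by_contra hcon
          push Not at hcon
          have hlt := hmono j hcon
          rw [fv] at hlt
          obtain ⟨ξ, a1, a2, a3⟩ := aux_mvt (f j) (f' j) (hderiv j) y (y + r / 2) (by linarith)
          have := hm j ξ (hKmem y hyJ ξ (by rw [abs_le]; constructor <;> linarith))
          have : m * (r / 2) ≤ f' j ξ * (r / 2) := by gcongr
          have e : y + r / 2 - y = r / 2 := by ring
          rw [e] at a3
          linarith
        have hu2 : y - r / 2 ≤ u' := by
          by_contra hcon
          push Not at hcon
          have hlt := hmono j hcon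
          rw [fu] at hlt
          obtain ⟨ξ, a1, a2, a3⟩ := aux_mvt (f j) (f' j) (hderiv j) (y - r / 2) y (by linarith)
          have := hm j ξ (hKmem y hyJ ξ (by rw [abs_le]; constructor <;> linarith))
          have : m * (r / 2) ≤ f' j ξ * (r / 2) := by gcongr
          have e : y - (y - r / 2) = r / 2 := by ring
          rw [e] at a3
          linarith
        obtain ⟨ξ, b1, b2, b3⟩ := aux_mvt (f j) (f' j) (hderiv j) u' v' huv
        rw [fu, fv] at b3
        have hℓ' : 0 < v' - u' := sub_pos.2 huv
        have hξK : ξ ∈ K := hKmem y hyJ ξ (by rw [abs_le]; constructor <;> linarith)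
        have hmξ := hm j ξ hξK
        have hlow : v - u ≤ lamMax * (v' - u') := by
          rw [b3]; exact mul_le_mul_of_nonneg_right (hle j ξ) hℓ'.le
        have hIH := ih u' v' x' hux hxv (by
          rw [pow_succ] at h3
          have : lamMax * (δ * lamMax ^ k) ≤ lamMax * (v' - u') := by linarith
          exact le_of_mul_le_mul_left this hl0) (by linarith)
        have hL0 : 0 ≤ (v' - u') ^ ε := by positivity
        -- bounded distortion
        have hdist : f' j x' ≤ f' j ξ * Real.exp (B * (v' - u') ^ ε) := by
          have c1 : f' j x' - f' j ξ ≤ |Ch| * (v' - u') ^ ε := by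
            refine (le_abs_self _).trans ((hholder j x' ξ).trans ?_)
            refine mul_le_mul (le_abs_self _) (Real.rpow_le_rpow (abs_nonneg _) ?_ hε.le)
              (by positivity) (abs_nonneg _)
            rw [abs_le]; constructor <;> linarith
          have c2 : |Ch| = m * B := by rw [hB]; field_simp
          have c3 : m * (B * (v' - u') ^ ε) ≤ f' j ξ * (B * (v' - u') ^ ε) := by gcongr
          have c4 := Real.add_one_le_exp (B * (v' - u') ^ ε)
          have c5 := mul_le_mul_of_nonneg_left c4 (hpos j ξ).le
          rw [c2] at c1
          nlinarith
        have hlen : v' - u' ≤ (v - u) * (f' j x')⁻¹ * Real.exp (B * (v' - u') ^ ε) := by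
          rw [b3, ← div_eq_mul_inv, div_mul_eq_mul_div, le_div_iff₀ hfx']
          nlinarith
        have hpow : (v' - u') ^ α ≤
            (v - u) ^ α * ((f' j x')⁻¹) ^ α * Real.exp (α * B * (v' - u') ^ ε) := by
          refine (Real.rpow_le_rpow hℓ'.le hlen hα.le).trans (le_of_eq ?_)
          rw [Real.mul_rpow (by positivity) (by positivity), Real.mul_rpow hℓ.le (by positivity),
            ← Real.exp_mul]
          congr 2; ring
        have hexp : α * B * (v' - u') ^ ε + -A * (v' - u') ^ ε ≤ -A * (v - u) ^ ε := by
          have d1 : (v - u) ^ ε ≤ lamMax ^ ε * (v' - u') ^ ε := by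
            rw [← Real.mul_rpow hl0.le hℓ'.le]
            exact Real.rpow_le_rpow hℓ.le hlow hε.le
          have d2 := mul_le_mul_of_nonneg_left d1 hA0
          rw [← hA1]; linarith
        have hψx := hψnn x'
        calc μ.real (Set.Icc u' v')
            ≤ C * (v' - u') ^ α * ψ x' * Real.exp (-A * (v' - u') ^ ε) := hIH
          _ ≤ C * ((v - u) ^ α * ((f' j x')⁻¹) ^ α * Real.exp (α * B * (v' - u') ^ ε)) * ψ x' *
              Real.exp (-A * (v' - u') ^ ε) := by gcongr
          _ = C * (v - u) ^ α * ((f' j x')⁻¹) ^ α * ψ x' *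
              Real.exp (α * B * (v' - u') ^ ε + -A * (v' - u') ^ ε) := by
              rw [Real.exp_add]; ring
          _ ≤ C * (v - u) ^ α * ((f' j x')⁻¹) ^ α * ψ x' * Real.exp (-A * (v - u) ^ ε) := by
              gcongr
          _ = _ := by ring
      calc ∑ j, p j * μ.real (f j ⁻¹' Set.Icc u v)
          ≤ ∑ j, p j * (C * (v - u) ^ α * Real.exp (-A * (v - u) ^ ε) *
          ((deriv (Function.invFun (f j)) x) ^ α * ψ (Function.invFun (f j) x))) :=
            Finset.sum_le_sum fun j _ => mul_le_mul_of_nonneg_left (term j) (hp j).le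
        _ = C * (v - u) ^ α * Real.exp (-A * (v - u) ^ ε) *
            ∑ j, p j * (deriv (Function.invFun (f j)) x) ^ α * ψ (Function.invFun (f j) x) := by
            rw [Finset.mul_sum]
            exact Finset.sum_congr rfl fun j _ => by ring
        _ ≤ C * (v - u) ^ α * Real.exp (-A * (v - u) ^ ε) * ψ x :=
            mul_le_mul_of_nonneg_left (hcontr x hx).le (by positivity)
        _ = _ := by ring
  refine ⟨C * 2 ^ α * θ⁻¹ + (2 / r) ^ α, by positivity, fun x ρ hρ => ?_⟩
  rw [← ENNReal.ofReal_toReal (measure_ne_top μ (Metric.closedBall x ρ))]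
  refine ENNReal.ofReal_le_ofReal ?_
  change μ.real (Metric.closedBall x ρ) ≤ _
  have hρα : 0 < ρ ^ α := by positivity
  rcases le_total (2 * ρ) r with h | h
  · rw [Real.closedBall_eq_Icc]
    obtain ⟨k, hk⟩ := exists_pow_lt_of_lt_one (show 0 < 2 * ρ / δ by positivity) hlam
    rw [lt_div_iff₀ hδ0] at hk
    have e : x + ρ - (x - ρ) = 2 * ρ := by ring
    have := main k (x - ρ) (x + ρ) x (by linarith) (by linarith) (by rw [e]; linarith)
      (by rw [e]; exact h)
    rw [e, Real.mul_rpow (by norm_num) hρ.le] at this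
    have h1 : Real.exp (-A * (2 ^ ε * ρ ^ ε)) ≤ 1 := by
      rw [Real.exp_le_one_iff]
      have : 0 ≤ A * (2 ^ ε * ρ ^ ε) := by positivity
      linarith
    rw [Real.mul_rpow (by norm_num) hρ.le] at this
    have hx0 := hψnn x
    calc _ ≤ _ := this
      _ ≤ C * (2 ^ α * ρ ^ α) * θ⁻¹ * 1 := by
        gcongr
        exact hψle x
      _ ≤ _ := by
        have : 0 ≤ (2 / r) ^ α * ρ ^ α := by positivity
        linarith
  · refine measureReal_le_one.trans ?_
    have h1 : 1 ≤ (2 / r) ^ α * ρ ^ α := by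
      rw [← Real.mul_rpow (by positivity) hρ.le]
      refine Real.one_le_rpow ?_ hα.le
      rw [div_mul_eq_mul_div, le_div_iff₀ hr]; linarith
    have : 0 ≤ C * 2 ^ α * θ⁻¹ * ρ ^ α := by positivity
    linarith
end

section
/- Let J ⊆ ℝ be a compact interval and let f_1, …, f_n : ℝ → ℝ be C^{1+ε} orientation-preserving bijections (each f_j' is positive, Hölder continuous with some exponent ε > 0, and satisfies f_j'(x) ≤ λ_max for some constant λ_max < 1) with f_j(J) ⊆ J for all j, let p̄ be a probability vector with p_j > 0, and let μ be a Borel probability measure with μ = ∑_j p_j (f_j)_*μ. If α > 0 is such that there exist α' > α and C > 0 with μ(B_ρ(x)) ≤ C ρ^{α'} for all x ∈ ℝ and ρ > 0, then there exist r > 0, θ > 0, and a piecewise constant function ψ : ℝ → ℝ vanishing outside the closed r-neighbourhood B_r(J) with θ ≤ ψ(x) ≤ θ^{-1} for all x ∈ B_r(J), such that for every x ∈ B_r(J) one has ∑_j p_j ((f_j^{-1})'(x))^{α} ψ(f_j^{-1}(x)) < ψ(x). -/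
open MeasureTheory
open scoped ENNReal

namespace FD1

/-- The kernel. -/
noncomputable def ker (s M ε t : ℝ) : ℝ := t ^ (-s) * Real.exp (-(M * t ^ ε))

lemma ker_nonneg (s M ε t : ℝ) (ht : 0 ≤ t) : 0 ≤ ker s M ε t :=
  mul_nonneg (Real.rpow_nonneg ht _) (Real.exp_pos _).le

lemma ker_le (s M ε t : ℝ) (hM : 0 ≤ M) (ht : 0 ≤ t) : ker s M ε t ≤ t ^ (-s) := by
  unfold ker
  have h1 : 0 ≤ t ^ (-s) := Real.rpow_nonneg ht _
  have h2 : Real.exp (-(M * t ^ ε)) ≤ 1 := by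
    rw [Real.exp_le_one_iff]
    have := mul_nonneg hM (Real.rpow_nonneg ht ε)
    linarith
  exact mul_le_of_le_one_right h1 h2

lemma ker_anti {s M ε t u : ℝ} (hs : 0 < s) (hM : 0 ≤ M) (hε : 0 < ε) (ht : 0 < t)
    (htu : t ≤ u) : ker s M ε u ≤ ker s M ε t := by
  unfold ker
  have h1 : u ^ (-s) ≤ t ^ (-s) := Real.rpow_le_rpow_of_nonpos ht htu (by linarith)
  have h2 : t ^ ε ≤ u ^ ε := Real.rpow_le_rpow ht.le htu hε.le
  have h3 : 0 ≤ t ^ (-s) := Real.rpow_nonneg ht.le _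
  apply mul_le_mul h1 _ (Real.exp_pos _).le h3
  apply Real.exp_le_exp.2
  have := mul_le_mul_of_nonneg_left h2 hM
  linarith

lemma ker_meas (s M ε x : ℝ) : Measurable fun y => ker s M ε |x - y| := by
  unfold ker
  fun_prop

lemma ker_contract {s M ε α C lam v w t : ℝ} (hα : 0 < α) (hs : α < s) (hε : 0 < ε)
    (hM : 0 ≤ M) (hv : 0 < v) (hw : 0 < w) (hwl : w ≤ lam) (ht : 0 < t)
    (hwv : w ≤ v * Real.exp (C * t ^ ε)) (hMC : α * C ≤ M * (1 - lam ^ ε)) :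
    (v⁻¹) ^ α * ker s M ε t ≤ lam ^ (s - α) * ker s M ε (w * t) := by
  unfold ker
  set T := t ^ ε with hT
  have hT0 : 0 < T := Real.rpow_pos_of_pos ht _
  have h1 : (v⁻¹) ^ α ≤ w ^ (-α) * Real.exp (α * C * T) := by
    have : v⁻¹ ≤ w⁻¹ * Real.exp (C * T) := by
      rw [inv_le_iff_one_le_mul₀ hv, mul_assoc, mul_comm, ← div_eq_mul_inv, le_div_iff₀ hw]
      linarith
    calc (v⁻¹) ^ α ≤ (w⁻¹ * Real.exp (C * T)) ^ α :=
          Real.rpow_le_rpow (by positivity) this hα.le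
      _ = _ := by
          rw [Real.mul_rpow (by positivity) (by positivity), Real.inv_rpow hw.le,
            ← Real.rpow_neg hw.le, ← Real.exp_mul]
          congr 2; ring
  have h2 : w ^ (-α) ≤ lam ^ (s - α) * w ^ (-s) := by
    have : w ^ (-α) = w ^ (s - α) * w ^ (-s) := by
      rw [← Real.rpow_add hw]; congr 1; ring
    rw [this]
    apply mul_le_mul_of_nonneg_right _ (by positivity)
    exact Real.rpow_le_rpow hw.le hwl (by linarith)
  have h3 : Real.exp (α * C * T) * Real.exp (-(M * T)) ≤ Real.exp (-(M * (w ^ ε * T))) := by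
    rw [← Real.exp_add]
    apply Real.exp_le_exp.2
    have h4 : w ^ ε ≤ lam ^ ε := Real.rpow_le_rpow hw.le hwl hε.le
    have h5 : M * w ^ ε ≤ M * lam ^ ε := mul_le_mul_of_nonneg_left h4 hM
    nlinarith
  rw [Real.mul_rpow hw.le ht.le, Real.mul_rpow hw.le ht.le, ← hT]
  have ht' : 0 < t ^ (-s) := Real.rpow_pos_of_pos ht _
  have hl : 0 < lam := by linarith
  calc (v⁻¹) ^ α * (t ^ (-s) * Real.exp (-(M * T)))
      ≤ (w ^ (-α) * Real.exp (α * C * T)) * (t ^ (-s) * Real.exp (-(M * T))) :=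
        mul_le_mul_of_nonneg_right h1 (by positivity)
    _ = w ^ (-α) * t ^ (-s) * (Real.exp (α * C * T) * Real.exp (-(M * T))) := by ring
    _ ≤ (lam ^ (s - α) * w ^ (-s)) * t ^ (-s) * Real.exp (-(M * (w ^ ε * T))) := by
        gcongr
    _ = _ := by ring

/-- Uniform bound on the Riesz potential. -/
lemma energy (μ : Measure ℝ) [IsProbabilityMeasure μ] {s α' C : ℝ} (hs : 0 < s) (hsα : s < α')
    (hC : 0 < C)
    (hreg : ∀ (x ρ : ℝ), 0 < ρ → μ (Metric.closedBall x ρ) ≤ ENNReal.ofReal (C * ρ ^ α')) :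
    ∃ K : ℝ, 0 < K ∧ ∀ x, Integrable (fun y => |x - y| ^ (-s)) μ ∧
      ∫ y, |x - y| ^ (-s) ∂μ ≤ K := by
  have hint : IntegrableOn (fun t : ℝ => C * t ^ (-(α' / s))) (Set.Ioi 1) volume := by
    apply Integrable.const_mul
    apply integrableOn_Ioi_rpow_of_lt _ one_pos
    have : 1 < α' / s := by rwa [one_lt_div hs]
    linarith
  set L := ∫⁻ t in Set.Ioi (1:ℝ), ENNReal.ofReal (C * t ^ (-(α' / s))) with hL
  have hLt : L < ⊤ := Integrable.lintegral_lt_top hint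
  have key : ∀ x, ∫⁻ y, ENNReal.ofReal (|x - y| ^ (-s)) ∂μ ≤ 1 + L := by
    intro x
    rw [lintegral_eq_lintegral_meas_le μ
      (Filter.Eventually.of_forall fun y => Real.rpow_nonneg (abs_nonneg _) _)
      (by fun_prop)]
    rw [← Set.Ioc_union_Ioi_eq_Ioi (zero_le_one' ℝ)]
    refine (lintegral_union_le _ _ _).trans ?_
    apply add_le_add
    · calc _ ≤ ∫⁻ t in Set.Ioc (0:ℝ) 1, 1 := lintegral_mono fun t => prob_le_one
        _ = 1 := by simp
    · apply setLIntegral_mono' measurableSet_Ioi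
      intro t ht
      have ht1 : (1:ℝ) < t := ht
      have ht0 : (0:ℝ) < t := by linarith
      have h1 : {y | t ≤ |x - y| ^ (-s)} ⊆ Metric.closedBall x (t ^ (-(1 / s))) := by
        intro y hy
        have hy' : t ≤ |x - y| ^ (-s) := hy
        rw [Metric.mem_closedBall, dist_comm, Real.dist_eq]
        rcases (abs_nonneg (x - y)).eq_or_lt with h0 | h0
        · rw [← h0]; positivity
        · have := Real.rpow_le_rpow_of_nonpos ht0 hy' (z := -(1 / s))
            (by have : 0 < 1 / s := by positivity
                linarith)
          rw [← Real.rpow_mul h0.le] at this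
          have e : -s * -(1 / s) = 1 := by field_simp
          rwa [e, Real.rpow_one] at this
      refine (measure_mono h1).trans ((hreg x _ (by positivity)).trans ?_)
      rw [← Real.rpow_mul ht0.le]
      apply le_of_eq
      congr 3
      ring
  have hfin : (1 + L) ≠ ⊤ := by simp [hLt.ne]
  refine ⟨(1 + L).toReal, ?_, fun x => ?_⟩
  · apply ENNReal.toReal_pos _ hfin
    simp
  have hnn : 0 ≤ᵐ[μ] fun y => |x - y| ^ (-s) :=
    Filter.Eventually.of_forall fun y => Real.rpow_nonneg (abs_nonneg _) _
  have hI : Integrable (fun y => |x - y| ^ (-s)) μ := by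
    refine ⟨Measurable.aestronglyMeasurable (by fun_prop), ?_⟩
    rw [hasFiniteIntegral_iff_ofReal hnn]
    exact (key x).trans_lt hfin.lt_top
  refine ⟨hI, ?_⟩
  rw [← ENNReal.ofReal_le_iff_le_toReal hfin, ofReal_integral_eq_lintegral_ofReal hI hnn]
  exact key x

lemma noatom (μ : Measure ℝ) {α' C : ℝ} (hα : 0 < α')
    (hreg : ∀ (x ρ : ℝ), 0 < ρ → μ (Metric.closedBall x ρ) ≤ ENNReal.ofReal (C * ρ ^ α')) (x : ℝ) :
    ∀ᵐ y ∂μ, y ≠ x := by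
  have h0 : μ {x} = 0 := by
    have hle : ∀ᶠ ρ in nhdsWithin (0:ℝ) (Set.Ioi 0), μ {x} ≤ ENNReal.ofReal (C * ρ ^ α') := by
      filter_upwards [self_mem_nhdsWithin] with ρ hρ
      have hρ' : 0 < ρ := hρ
      exact (measure_mono (by simp [hρ'.le])).trans (hreg x ρ hρ)
    have ht : Filter.Tendsto (fun ρ : ℝ => ENNReal.ofReal (C * ρ ^ α'))
        (nhdsWithin (0:ℝ) (Set.Ioi 0)) (nhds 0) := by
      have hc : Continuous fun ρ : ℝ => ENNReal.ofReal (C * ρ ^ α') :=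
        ENNReal.continuous_ofReal.comp
          (continuous_const.mul (Real.continuous_rpow_const hα.le))
      have := (hc.tendsto 0).mono_left (nhdsWithin_le_nhds (s := Set.Ioi 0))
      simpa [Real.zero_rpow hα.ne'] using this
    exact le_antisymm (ge_of_tendsto ht hle) (zero_le)
  rw [ae_iff]; simpa using h0

/-- Uniform approximation of a continuous function by step functions on an interval. -/
lemma step_approx (g : ℝ → ℝ) (hg : Continuous g) (A B η : ℝ) (hη : 0 < η) :
    ∃ ψ : ℝ → ℝ, (∃ (m : ℕ) (coef : Fin m → ℝ) (I : Fin m → Set ℝ),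
          (∀ i, (I i).OrdConnected) ∧
          ψ = fun x => ∑ i, (I i).indicator (fun _ => coef i) x) ∧
      (∀ x ∉ Set.Icc A B, ψ x = 0) ∧ ∀ x ∈ Set.Icc A B, |ψ x - g x| ≤ η := by
  have hu := (isCompact_Icc (a := A) (b := B)).uniformContinuousOn_of_continuous hg.continuousOn
  obtain ⟨w, hw, hw'⟩ := Metric.uniformContinuousOn_iff_le.1 hu η hη
  let m := ⌊(B - A) / w⌋₊ + 1
  let I : Fin m → Set ℝ := fun i => Set.Icc A B ∩ Set.Ico (A + i * w) (A + (i + 1) * w)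
  let coef : Fin m → ℝ := fun i => g (A + i * w)
  refine ⟨_, ⟨m, coef, I, fun i => Set.ordConnected_Icc.inter Set.ordConnected_Ico, rfl⟩, ?_, ?_⟩
  · intro x hx
    apply Finset.sum_eq_zero
    intro i _
    exact Set.indicator_of_notMem (fun h => hx h.1) _
  · intro x hx
    have hxA : 0 ≤ (x - A) / w := div_nonneg (by linarith [hx.1]) hw.le
    have hlt : ⌊(x - A) / w⌋₊ < m := by
      apply Nat.lt_succ_of_le
      apply Nat.floor_le_floor
      gcongr
      exact hx.2
    set k := ⌊(x - A) / w⌋₊ with hk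
    have h1 : A + k * w ≤ x := by
      have := Nat.floor_le hxA
      rw [← hk, le_div_iff₀ hw] at this
      linarith
    have h2 : x < A + (k + 1) * w := by
      have := Nat.lt_floor_add_one ((x - A) / w)
      rw [← hk, div_lt_iff₀ hw] at this
      linarith
    have hs : ∑ i, (I i).indicator (fun _ => coef i) x = g (A + k * w) := by
      rw [Finset.sum_eq_single (⟨k, hlt⟩ : Fin m)]
      · rw [Set.indicator_of_mem]
        exact ⟨hx, h1, h2⟩
      · intro i _ hi
        apply Set.indicator_of_notMem
        rintro ⟨-, h3, h4⟩
        apply hi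
        apply Fin.ext
        show (i : ℕ) = k
        symm
        rw [hk, Nat.floor_eq_iff hxA]
        constructor
        · rw [le_div_iff₀ hw]; linarith
        · rw [div_lt_iff₀ hw]; linarith
      · simp
    show |(∑ i, (I i).indicator (fun _ => coef i) x) - g x| ≤ η
    rw [hs, ← Real.dist_eq]
    have hkw : 0 ≤ (k:ℝ) * w := by positivity
    apply hw' _ ⟨by linarith, by linarith [hx.2]⟩ _ hx
    rw [Real.dist_eq, abs_le]
    constructor <;> linarith

lemma cthick (a b r : ℝ) (hab : a ≤ b) (hr : 0 ≤ r) :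
    Metric.cthickening r (Set.Icc a b) = Set.Icc (a - r) (b + r) := by
  rw [isCompact_Icc.cthickening_eq_biUnion_closedBall hr]
  ext x
  simp only [Set.mem_iUnion, Real.closedBall_eq_Icc, Set.mem_Icc, exists_prop]
  constructor
  · rintro ⟨y, hy, h⟩
    constructor <;> linarith [hy.1, hy.2, h.1, h.2]
  · rintro ⟨h1, h2⟩
    refine ⟨max a (min x b), ⟨le_max_left _ _, max_le hab (min_le_right _ _)⟩, ?_, ?_⟩
    · rcases le_total a (min x b) with h | h
      · rw [max_eq_right h]; linarith [min_le_left x b]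
      · rw [max_eq_left h]; linarith
    · rcases le_total x b with h | h
      · rw [min_eq_left h]; linarith [le_max_right a x]
      · rw [min_eq_right h]; linarith [le_max_right a b]

/-- Step function approximation of the potential. -/
lemma potential_approx (μ : Measure ℝ) [IsProbabilityMeasure μ] {s α' C M ε : ℝ} (hs : 0 < s)
    (hsα : s < α') (hC : 0 < C) (hM : 0 ≤ M) (hε : 0 < ε)
    (hreg : ∀ (x ρ : ℝ), 0 < ρ → μ (Metric.closedBall x ρ) ≤ ENNReal.ofReal (C * ρ ^ α'))
    (hI : ∀ x, Integrable (fun y => ker s M ε |x - y|) μ)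
    (η : ℝ) (hη : 0 < η) :
    ∃ g : ℝ → ℝ, Continuous g ∧ ∀ x, |g x - ∫ y, ker s M ε |x - y| ∂μ| ≤ η := by
  obtain ⟨K, hK, hE⟩ := energy μ (s := (s + α') / 2) (by linarith) (by linarith) hC hreg
  set β := (α' - s) / 2 with hβ
  have hβ0 : 0 < β := by rw [hβ]; linarith
  -- choose the truncation
  obtain ⟨δ, hδ, hδη⟩ : ∃ δ : ℝ, 0 < δ ∧ δ ^ β * K ≤ η := by
    refine ⟨(η / K) ^ (1 / β), by positivity, ?_⟩
    rw [← Real.rpow_mul (by positivity), one_div_mul_cancel hβ0.ne', Real.rpow_one]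
    exact le_of_eq (by field_simp)
  have hmeas : ∀ x, Measurable fun y => ker s M ε (max |x - y| δ) := by
    intro x; unfold ker; fun_prop
  have hbd : ∀ x y : ℝ, ‖ker s M ε (max |x - y| δ)‖ ≤ ker s M ε δ := by
    intro x y
    rw [Real.norm_of_nonneg (ker_nonneg _ _ _ _ (hδ.le.trans (le_max_right _ _)))]
    exact ker_anti hs hM hε hδ (le_max_right _ _)
  have hI' : ∀ x, Integrable (fun y => ker s M ε (max |x - y| δ)) μ := fun x =>
    (integrable_const (ker s M ε δ)).mono' (hmeas x).aestronglyMeasurable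
      (Filter.Eventually.of_forall (hbd x))
  refine ⟨fun x => ∫ y, ker s M ε (max |x - y| δ) ∂μ, ?_, ?_⟩
  · apply continuous_of_dominated (bound := fun _ => ker s M ε δ)
    · exact fun x => (hmeas x).aestronglyMeasurable
    · exact fun x => Filter.Eventually.of_forall (hbd x)
    · exact integrable_const _
    · refine Filter.Eventually.of_forall fun y => ?_
      have hc : Continuous fun x : ℝ => max |x - y| δ := by fun_prop
      have hp : ∀ x : ℝ, max |x - y| δ ≠ 0 := fun x => (hδ.trans_le (le_max_right _ _)).ne'
      unfold ker
      exact (hc.rpow_const fun x => Or.inl (hp x)).mul (Real.continuous_exp.comp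
        (continuous_const.mul (hc.rpow_const fun x => Or.inl (hp x))).neg)
  · intro x
    have hpt : ∀ᵐ y ∂μ, ker s M ε (max |x - y| δ) ≤ ker s M ε |x - y| ∧
        ker s M ε |x - y| - ker s M ε (max |x - y| δ) ≤ δ ^ β * |x - y| ^ (-((s + α') / 2)) := by
      filter_upwards [noatom μ (by linarith) hreg x] with y hy
      have ht : 0 < |x - y| := abs_pos.2 (sub_ne_zero.2 hy.symm)
      refine ⟨ker_anti hs hM hε ht (le_max_left _ _), ?_⟩
      rcases le_total δ |x - y| with h | h
      · rw [max_eq_left h, sub_self]; positivity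
      · have h1 := ker_le s M ε _ hM ht.le
        have h2 := ker_nonneg s M ε (max |x - y| δ) (hδ.le.trans (le_max_right _ _))
        have h3 : |x - y| ^ (-s) = |x - y| ^ β * |x - y| ^ (-((s + α') / 2)) := by
          rw [← Real.rpow_add ht]; congr 1; rw [hβ]; ring
        have h4 : |x - y| ^ β ≤ δ ^ β := Real.rpow_le_rpow ht.le h hβ0.le
        have h5 : |x - y| ^ β * |x - y| ^ (-((s + α') / 2)) ≤
            δ ^ β * |x - y| ^ (-((s + α') / 2)) :=
          mul_le_mul_of_nonneg_right h4 (by positivity)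
        linarith
    have e1 : ∫ y, ker s M ε (max |x - y| δ) ∂μ ≤ ∫ y, ker s M ε |x - y| ∂μ :=
      integral_mono_ae (hI' x) (hI x) (hpt.mono fun y h => h.1)
    have e2 := integral_mono_ae ((hI x).sub (hI' x)) ((hE x).1.const_mul (δ ^ β))
      (hpt.mono fun y h => h.2)
    simp only [Pi.sub_apply] at e2
    rw [integral_sub (hI x) (hI' x), integral_const_mul] at e2
    have e3 := mul_le_mul_of_nonneg_left (hE x).2 (Real.rpow_nonneg hδ.le β)
    rw [abs_le]
    constructor <;> linarith

/-- One-step inequality for a single contraction. -/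
lemma distortion (f f' : ℝ → ℝ) {ε lam Ch m A B : ℝ} (hε : 0 < ε)
    (hderiv : ∀ x, HasDerivAt f (f' x) x)
    (hpos : ∀ x, 0 < f' x) (hle : ∀ x, f' x ≤ lam) (hCh : 0 ≤ Ch)
    (hholder : ∀ x y, |f' x - f' y| ≤ Ch * |x - y| ^ ε) (hm : 0 < m)
    (hmB : ∀ x ∈ Set.Icc A B, m ≤ f' x) (u z : ℝ) (hu : u ∈ Set.Icc A B) (huz : z ≠ u) :
    ∃ w, 0 < w ∧ w ≤ lam ∧ |f u - f z| = w * |u - z| ∧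
      w ≤ f' u * Real.exp (Ch / m * |u - z| ^ ε) := by
  have hcont : Continuous f := continuous_iff_continuousAt.2 fun x => (hderiv x).continuousAt
  obtain ⟨ξ, hξ, hξu⟩ : ∃ ξ, f u - f z = f' ξ * (u - z) ∧ |ξ - u| ≤ |u - z| := by
    rcases lt_or_gt_of_ne huz with h | h
    · obtain ⟨c, hc, hc'⟩ := exists_hasDerivAt_eq_slope f f' h hcont.continuousOn
        fun x _ => hderiv x
      refine ⟨c, ?_, ?_⟩
      · rw [hc', div_mul_cancel₀]; linarith
      · rw [abs_of_neg (by linarith [hc.2]), abs_of_pos (by linarith)]; linarith [hc.1]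
    · obtain ⟨c, hc, hc'⟩ := exists_hasDerivAt_eq_slope f f' h hcont.continuousOn
        fun x _ => hderiv x
      refine ⟨c, ?_, ?_⟩
      · have : z - u ≠ 0 := by linarith
        rw [hc']; field_simp; ring
      · rw [abs_of_pos (by linarith [hc.1]), abs_of_neg (by linarith)]; linarith [hc.2]
  refine ⟨f' ξ, hpos ξ, hle ξ, ?_, ?_⟩
  · rw [hξ, abs_mul, abs_of_pos (hpos ξ)]
  · have h1 : f' ξ ≤ f' u + Ch * |u - z| ^ ε := by
      have := (le_abs_self _).trans (hholder ξ u)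
      have h2 : |ξ - u| ^ ε ≤ |u - z| ^ ε := Real.rpow_le_rpow (abs_nonneg _) hξu hε.le
      have := mul_le_mul_of_nonneg_left h2 hCh
      linarith
    have h2 : Ch * |u - z| ^ ε ≤ f' u * (Ch / m * |u - z| ^ ε) := by
      have h3 : 0 ≤ Ch / m * |u - z| ^ ε := by positivity
      calc Ch * |u - z| ^ ε = m * (Ch / m * |u - z| ^ ε) := by field_simp
        _ ≤ _ := mul_le_mul_of_nonneg_right (hmB u hu) h3
    have h3 := Real.add_one_le_exp (Ch / m * |u - z| ^ ε)
    have h4 := mul_le_mul_of_nonneg_left h3 (hpos u).le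
    linarith

lemma inv_deriv (f f' : ℝ → ℝ) (hbij : Function.Bijective f)
    (hderiv : ∀ x, HasDerivAt f (f' x) x) (hpos : ∀ x, 0 < f' x) (x : ℝ) :
    deriv (Function.invFun f) x = (f' (Function.invFun f x))⁻¹ := by
  have hmono := strictMono_of_hasDerivAt_pos hderiv hpos
  have hr : ∀ y, f (Function.invFun f y) = y := Function.rightInverse_invFun hbij.2
  have hc : Continuous (Function.invFun f) := by
    have he : Function.invFun f = (hmono.orderIsoOfSurjective f hbij.2).symm := by
      funext y
      apply hbij.1
      rw [hr]
      exact ((hmono.orderIsoOfSurjective f hbij.2).apply_symm_apply y).symm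
    rw [he]
    exact OrderIso.continuous _
  exact (HasDerivAt.of_local_left_inverse hc.continuousAt (hderiv _) (hpos _).ne'
    (Filter.Eventually.of_forall hr)).deriv

lemma maps_nbhd (f f' : ℝ → ℝ) {a b lam t : ℝ} (hab : a ≤ b)
    (hderiv : ∀ x, HasDerivAt f (f' x) x) (hpos : ∀ x, 0 < f' x) (hle : ∀ x, f' x ≤ lam)
    (hmaps : ∀ x ∈ Set.Icc a b, f x ∈ Set.Icc a b) (ht : 0 ≤ t) (x : ℝ)
    (hx : x ∈ Set.Icc (a - t) (b + t)) : f x ∈ Set.Icc (a - lam * t) (b + lam * t) := by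
  have hmono := (strictMono_of_hasDerivAt_pos hderiv hpos).monotone
  have hlip : ∀ u v, u ≤ v → f v - f u ≤ lam * (v - u) := by
    intro u v huv
    exact image_sub_le_mul_sub_of_deriv_le (fun x => (hderiv x).differentiableAt)
      (fun x => by rw [(hderiv x).deriv]; exact hle x) huv
  have h1 := hlip b (b + t) (by linarith)
  have h2 := hlip (a - t) a (by linarith)
  have h3 := hmono hx.1
  have h4 := hmono hx.2
  have h5 := (hmaps a ⟨le_rfl, hab⟩).1
  have h6 := (hmaps b ⟨hab, le_rfl⟩).2
  constructor <;> nlinarith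

/-- The stationary measure lives on the unit neighbourhood of `J`. -/
lemma supp {n : ℕ} {a b lam : ℝ} (hl0 : 0 < lam) (hl : lam < 1)
    (f : Fin n → ℝ → ℝ) (hfm : ∀ j, Measurable (f j))
    (hmaps : ∀ j t, 0 ≤ t → ∀ x ∈ Set.Icc (a - t) (b + t),
      f j x ∈ Set.Icc (a - lam * t) (b + lam * t))
    (p : Fin n → ℝ) (hp : ∀ j, 0 < p j) (hpsum : ∑ j, p j = 1)
    (μ : Measure ℝ) [IsProbabilityMeasure μ]
    (hμ : μ = ∑ j, ENNReal.ofReal (p j) • Measure.map (f j) μ) :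
    ∀ᵐ y ∂μ, y ∈ Set.Icc (a - 1) (b + 1) := by
  have hps : ∑ j, ENNReal.ofReal (p j) = 1 := by
    rw [← ENNReal.ofReal_sum_of_nonneg fun j _ => (hp j).le, hpsum, ENNReal.ofReal_one]
  have hstep : ∀ t, 0 ≤ t → μ (Set.Icc (a - lam * t) (b + lam * t))ᶜ ≤
      μ (Set.Icc (a - t) (b + t))ᶜ := by
    intro t ht
    have e := congrArg (fun ν : Measure ℝ => ν (Set.Icc (a - lam * t) (b + lam * t))ᶜ) hμ
    simp only [Measure.finsetSum_apply, Measure.smul_apply, smul_eq_mul] at e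
    rw [e]
    calc _ ≤ ∑ j, ENNReal.ofReal (p j) * μ (Set.Icc (a - t) (b + t))ᶜ := by
          apply Finset.sum_le_sum
          intro j _
          refine mul_le_mul_right ?_ _
          rw [Measure.map_apply (hfm j) measurableSet_Icc.compl]
          apply measure_mono
          intro x hx hx'
          exact hx (hmaps j t ht x hx')
      _ = _ := by rw [← Finset.sum_mul, hps, one_mul]
  have hiter : ∀ k : ℕ, μ (Set.Icc (a - 1) (b + 1))ᶜ ≤
      μ (Set.Icc (a - (lam ^ k)⁻¹) (b + (lam ^ k)⁻¹))ᶜ := by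
    intro k
    induction k with
    | zero => simp
    | succ k ih =>
      refine ih.trans ?_
      have := hstep (lam ^ (k + 1))⁻¹ (by positivity)
      have e : lam * (lam ^ (k + 1))⁻¹ = (lam ^ k)⁻¹ := by
        rw [pow_succ]; field_simp
      rwa [e] at this
  have hanti : Antitone fun k : ℕ => (Set.Icc (a - (lam ^ k)⁻¹) (b + (lam ^ k)⁻¹))ᶜ := by
    intro k l hkl
    apply Set.compl_subset_compl.2
    have : (lam ^ k)⁻¹ ≤ (lam ^ l)⁻¹ := by
      apply inv_anti₀ (by positivity)
      exact pow_le_pow_of_le_one hl0.le hl.le hkl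
    apply Set.Icc_subset_Icc <;> linarith
  have hlim := tendsto_measure_iInter_atTop (μ := μ)
    (fun k => (measurableSet_Icc.compl).nullMeasurableSet) hanti ⟨0, measure_ne_top _ _⟩
  have hempty : (⋂ k : ℕ, (Set.Icc (a - (lam ^ k)⁻¹) (b + (lam ^ k)⁻¹))ᶜ) = ∅ := by
    rw [Set.eq_empty_iff_forall_notMem]
    intro x hx
    have hx' := Set.mem_iInter.1 hx
    have ht : Filter.Tendsto (fun k : ℕ => (lam⁻¹) ^ k) Filter.atTop Filter.atTop :=
      tendsto_pow_atTop_atTop_of_one_lt ((one_lt_inv₀ hl0).2 hl)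
    obtain ⟨k, hk⟩ := (ht.eventually_ge_atTop (max (a - x) (x - b))).exists
    rw [inv_pow] at hk
    apply hx' k
    have h1 := le_max_left (a - x) (x - b)
    have h2 := le_max_right (a - x) (x - b)
    constructor <;> linarith
  rw [hempty, measure_empty] at hlim
  have : μ (Set.Icc (a - 1) (b + 1))ᶜ = 0 :=
    le_antisymm (ge_of_tendsto' hlim hiter) (zero_le)
  exact this

end FD1

/-- Theorem (existence of a test function for the Frostman dimension): for an iterated
function scheme of uniformly contracting `C^{1+ε}` orientation-preserving diffeomorphisms
preserving a compact interval `J = [a,b]`, if the stationary measure `μ` is `α'`-regular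
for some `α' > α`, then there are `r > 0`, `θ > 0` and a piecewise constant test function
`ψ` supported on the closed `r`-neighbourhood `B_r(J)` and bounded between `θ` and `θ⁻¹`
there, which is strictly decreased on `B_r(J)` by the asymmetric diffusion operator
`D^{(1)}_{α,T}`. -/
theorem finding_D1 (n : ℕ) (a b : ℝ) (hab : a ≤ b)
    (ε lamMax : ℝ) (hε : 0 < ε) (hlam : lamMax < 1)
    (f : Fin n → ℝ → ℝ) (f' : Fin n → ℝ → ℝ)
    (hbij : ∀ j, Function.Bijective (f j))
    (hderiv : ∀ j x, HasDerivAt (f j) (f' j x) x)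
    (hpos : ∀ j x, 0 < f' j x)
    (hle : ∀ j x, f' j x ≤ lamMax)
    (Ch : ℝ) (hholder : ∀ j x y, |f' j x - f' j y| ≤ Ch * |x - y| ^ ε)
    (hmaps : ∀ j, ∀ x ∈ Set.Icc a b, f j x ∈ Set.Icc a b)
    (p : Fin n → ℝ) (hp : ∀ j, 0 < p j) (hpsum : ∑ j, p j = 1)
    (μ : Measure ℝ) [IsProbabilityMeasure μ]
    (hμ : μ = ∑ j, ENNReal.ofReal (p j) • Measure.map (f j) μ)
    (α : ℝ) (hα : 0 < α)
    (hreg : ∃ α' : ℝ, α < α' ∧ ∃ C : ℝ, 0 < C ∧ ∀ (x ρ : ℝ), 0 < ρ →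
      μ (Metric.closedBall x ρ) ≤ ENNReal.ofReal (C * ρ ^ α')) :
    ∃ r : ℝ, 0 < r ∧ ∃ θ : ℝ, 0 < θ ∧
    ∃ ψ : ℝ → ℝ,
      -- `ψ` is piecewise constant: a finite linear combination of indicators of intervals
      (∃ (m : ℕ) (coef : Fin m → ℝ) (I : Fin m → Set ℝ),
          (∀ i, (I i).OrdConnected) ∧
          ψ = fun x => ∑ i, (I i).indicator (fun _ => coef i) x) ∧
      (∀ x ∉ Metric.cthickening r (Set.Icc a b), ψ x = 0) ∧
      (∀ x ∈ Metric.cthickening r (Set.Icc a b), θ ≤ ψ x ∧ ψ x ≤ θ⁻¹) ∧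
      ∀ x ∈ Metric.cthickening r (Set.Icc a b),
        ∑ j, p j * (deriv (Function.invFun (f j)) x) ^ α * ψ (Function.invFun (f j) x)
          < ψ x := by
  classical
  obtain ⟨α', hαα', C, hC, hreg⟩ := hreg
  -- nonemptiness
  have hn : Nonempty (Fin n) := by
    by_contra h
    rw [not_nonempty_iff] at h
    simp at hpsum
  obtain ⟨j0⟩ := id hn
  have hl0 : 0 < lamMax := (hpos j0 0).trans_le (hle j0 0)
  have hCh : 0 ≤ Ch := by
    have := (abs_nonneg _).trans (hholder j0 0 1)
    simpa using this
  set s := (α + α') / 2 with hs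
  have hsα : α < s := by rw [hs]; linarith
  have hsα' : s < α' := by rw [hs]; linarith
  have hs0 : 0 < s := hα.trans hsα
  have hfc : ∀ j, Continuous (f j) := fun j =>
    continuous_iff_continuousAt.2 fun x => (hderiv j x).continuousAt
  have hf'c : ∀ j, Continuous (f' j) := by
    intro j
    rw [continuous_iff_continuousAt]
    intro x
    rw [ContinuousAt, tendsto_iff_dist_tendsto_zero]
    have hc : Continuous fun y : ℝ => Ch * |y - x| ^ ε :=
      continuous_const.mul ((by fun_prop : Continuous fun y : ℝ => |y - x|).rpow_const
        fun _ => Or.inr hε.le)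
    have ht := hc.tendsto x
    simp only [sub_self, abs_zero, Real.zero_rpow hε.ne', mul_zero] at ht
    exact squeeze_zero (fun _ => dist_nonneg)
      (fun y => by rw [Real.dist_eq]; exact hholder j y x) ht
  set A := a - 1 with hA
  set B := b + 1 with hB
  -- lower bound for the derivatives
  obtain ⟨m, hm, hmB⟩ : ∃ m : ℝ, 0 < m ∧ ∀ j, ∀ x ∈ Set.Icc A B, m ≤ f' j x := by
    have h1 : ∀ j, ∃ m : ℝ, 0 < m ∧ ∀ x ∈ Set.Icc A B, m ≤ f' j x := by
      intro j
      obtain ⟨x0, -, hx0⟩ := (isCompact_Icc (a := A) (b := B)).exists_isMinOn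
        (Set.nonempty_Icc.2 (by linarith)) (hf'c j).continuousOn
      exact ⟨f' j x0, hpos j x0, fun x hx => hx0 hx⟩
    choose m hm hm' using h1
    refine ⟨Finset.univ.inf' Finset.univ_nonempty m, ?_, ?_⟩
    · rw [Finset.lt_inf'_iff]; exact fun j _ => hm j
    · intro j x hx
      exact (Finset.inf'_le _ (Finset.mem_univ j)).trans (hm' j x hx)
  have hlε : lamMax ^ ε < 1 := Real.rpow_lt_one hl0.le hlam hε
  set M := α * (Ch / m) / (1 - lamMax ^ ε) with hMdef
  have hM : 0 ≤ M := div_nonneg (by positivity) (by linarith)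
  have hMC : α * (Ch / m) ≤ M * (1 - lamMax ^ ε) := by
    rw [hMdef, div_mul_cancel₀]; linarith
  set q := lamMax ^ (s - α) with hq
  have hq0 : 0 < q := Real.rpow_pos_of_pos hl0 _
  have hq1 : q < 1 := Real.rpow_lt_one hl0.le hlam (by linarith)
  have hnb : ∀ j t, 0 ≤ t → ∀ x ∈ Set.Icc (a - t) (b + t),
      f j x ∈ Set.Icc (a - lamMax * t) (b + lamMax * t) := fun j t ht x hx =>
    FD1.maps_nbhd (f j) (f' j) hab (hderiv j) (hpos j) (hle j) (hmaps j) ht x hx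
  have hsupp : ∀ᵐ y ∂μ, y ∈ Set.Icc A B :=
    FD1.supp hl0 hlam f (fun j => (hfc j).measurable) hnb p hp hpsum μ hμ
  obtain ⟨K, hK, hE⟩ := FD1.energy μ hs0 hsα' hC hreg
  have hI : ∀ x, Integrable (fun y => FD1.ker s M ε |x - y|) μ := fun x =>
    (hE x).1.mono' (FD1.ker_meas s M ε x).aestronglyMeasurable
      (Filter.Eventually.of_forall fun y => by
        rw [Real.norm_of_nonneg (FD1.ker_nonneg _ _ _ _ (abs_nonneg _))]
        exact FD1.ker_le _ _ _ _ hM (abs_nonneg _))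
  set Ψ : ℝ → ℝ := fun x => ∫ y, FD1.ker s M ε |x - y| ∂μ with hΨ
  have hΨK : ∀ x, Ψ x ≤ K := fun x =>
    (integral_mono (hI x) (hE x).1 fun y => FD1.ker_le _ _ _ _ hM (abs_nonneg _)).trans (hE x).2
  -- lower bound for the potential
  have hAB : 0 < B - A := by rw [hA, hB]; linarith
  set c := FD1.ker s M ε (B - A) with hc
  have hc0 : 0 < c := mul_pos (Real.rpow_pos_of_pos hAB _) (Real.exp_pos _)
  have hΨc : ∀ x ∈ Set.Icc A B, c ≤ Ψ x := by
    intro x hx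
    have h1 : ∫ _ : ℝ, c ∂μ ≤ Ψ x := by
      apply integral_mono_ae (integrable_const _) (hI x)
      filter_upwards [hsupp, FD1.noatom μ (by linarith) hreg x] with y hy hyx
      apply FD1.ker_anti hs0 hM hε (abs_pos.2 (sub_ne_zero.2 hyx.symm))
      rw [abs_le]
      constructor <;> linarith [hx.1, hx.2, hy.1, hy.2]
    simpa using h1
  -- stationarity
  have hfk : ∀ x j, Integrable (fun z => FD1.ker s M ε |x - f j z|) μ := by
    intro x j
    have h1 : Integrable (fun y => FD1.ker s M ε |x - y|)
        (ENNReal.ofReal (p j) • Measure.map (f j) μ) := by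
      apply (hI x).mono_measure
      conv_rhs => rw [hμ]
      exact Finset.single_le_sum
        (f := fun j => ENNReal.ofReal (p j) • Measure.map (f j) μ)
        (fun _ _ => Measure.zero_le _) (Finset.mem_univ j)
    rw [integrable_smul_measure (by simpa using hp j) ENNReal.ofReal_ne_top] at h1
    exact (integrable_map_measure (FD1.ker_meas s M ε x).aestronglyMeasurable
      (hfc j).measurable.aemeasurable).1 h1
  have hstat : ∀ x, Ψ x = ∑ j, p j * ∫ z, FD1.ker s M ε |x - f j z| ∂μ := by
    intro x
    have e := congrArg (fun ν : Measure ℝ => ∫ y, FD1.ker s M ε |x - y| ∂ν) hμ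
    rw [hΨ]
    simp only
    rw [e, integral_finsetSum_measure]
    · apply Finset.sum_congr rfl
      intro j _
      rw [integral_smul_measure, ENNReal.toReal_ofReal (hp j).le, smul_eq_mul,
        integral_map (hfc j).measurable.aemeasurable
          (FD1.ker_meas s M ε x).aestronglyMeasurable]
    · intro j _
      apply Integrable.smul_measure _ ENNReal.ofReal_ne_top
      rw [integrable_map_measure (FD1.ker_meas s M ε x).aestronglyMeasurable
        (hfc j).measurable.aemeasurable]
      exact hfk x j
  -- one-map inequality
  have hone : ∀ j, ∀ u ∈ Set.Icc A B,
      ((f' j u)⁻¹) ^ α * Ψ u ≤ q * ∫ z, FD1.ker s M ε |f j u - f j z| ∂μ := by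
    intro j u hu
    rw [hΨ]
    simp only
    rw [← integral_const_mul, ← integral_const_mul]
    apply integral_mono_ae ((hI u).const_mul _) ((hfk _ j).const_mul _)
    filter_upwards [FD1.noatom μ (by linarith) hreg u] with z hz
    obtain ⟨w, hw0, hwl, hwe, hwv⟩ := FD1.distortion (f j) (f' j) hε (hderiv j) (hpos j) (hle j)
      hCh (hholder j) hm (hmB j) u z hu hz
    rw [hwe]
    exact FD1.ker_contract hα hsα hε hM (hpos j u) hw0 hwl
      (abs_pos.2 (sub_ne_zero.2 hz.symm)) hwv hMC
  -- choice of the error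
  set G := (m⁻¹) ^ α with hG
  have hG0 : 0 < G := Real.rpow_pos_of_pos (inv_pos.2 hm) _
  obtain ⟨η, hη, hηc⟩ : ∃ η : ℝ, 0 < η ∧ 2 * η * (1 + G) < (1 - q) * c := by
    refine ⟨(1 - q) * c / (4 * (1 + G)), ?_, ?_⟩
    · have : 0 < 1 - q := by linarith
      positivity
    · have h1 : 0 < (1 - q) * c := mul_pos (by linarith) hc0
      have : 2 * ((1 - q) * c / (4 * (1 + G))) * (1 + G) = (1 - q) * c / 2 := by
        field_simp; ring
      rw [this]; linarith
  obtain ⟨g, hg, hgΨ⟩ := FD1.potential_approx μ hs0 hsα' hC hM hε hreg hI η hη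
  obtain ⟨ψ, hψ, hψ0, hψg⟩ := FD1.step_approx g hg A B η hη
  have hψΨ : ∀ x ∈ Set.Icc A B, Ψ x - 2 * η ≤ ψ x ∧ ψ x ≤ Ψ x + 2 * η := by
    intro x hx
    have h1 := abs_le.1 (hgΨ x)
    have h2 := abs_le.1 (hψg x hx)
    have h3 : Ψ x = ∫ y, FD1.ker s M ε |x - y| ∂μ := rfl
    constructor <;> linarith [h1.1, h1.2, h2.1, h2.2]
  have hη2 : 2 * η < (1 - q) * c := by nlinarith
  set c1 := c - 2 * η with hc1
  have hc10 : 0 < c1 := by nlinarith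
  set θ := min c1 (K + 2 * η)⁻¹ with hθ
  have hK2 : 0 < K + 2 * η := by positivity
  have hθ0 : 0 < θ := lt_min hc10 (inv_pos.2 hK2)
  refine ⟨1, one_pos, θ, hθ0, ψ, hψ, ?_⟩
  rw [FD1.cthick a b 1 hab zero_le_one]
  refine ⟨hψ0, fun x hx => ⟨?_, ?_⟩, fun x hx => ?_⟩
  · linarith [min_le_left c1 (K + 2 * η)⁻¹, (hψΨ x hx).1, hΨc x hx]
  · have h1 : K + 2 * η ≤ θ⁻¹ := by
      rw [le_inv_comm₀ hK2 hθ0]; exact min_le_right _ _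
    linarith [(hψΨ x hx).2, hΨK x]
  · have hterm : ∀ j, p j * (deriv (Function.invFun (f j)) x) ^ α * ψ (Function.invFun (f j) x) ≤
        q * (p j * ∫ z, FD1.ker s M ε |x - f j z| ∂μ) + p j * (2 * η * G) := by
      intro j
      rw [FD1.inv_deriv (f j) (f' j) (hbij j) (hderiv j) (hpos j) x]
      have hfu : f j (Function.invFun (f j) x) = x := Function.rightInverse_invFun (hbij j).2 x
      set u := Function.invFun (f j) x with hu
      have hint : 0 ≤ ∫ z, FD1.ker s M ε |x - f j z| ∂μ :=
        integral_nonneg fun z => FD1.ker_nonneg _ _ _ _ (abs_nonneg _)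
      have hpj := hp j
      by_cases huB : u ∈ Set.Icc A B
      · have h1 := hone j u huB
        rw [hfu] at h1
        have h2 : ((f' j u)⁻¹) ^ α ≤ G :=
          Real.rpow_le_rpow (inv_nonneg.2 (hpos j u).le) (inv_anti₀ hm (hmB j u huB)) hα.le
        have h3 : 0 ≤ ((f' j u)⁻¹) ^ α := Real.rpow_nonneg (inv_nonneg.2 (hpos j u).le) _
        have h4 := mul_le_mul_of_nonneg_left (hψΨ u huB).2 h3
        have h5 : ((f' j u)⁻¹) ^ α * (2 * η) ≤ G * (2 * η) :=
          mul_le_mul_of_nonneg_right h2 (by linarith)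
        have h6 : ((f' j u)⁻¹) ^ α * ψ u ≤
            q * (∫ z, FD1.ker s M ε |x - f j z| ∂μ) + 2 * η * G := by linarith
        have h7 := mul_le_mul_of_nonneg_left h6 hpj.le
        linarith
      · rw [hψ0 u huB, mul_zero]
        positivity
    have hsum := Finset.sum_le_sum fun j (_ : j ∈ Finset.univ) => hterm j
    rw [Finset.sum_add_distrib, ← Finset.mul_sum, ← hstat x, ← Finset.sum_mul, hpsum,
      one_mul] at hsum
    have h1 := (hψΨ x hx).1
    have h2 := hΨc x hx
    have h3 : (1 - q) * c ≤ (1 - q) * Ψ x := mul_le_mul_of_nonneg_left h2 (by linarith)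
    linarith
end

section
/- Let μ be a Borel probability measure on ℝ and 0 < α < 1, and define ψ_{α,μ}(r) := ∬ |x − y − r|^{-α} dμ(x) dμ(y). If ψ_{α,μ}(0) = ∬ |x − y|^{-α} dμ(x) dμ(y) is finite, then ψ_{α,μ}(r) is finite for every r ∈ ℝ, satisfies ψ_{α,μ}(r) ≤ ψ_{α,μ}(0) for every r ∈ ℝ, and r ↦ ψ_{α,μ}(r) is a continuous function on ℝ. -/
open MeasureTheory
open scoped ENNReal

/-- Gaussian subordination of the Riesz kernel. -/
lemma psi_aux_subord (α : ℝ) (hα0 : 0 < α) (t : ℝ) :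
    ∫⁻ s in Set.Ioi (0:ℝ), ENNReal.ofReal (s ^ (α/2 - 1)) * ENNReal.ofReal (Real.exp (-(s * t^2)))
      = ENNReal.ofReal (Real.Gamma (α/2)) * (ENNReal.ofReal |t|) ^ (-α) := by
  have hG : 0 < Real.Gamma (α/2) := Real.Gamma_pos_of_pos (by linarith)
  by_cases ht : t = 0
  · subst ht
    have h1 : (ENNReal.ofReal |(0:ℝ)|) ^ (-α) = ⊤ := by
      simp [ENNReal.zero_rpow_of_neg, hα0]
    rw [h1, ENNReal.mul_top (by simpa using hG)]
    by_contra hne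
    apply not_integrableOn_Ioi_rpow (α/2 - 1)
    refine ⟨(by fun_prop : Measurable fun s : ℝ => s ^ (α/2-1)).aestronglyMeasurable, ?_⟩
    rw [hasFiniteIntegral_iff_ofReal]
    · simpa [lt_top_iff_ne_top] using hne
    · filter_upwards [ae_restrict_mem measurableSet_Ioi] with s hs
      exact Real.rpow_nonneg (le_of_lt hs) _
  · have ht2 : 0 < t^2 := by positivity
    have hI := Real.integral_rpow_mul_exp_neg_mul_Ioi (a := α/2) (r := t^2) (by linarith) ht2
    have hint : IntegrableOn (fun s : ℝ => s ^ (α/2-1) * Real.exp (-(t^2 * s))) (Set.Ioi 0) := by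
      by_contra h
      rw [integral_undef h] at hI
      have : 0 < (1 / t^2) ^ (α/2) * Real.Gamma (α/2) := by positivity
      linarith
    have hcong : ∫⁻ s in Set.Ioi (0:ℝ), ENNReal.ofReal (s ^ (α/2 - 1)) *
          ENNReal.ofReal (Real.exp (-(s * t^2)))
        = ∫⁻ s in Set.Ioi (0:ℝ), ENNReal.ofReal (s ^ (α/2-1) * Real.exp (-(t^2 * s))) := by
      refine setLIntegral_congr_fun measurableSet_Ioi fun s hs => ?_
      rw [ENNReal.ofReal_mul (Real.rpow_nonneg (le_of_lt hs) _), mul_comm s]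
    rw [hcong, ← ofReal_integral_eq_lintegral_ofReal hint, hI, mul_comm,
      ENNReal.ofReal_mul hG.le]
    · congr 1
      rw [ENNReal.ofReal_rpow_of_pos (abs_pos.2 ht)]
      congr 1
      rw [← sq_abs, one_div, Real.inv_rpow (by positivity), ← Real.rpow_neg (by positivity),
        ← Real.rpow_natCast, ← Real.rpow_mul (by positivity)]
      congr 1
      push_cast
      ring
    · filter_upwards [ae_restrict_mem measurableSet_Ioi] with s hs
      exact mul_nonneg (Real.rpow_nonneg (le_of_lt hs) _) (Real.exp_pos _).le

/-- Gaussian as a convolution square. -/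
lemma psi_aux_conv (s : ℝ) (a b : ℝ) :
    (∫⁻ u, ENNReal.ofReal (Real.exp (-(4*s*u^2)))) * ENNReal.ofReal (Real.exp (-(s*(a-b)^2)))
    = ∫⁻ u, ENNReal.ofReal (Real.exp (-(2*s*(a-u)^2))) *
        ENNReal.ofReal (Real.exp (-(2*s*(b-u)^2))) := by
  rw [← lintegral_sub_right_eq_self _ ((a+b)/2), ← lintegral_mul_const _ (by fun_prop)]
  refine lintegral_congr fun u => ?_
  rw [← ENNReal.ofReal_mul (Real.exp_pos _).le, ← ENNReal.ofReal_mul (Real.exp_pos _).le,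
    ← Real.exp_add, ← Real.exp_add]
  congr 2
  ring

lemma psi_aux_amgm (a b : ℝ≥0∞) : 2 * (a * b) ≤ a * a + b * b := by
  rcases le_total a b with h | h
  · obtain ⟨c, rfl⟩ := exists_add_of_le h
    calc 2 * (a * (a + c)) ≤ 2 * (a * (a + c)) + c * c := le_self_add
      _ = _ := by ring
  · obtain ⟨c, rfl⟩ := exists_add_of_le h
    calc 2 * ((b + c) * b) ≤ 2 * ((b + c) * b) + c * c := le_self_add
      _ = _ := by ring

lemma psi_aux_gauss_eq (μ : Measure ℝ) [IsProbabilityMeasure μ] (s r : ℝ) :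
    (∫⁻ u, ENNReal.ofReal (Real.exp (-(4*s*u^2)))) *
      ∫⁻ x, ∫⁻ y, ENNReal.ofReal (Real.exp (-(s*(x-y-r)^2))) ∂μ ∂μ
    = ∫⁻ u, (∫⁻ x, ENNReal.ofReal (Real.exp (-(2*s*(x-u)^2))) ∂μ) *
        (∫⁻ x, ENNReal.ofReal (Real.exp (-(2*s*(x-(u-r))^2))) ∂μ) := by
  rw [← lintegral_const_mul _ (by fun_prop)]
  have h1 : ∀ x, (∫⁻ u, ENNReal.ofReal (Real.exp (-(4*s*u^2)))) *
      ∫⁻ y, ENNReal.ofReal (Real.exp (-(s*(x-y-r)^2))) ∂μ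
      = ∫⁻ u, ENNReal.ofReal (Real.exp (-(2*s*(x-u)^2))) *
        (∫⁻ y, ENNReal.ofReal (Real.exp (-(2*s*(y-(u-r))^2))) ∂μ) := by
    intro x
    rw [← lintegral_const_mul _ (by fun_prop)]
    have h2 : ∀ y, (∫⁻ u, ENNReal.ofReal (Real.exp (-(4*s*u^2)))) *
        ENNReal.ofReal (Real.exp (-(s*(x-y-r)^2)))
        = ∫⁻ u, ENNReal.ofReal (Real.exp (-(2*s*(x-u)^2))) *
          ENNReal.ofReal (Real.exp (-(2*s*(y-(u-r))^2))) := by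
      intro y
      have := psi_aux_conv s x (y + r)
      rw [show x - (y + r) = x - y - r by ring] at this
      rw [this]
      refine lintegral_congr fun u => ?_
      rw [show y + r - u = y - (u - r) by ring]
    simp_rw [h2]
    rw [lintegral_lintegral_swap (by fun_prop)]
    refine lintegral_congr fun u => ?_
    rw [lintegral_const_mul _ (by fun_prop)]
  simp_rw [h1]
  rw [lintegral_lintegral_swap (by fun_prop)]
  refine lintegral_congr fun u => ?_
  rw [lintegral_mul_const _ (by fun_prop)]

lemma psi_aux_gauss_le (μ : Measure ℝ) [IsProbabilityMeasure μ] (s : ℝ) (hs : 0 < s) (r : ℝ) :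
    ∫⁻ x, ∫⁻ y, ENNReal.ofReal (Real.exp (-(s*(x-y-r)^2))) ∂μ ∂μ
    ≤ ∫⁻ x, ∫⁻ y, ENNReal.ofReal (Real.exp (-(s*(x-y-0)^2))) ∂μ ∂μ := by
  set A := ∫⁻ u : ℝ, ENNReal.ofReal (Real.exp (-(4*s*u^2))) with hA
  have hint : Integrable (fun u : ℝ => Real.exp (-(4*s*u^2))) := by
    have := integrable_exp_neg_mul_sq (b := 4*s) (by positivity)
    simpa [neg_mul] using this
  have hAtop : A ≠ ⊤ := by
    have := hint.2
    rw [hasFiniteIntegral_iff_ofReal (Filter.Eventually.of_forall fun u => (Real.exp_pos _).le)]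
      at this
    exact this.ne
  have hA0 : A ≠ 0 := by
    rw [hA, Ne, lintegral_eq_zero_iff (by fun_prop)]
    intro h
    have h' := h.exists
    obtain ⟨u, hu⟩ := h'
    simp only [Pi.zero_apply, ENNReal.ofReal_eq_zero] at hu
    exact absurd (Real.exp_pos _) (not_lt.2 hu)
  rw [← ENNReal.mul_le_mul_iff_right hA0 hAtop, hA, psi_aux_gauss_eq, psi_aux_gauss_eq]
  set F : ℝ → ℝ≥0∞ := fun u => ∫⁻ x, ENNReal.ofReal (Real.exp (-(2*s*(x-u)^2))) ∂μ with hF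
  have hFm : Measurable F := by
    rw [hF]; fun_prop
  change ∫⁻ u, F u * F (u - r) ≤ ∫⁻ u, F u * F (u - 0)
  simp only [sub_zero]
  rw [← ENNReal.mul_le_mul_iff_right (a := 2) (by norm_num) (by norm_num),
    ← lintegral_const_mul _ (by fun_prop)]
  calc ∫⁻ u, 2 * (F u * F (u - r)) ≤ ∫⁻ u, (F u * F u + F (u-r) * F (u-r)) :=
        lintegral_mono fun u => psi_aux_amgm _ _
    _ = (∫⁻ u, F u * F u) + ∫⁻ u, F (u-r) * F (u-r) := lintegral_add_left (by fun_prop) _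
    _ = _ := by
      rw [lintegral_sub_right_eq_self (fun u => F u * F u) r, two_mul]

lemma psi_aux_mix (μ : Measure ℝ) [IsProbabilityMeasure μ] (α : ℝ) (hα0 : 0 < α) (r : ℝ) :
    ENNReal.ofReal (Real.Gamma (α/2)) *
      ∫⁻ x, ∫⁻ y, (ENNReal.ofReal |x - y - r|) ^ (-α) ∂μ ∂μ
    = ∫⁻ s in Set.Ioi (0:ℝ), ENNReal.ofReal (s ^ (α/2 - 1)) *
        ∫⁻ x, ∫⁻ y, ENNReal.ofReal (Real.exp (-(s*(x-y-r)^2))) ∂μ ∂μ := by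
  rw [← lintegral_const_mul _ (by fun_prop)]
  have h1 : ∀ x, ENNReal.ofReal (Real.Gamma (α/2)) *
      ∫⁻ y, (ENNReal.ofReal |x - y - r|) ^ (-α) ∂μ
      = ∫⁻ s in Set.Ioi (0:ℝ), ENNReal.ofReal (s ^ (α/2 - 1)) *
        ∫⁻ y, ENNReal.ofReal (Real.exp (-(s*(x-y-r)^2))) ∂μ := by
    intro x
    rw [← lintegral_const_mul _ (by fun_prop)]
    simp_rw [← psi_aux_subord α hα0]
    rw [lintegral_lintegral_swap (by fun_prop)]
    refine lintegral_congr fun u => ?_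
    rw [lintegral_const_mul _ (by fun_prop)]
  simp_rw [h1]
  rw [lintegral_lintegral_swap (by fun_prop)]
  refine lintegral_congr fun u => ?_
  rw [lintegral_const_mul _ (by fun_prop)]

lemma psi_aux_gauss_cont (μ : Measure ℝ) [IsProbabilityMeasure μ] (s : ℝ) (hs : 0 < s) :
    Continuous fun r : ℝ => ∫⁻ x, ∫⁻ y, ENNReal.ofReal (Real.exp (-(s*(x-y-r)^2))) ∂μ ∂μ := by
  have hb : ∀ t : ℝ, ENNReal.ofReal (Real.exp (-(s*t^2))) ≤ 1 := by
    intro t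
    rw [ENNReal.ofReal_le_one, Real.exp_le_one_iff]
    have : 0 ≤ s * t^2 := by positivity
    linarith
  rw [continuous_iff_continuousAt]
  intro r0
  refine tendsto_lintegral_filter_of_dominated_convergence (fun _ => 1) ?_ ?_ (by simp) ?_
  · exact Filter.Eventually.of_forall fun r => by fun_prop
  · refine Filter.Eventually.of_forall fun r => Filter.Eventually.of_forall fun x => ?_
    calc _ ≤ ∫⁻ y, 1 ∂μ := lintegral_mono fun y => hb _
      _ = 1 := by simp
  · refine Filter.Eventually.of_forall fun x => ?_
    refine tendsto_lintegral_filter_of_dominated_convergence (fun _ => 1) ?_ ?_ (by simp) ?_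
    · exact Filter.Eventually.of_forall fun r => by fun_prop
    · exact Filter.Eventually.of_forall fun r => Filter.Eventually.of_forall fun y => hb _
    · refine Filter.Eventually.of_forall fun y => ?_
      have : Continuous fun r : ℝ => ENNReal.ofReal (Real.exp (-(s*(x-y-r)^2))) :=
        ENNReal.continuous_ofReal.comp (by fun_prop)
      exact this.tendsto r0

/-- Lemma: for a Borel probability measure `μ` on `ℝ` and `0 < α < 1`, if
`ψ_{α,μ}(0) = ∬ |x − y|^{-α} dμ dμ` is finite, then
`ψ_{α,μ}(r) = ∬ |x − y − r|^{-α} dμ dμ` is finite for every `r`, is bounded by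
`ψ_{α,μ}(0)`, and is a continuous function of `r`. -/
theorem psi_finite_le_continuous (μ : Measure ℝ) [IsProbabilityMeasure μ]
    (α : ℝ) (hα0 : 0 < α) (hα1 : α < 1)
    (ψ : ℝ → ℝ≥0∞)
    (hψ : ∀ r : ℝ, ψ r = ∫⁻ x, ∫⁻ y, (ENNReal.ofReal |x - y - r|) ^ (-α) ∂μ ∂μ)
    (hfin : ψ 0 ≠ ⊤) :
    (∀ r : ℝ, ψ r ≠ ⊤) ∧ (∀ r : ℝ, ψ r ≤ ψ 0) ∧
      Continuous fun r : ℝ => (ψ r).toReal := by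
  have hG : 0 < Real.Gamma (α/2) := Real.Gamma_pos_of_pos (by linarith)
  set C := ENNReal.ofReal (Real.Gamma (α/2)) with hC
  have hC0 : C ≠ 0 := by simpa [hC] using hG
  have hCt : C ≠ ⊤ := ENNReal.ofReal_ne_top
  have hmix : ∀ r, C * ψ r = ∫⁻ s in Set.Ioi (0:ℝ), ENNReal.ofReal (s ^ (α/2 - 1)) *
        ∫⁻ x, ∫⁻ y, ENNReal.ofReal (Real.exp (-(s*(x-y-r)^2))) ∂μ ∂μ := fun r => by
    rw [hψ r]; exact psi_aux_mix μ α hα0 r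
  have hle : ∀ r, ψ r ≤ ψ 0 := by
    intro r
    rw [← ENNReal.mul_le_mul_iff_right hC0 hCt, hmix, hmix]
    refine setLIntegral_mono' measurableSet_Ioi fun s hs => ?_
    exact mul_le_mul_right (psi_aux_gauss_le μ s hs r) _
  have hne : ∀ r, ψ r ≠ ⊤ := fun r => ne_top_of_le_ne_top hfin (hle r)
  refine ⟨hne, hle, ?_⟩
  have hcont : Continuous fun r => C * ψ r := by
    rw [continuous_iff_continuousAt]
    intro r0
    unfold ContinuousAt
    simp_rw [hmix]
    refine tendsto_lintegral_filter_of_dominated_convergence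
      (fun s => ENNReal.ofReal (s ^ (α/2 - 1)) *
        ∫⁻ x, ∫⁻ y, ENNReal.ofReal (Real.exp (-(s*(x-y-0)^2))) ∂μ ∂μ) ?_ ?_ ?_ ?_
    · exact Filter.Eventually.of_forall fun r => by fun_prop
    · refine Filter.Eventually.of_forall fun r => ?_
      filter_upwards [ae_restrict_mem measurableSet_Ioi] with s hs
      exact mul_le_mul_right (psi_aux_gauss_le μ s hs r) _
    · rw [← hmix 0]
      exact ENNReal.mul_ne_top hCt hfin
    · filter_upwards [ae_restrict_mem measurableSet_Ioi] with s hs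
      exact ENNReal.Tendsto.const_mul ((psi_aux_gauss_cont μ s hs).tendsto r0)
        (Or.inr ENNReal.ofReal_ne_top)
  have hψc : Continuous ψ := by
    have h : ψ = fun r => C⁻¹ * (C * ψ r) := by
      funext r
      rw [← mul_assoc, ENNReal.inv_mul_cancel hC0 hCt, one_mul]
    rw [h]
    exact (ENNReal.continuous_const_mul (ENNReal.inv_ne_top.2 hC0)).comp hcont
  rw [continuous_iff_continuousAt]
  intro r
  exact (ENNReal.tendsto_toReal (hne r)).comp (hψc.tendsto r)
end

section
/- Let S(λ, c̄, p̄) be an iterated function scheme of similarities f_j(x) = λx + c_j (0 < λ < 1) with probability vector p̄, let μ be its stationary measure (so μ is a compactly supported Borel probability measure with μ = ∑_j p_j (f_j)_*μ), and suppose 0 < α < 1 is such that I(μ, α) = ∬ |x − y|^{-α} dμ(x) dμ(y) is finite. Then the function ψ_{α,μ}(r) := ∬ |x − y − r|^{-α} dμ(x) dμ(y) is a fixed point of the symmetric diffusion operator: for every r ∈ ℝ, ψ_{α,μ}(r) = λ^{-α} ∑_{i,j} p_i p_j ψ_{α,μ}((r − c_i + c_j)/λ). -/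
open MeasureTheory
open scoped ENNReal

/-- Corollary: if `μ` is the stationary measure of an iterated function scheme of
similarities `f_j(x) = λx + c_j` with probability vector `p̄`, compactly supported, and
its energy `I(μ, α)` is finite for some `0 < α < 1`, then
`ψ_{α,μ}(r) = ∬ |x − y − r|^{-α} dμ dμ` is a fixed point of the symmetric diffusion
operator: `ψ_{α,μ}(r) = λ^{-α} ∑_{i,j} p_i p_j ψ_{α,μ}((r − c_i + c_j)/λ)`. -/
theorem psi_fixed_point (k : ℕ) (l : ℝ) (hl0 : 0 < l) (hl1 : l < 1)
    (c : Fin k → ℝ) (p : Fin k → ℝ) (hp : ∀ j, 0 ≤ p j) (hpsum : ∑ j, p j = 1)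
    (μ : Measure ℝ) [IsProbabilityMeasure μ]
    (hμ : μ = ∑ j, ENNReal.ofReal (p j) • Measure.map (fun x : ℝ => l * x + c j) μ)
    (a b : ℝ) (hsupp : μ (Set.Icc a b)ᶜ = 0)
    (α : ℝ) (hα0 : 0 < α) (hα1 : α < 1)
    (hfin : (∫⁻ x, ∫⁻ y, (ENNReal.ofReal |x - y|) ^ (-α) ∂μ ∂μ) ≠ ⊤) :
    ∀ r : ℝ,
      (∫⁻ x, ∫⁻ y, (ENNReal.ofReal |x - y - r|) ^ (-α) ∂μ ∂μ) =
      ENNReal.ofReal (l ^ (-α)) *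
        ∑ i, ∑ j, ENNReal.ofReal (p i * p j) *
          ∫⁻ x, ∫⁻ y,
            (ENNReal.ofReal |x - y - (r - c i + c j) / l|) ^ (-α) ∂μ ∂μ := by
  have key : ∀ f : ℝ → ℝ≥0∞, Measurable f →
      ∫⁻ x, f x ∂μ = ∑ j, ENNReal.ofReal (p j) * ∫⁻ x, f (l * x + c j) ∂μ := by
    intro f hf
    conv_lhs => rw [hμ]
    rw [lintegral_finsetSum_measure]
    refine Finset.sum_congr rfl fun j _ => ?_
    rw [lintegral_smul_measure, lintegral_map hf (by fun_prop), smul_eq_mul]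
  intro r
  have hscale : ∀ i j x y, (ENNReal.ofReal |l * x + c i - (l * y + c j) - r|) ^ (-α)
      = ENNReal.ofReal (l ^ (-α)) *
        (ENNReal.ofReal |x - y - (r - c i + c j) / l|) ^ (-α) := by
    intro i j x y
    have h1 : l * x + c i - (l * y + c j) - r = l * (x - y - (r - c i + c j) / l) := by
      field_simp
      ring
    rw [h1, abs_mul, abs_of_pos hl0, ENNReal.ofReal_mul hl0.le,
      ENNReal.mul_rpow_of_ne_top ENNReal.ofReal_ne_top ENNReal.ofReal_ne_top,
      ENNReal.ofReal_rpow_of_pos hl0]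
  have hm2 : ∀ s : ℝ, Measurable (fun z : ℝ × ℝ => (ENNReal.ofReal |z.1 - z.2 - s|) ^ (-α)) := by
    intro s
    have : Continuous (fun z : ℝ × ℝ => |z.1 - z.2 - s|) := by fun_prop
    exact this.measurable.ennreal_ofReal.pow_const _
  have hm := hm2 r
  have hmr : Measurable (fun x : ℝ => ∫⁻ y, (ENNReal.ofReal |x - y - r|) ^ (-α) ∂μ) :=
    hm.lintegral_prod_right' (ν := μ)
  rw [key _ hmr, Finset.mul_sum]
  refine Finset.sum_congr rfl fun i _ => ?_
  have hin : ∀ x, ∫⁻ y, (ENNReal.ofReal |l * x + c i - y - r|) ^ (-α) ∂μ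
      = ∑ j, ENNReal.ofReal (p j) * (ENNReal.ofReal (l ^ (-α)) *
        ∫⁻ y, (ENNReal.ofReal |x - y - (r - c i + c j) / l|) ^ (-α) ∂μ) := by
    intro x
    have hx : Measurable (fun y : ℝ => (ENNReal.ofReal |l * x + c i - y - r|) ^ (-α)) := by
      have : Continuous (fun y : ℝ => |l * x + c i - y - r|) := by fun_prop
      exact this.measurable.ennreal_ofReal.pow_const _
    rw [key _ hx]
    refine Finset.sum_congr rfl fun j _ => ?_
    simp_rw [hscale]
    rw [lintegral_const_mul' _ _ ENNReal.ofReal_ne_top]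
  simp_rw [hin]
  have hmj : ∀ j ∈ (Finset.univ : Finset (Fin k)), Measurable (fun x : ℝ =>
      ENNReal.ofReal (p j) * (ENNReal.ofReal (l ^ (-α)) *
        ∫⁻ y, (ENNReal.ofReal |x - y - (r - c i + c j) / l|) ^ (-α) ∂μ)) := by
    intro j _
    have h := (hm2 ((r - c i + c j) / l)).lintegral_prod_right' (ν := μ)
    exact (h.const_mul _).const_mul _
  rw [lintegral_finsetSum _ hmj, Finset.mul_sum, Finset.mul_sum]
  refine Finset.sum_congr rfl fun j _ => ?_
  rw [lintegral_const_mul' _ _ ENNReal.ofReal_ne_top,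
    lintegral_const_mul' _ _ ENNReal.ofReal_ne_top, ENNReal.ofReal_mul (hp i)]
  ring
end

section
/- Let X be a set and let A be a monotone operator on functions X → ℝ, i.e., if g(x) ≤ f(x) for all x ∈ X then (Ag)(x) ≤ (Af)(x) for all x ∈ X. Let ϑ > 0 and define Â f := x ↦ min((Af)(x) + ϑ, f(x)). Suppose f : X → ℝ and x₀ ∈ X satisfy (Â f)(x₀) = (Af)(x₀) + ϑ. Then for every k ≥ 1, (A(Â^k f))(x₀) + ϑ ≤ (Â^k f)(x₀), where Â^k denotes the k-fold iterate of Â. -/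
/-- Lemma: let `A` be a monotone operator on real-valued functions on `X`, `ϑ > 0`, and
`Â f := x ↦ min((Af)(x) + ϑ, f(x))`.  If `(Â f)(x₀) = (A f)(x₀) + ϑ` for some `f` and
`x₀`, then for every `k ≥ 1` we have `(A(Â^k f))(x₀) + ϑ ≤ (Â^k f)(x₀)`. -/
theorem min_operator_iterate {X : Type*} (A : (X → ℝ) → X → ℝ)
    (hmono : ∀ f g : X → ℝ, (∀ x, g x ≤ f x) → ∀ x, A g x ≤ A f x)
    (ϑ : ℝ) (hϑ : 0 < ϑ) (f : X → ℝ) (x₀ : X)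
    (h : min (A f x₀ + ϑ) (f x₀) = A f x₀ + ϑ) :
    ∀ k : ℕ, 1 ≤ k →
      A ((fun g : X → ℝ => fun x => min (A g x + ϑ) (g x))^[k] f) x₀ + ϑ ≤
        (fun g : X → ℝ => fun x => min (A g x + ϑ) (g x))^[k] f x₀ := by
  intro k _
  induction k with
  | zero => simpa using h
  | succ n ih =>
    have ih' : A ((fun g : X → ℝ => fun x => min (A g x + ϑ) (g x))^[n] f) x₀ + ϑ ≤
        (fun g : X → ℝ => fun x => min (A g x + ϑ) (g x))^[n] f x₀ := by
      rcases Nat.eq_zero_or_pos n with h0 | h0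
      · subst h0
        simpa using h
      · exact ih h0
    rw [Function.iterate_succ_apply']
    generalize (fun g : X → ℝ => fun x => min (A g x + ϑ) (g x))^[n] f = g at ih'
    have h1 := hmono g (fun x => min (A g x + ϑ) (g x)) (fun x => min_le_right _ _) x₀
    exact le_min (by linarith) (by linarith)
end

section
/- Let X be a set and let A be a monotone operator on functions X → ℝ, i.e., if g(x) ≤ f(x) for all x ∈ X then (Ag)(x) ≤ (Af)(x) for all x ∈ X. Let ϑ > 0 and define Â f := x ↦ min((Af)(x) + ϑ, f(x)). Suppose that for some n > 0 and f : X → ℝ one has (Â^n f)(x) < f(x) for every x ∈ X. Then (A(Â^n f))(x) ≤ (Â^n f)(x) for every x ∈ X. -/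
/-- Proposition: let `A` be a monotone operator on real-valued functions on `X`, `ϑ > 0`,
and `Â f := x ↦ min((Af)(x) + ϑ, f(x))`.  If for some `n > 0` and `f` we have
`(Â^n f)(x) < f(x)` for every `x ∈ X`, then `A(Â^n f) ≤ Â^n f` pointwise on `X`. -/
theorem min_operator_subinvariant {X : Type*} (A : (X → ℝ) → X → ℝ)
    (hmono : ∀ f g : X → ℝ, (∀ x, g x ≤ f x) → ∀ x, A g x ≤ A f x)
    (ϑ : ℝ) (hϑ : 0 < ϑ) (n : ℕ) (hn : 0 < n) (f : X → ℝ)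
    (h : ∀ x, (fun g : X → ℝ => fun x => min (A g x + ϑ) (g x))^[n] f x < f x) :
    ∀ x, A ((fun g : X → ℝ => fun x => min (A g x + ϑ) (g x))^[n] f) x ≤
      (fun g : X → ℝ => fun x => min (A g x + ϑ) (g x))^[n] f x := by
  have key : ∀ m : ℕ, ∀ x,
      (fun g : X → ℝ => fun x => min (A g x + ϑ) (g x))^[m] f x = f x ∨
      A ((fun g : X → ℝ => fun x => min (A g x + ϑ) (g x))^[m] f) x + ϑ ≤
      (fun g : X → ℝ => fun x => min (A g x + ϑ) (g x))^[m] f x := by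
    intro m
    induction m with
    | zero => intro x; left; rfl
    | succ m ih =>
      intro x
      rw [Function.iterate_succ_apply']
      have ihx := ih x
      generalize (fun g : X → ℝ => fun x => min (A g x + ϑ) (g x))^[m] f = g at ihx
      have hA := hmono g (fun x => min (A g x + ϑ) (g x)) (fun y => min_le_right _ _) x
      beta_reduce
      rcases le_total (A g x + ϑ) (g x) with h1 | h1
      · right
        rw [min_eq_left h1]
        linarith
      · rw [min_eq_right h1]
        rcases ihx with h2 | h2
        · left; exact h2
        · right; linarith
  intro x
  rcases key n x with h1 | h1
  · exact absurd h1 (h x).ne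
  · linarith
end
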